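/- arXiv:2108.02691 — 2 statements merged into one kernel-verified Lean document; each statement's English description precedes it below -/
import Mathlib

section
/- Let m > 2, 1 ≤ n ≤ m, and 0 < 2α_j < 1 for j = 1,…,n; set α = α_1+…+α_n, β = (m−2)/2 + α, and γ = 2^{2β−m} Γ(β) π^{−m/2} ∏_{j=1}^n Γ(α_j)/Γ(2α_j). Fix k with 1 ≤ k ≤ n, and let ν_k be a continuous function on S_k = {x̃_k = (x_1,…,x_{k−1},x_{k+1},…,x_m) : x_i > 0 for i ≤ n, i ≠ k} satisfying |ν_k(x̃_k)| ≤ c_k (1 + Σ_{i≠k} x_i²)^{−(1−2α_k+ε_k)/2} for some constants c_k > 0 and ε_k > 0. Define, for ξ ∈ ℝ^m with ξ_1 > 0, …, ξ_n > 0, I_k(ξ) = −γ ∫_{S_k} ν_k(x̃_k) · [∏_{j≤n, j≠k} x_j^{2α_j}] · r_k^{−2β} · F_A^{(n−1)}(β, (α_j)_{j≤n, j≠k}; (2α_j)_{j≤n, j≠k}; (−4x_jξ_j/r_k²)_{j≤n, j≠k}) dx̃_k, where r_k² = ξ_k² + Σ_{i≠k} (x_i − ξ_i)². Then for every l ≤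 n with l ≠ k and every fixed point with the remaining coordinates positive, lim_{ξ_l→0+} ξ_l^{2α_l} ∂I_k/∂ξ_l = 0. -/
open MeasureTheory Real Filter Topology

/-- The Lauricella function `F_A` (in finitely many variables indexed by `ι`) defined
through its Euler-type integral representation. -/
noncomputable def lauricellaFA {ι : Type*} [Fintype ι] (a : ℝ) (b c x : ι → ℝ) : ℝ :=
  (∏ i, Real.Gamma (c i) / (Real.Gamma (b i) * Real.Gamma (c i - b i))) *
    ∫ u in Set.univ.pi (fun _ : ι => Set.Icc (0 : ℝ) 1),
      (∏ i, u i ^ (b i - 1) * (1 - u i) ^ (c i - b i - 1)) * (1 - ∑ i, x i * u i) ^ (-a)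


lemma aux_integral_diff {X : Type*} [MeasurableSpace X] {μ : Measure X} {f g H : X → ℝ}
    (hf : AEStronglyMeasurable f μ) (hg : AEStronglyMeasurable g μ) (hH : Integrable H μ)
    (h : ∀ᵐ x ∂μ, |f x - g x| ≤ H x) : |∫ x, f x ∂μ - ∫ x, g x ∂μ| ≤ ∫ x, H x ∂μ := by
  have hd : Integrable (fun x => f x - g x) μ := hH.mono' (hf.sub hg) h
  by_cases hfi : Integrable f μ
  · have hgi : Integrable g μ := by
      have := hfi.sub hd
      refine this.congr (Eventually.of_forall fun x => ?_)
      simp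
    rw [← integral_sub hfi hgi]
    have := norm_integral_le_of_norm_le (f := fun x => f x - g x) hH h
    simpa using this
  · have hgi : ¬ Integrable g μ := by
      intro hgi
      apply hfi
      have := hgi.add hd
      refine this.congr (Eventually.of_forall fun x => ?_)
      simp
    rw [integral_undef hfi, integral_undef hgi]
    simp only [sub_zero, abs_zero]
    apply integral_nonneg_of_ae
    filter_upwards [h] with x hx using (abs_nonneg _).trans hx

lemma aux_beta_int {a b : ℝ} (ha : 0 < a) (hb : 0 < b) :
    IntegrableOn (fun x : ℝ => x ^ (a - 1) * (1 - x) ^ (b - 1)) (Set.Icc 0 1) := by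
  rw [integrableOn_Icc_iff_integrableOn_Ioc]
  have h := Complex.betaIntegral_convergent (u := a) (v := b) (by simpa) (by simpa)
  rw [intervalIntegrable_iff_integrableOn_Ioc_of_le (by simp)] at h
  have h2 := h.norm
  refine (integrableOn_congr_fun (fun x hx => ?_) measurableSet_Ioc).mp h2
  have h0 : 0 ≤ x := hx.1.le
  have h1 : 0 ≤ 1 - x := by linarith [hx.2]
  have e1 : (x : ℂ) ^ ((a : ℂ) - 1) = ((x ^ (a - 1) : ℝ) : ℂ) := by
    rw [Complex.ofReal_cpow h0]; simp
  have e2 : (1 - (x : ℂ)) ^ ((b : ℂ) - 1) = (((1 - x) ^ (b - 1) : ℝ) : ℂ) := by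
    rw [Complex.ofReal_cpow h1]; simp
  simp only [e1, e2, norm_mul, Complex.norm_real, Real.norm_eq_abs]
  rw [abs_of_nonneg (rpow_nonneg h0 _), abs_of_nonneg (rpow_nonneg h1 _)]

lemma aux_w_int {ι : Type*} [Fintype ι] (b c : ι → ℝ) (hb : ∀ i, 0 < b i)
    (hc : ∀ i, 0 < c i - b i) :
    IntegrableOn (fun u : ι → ℝ => ∏ i, u i ^ (b i - 1) * (1 - u i) ^ (c i - b i - 1))
      (Set.univ.pi (fun _ : ι => Set.Icc (0 : ℝ) 1)) := by
  rw [IntegrableOn, volume_pi, Measure.restrict_pi_pi]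
  exact Integrable.fintype_prod
    (f := fun i (x : ℝ) => x ^ (b i - 1) * (1 - x) ^ (c i - b i - 1))
    (fun i => aux_beta_int (hb i) (hc i))

lemma aux_lip {P y u β D s t : ℝ} (hP : 0 ≤ P) (hu0 : 0 ≤ u) (hu1 : u ≤ 1) (hβ : 0 < β)
    (hD : 0 < D) (h : ∀ s ∈ Set.Ioo (0 : ℝ) 1, D ≤ P + (y - s) ^ 2 + 4 * y * s * u)
    (hs : s ∈ Set.Ioo (0 : ℝ) 1) (ht : t ∈ Set.Ioo (0 : ℝ) 1) :
    |(P + (y - s) ^ 2 + 4 * y * s * u) ^ (-β) - (P + (y - t) ^ 2 + 4 * y * t * u) ^ (-β)| ≤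
      2 * β * D ^ (-β - 1 / 2) * |s - t| := by
  refine Convex.norm_image_sub_le_of_norm_hasDerivWithin_le
    (f := fun s => (P + (y - s) ^ 2 + 4 * y * s * u) ^ (-β))
    (f' := fun s => (2 * (s - y * (1 - 2 * u))) * (-β) *
      (P + (y - s) ^ 2 + 4 * y * s * u) ^ (-β - 1)) (s := Set.Ioo 0 1)
    (fun x hx => ?_) (fun x hx => ?_) (convex_Ioo 0 1) ht hs
  · apply HasDerivAt.hasDerivWithinAt
    refine HasDerivAt.rpow_const ?_ (Or.inl (hD.trans_le (h x hx)).ne')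
    have h1 : HasDerivAt (fun s : ℝ => P + (y - s) ^ 2 + 4 * y * s * u)
        (2 * (y - x) ^ 1 * (0 - 1) + 4 * y * 1 * u) x := by
      have a := ((((hasDerivAt_const x y).sub (hasDerivAt_id x)).pow 2).const_add P).add
        (((hasDerivAt_id x).const_mul (4 * y)).mul_const u)
      exact a.congr_deriv (by simp)
    convert h1 using 1
    ring
  · have hR := h x hx
    set R := P + (y - x) ^ 2 + 4 * y * x * u with hRdef
    have hR0 : 0 < R := hD.trans_le hR
    have h1 : |x - y * (1 - 2 * u)| ≤ R ^ (1 / 2 : ℝ) := by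
      rw [← Real.sqrt_eq_rpow]
      apply Real.abs_le_sqrt
      have : 0 ≤ y ^ 2 * (u * (1 - u)) := by
        have : 0 ≤ 1 - u := by linarith
        positivity
      rw [hRdef]; nlinarith
    rw [Real.norm_eq_abs, abs_mul, abs_mul, abs_mul, abs_neg, abs_of_pos hβ,
      abs_of_nonneg (rpow_nonneg hR0.le _), abs_two]
    calc 2 * |x - y * (1 - 2 * u)| * β * R ^ (-β - 1)
        ≤ 2 * R ^ (1 / 2 : ℝ) * β * R ^ (-β - 1) := by gcongr
      _ = 2 * β * R ^ (-β - 1 / 2) := by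
          have : R ^ (-β - 1 / 2) = R ^ (1 / 2 : ℝ) * R ^ (-β - 1) := by
            rw [← rpow_add hR0]; congr 1; ring
          rw [this]; ring
      _ ≤ 2 * β * D ^ (-β - 1 / 2) := by
          gcongr 2 * β * ?_
          exact rpow_le_rpow_of_nonpos hD hR (by linarith)

lemma aux_FA {ι : Type*} [Fintype ι] (β r : ℝ) (b c x z : ι → ℝ) (hr : 0 < r)
    (hz : ∀ i, 0 ≤ z i) (hx : ∀ i, x i = - z i / r) :
    r ^ (-β) * lauricellaFA β b c x =
    (∏ i, Real.Gamma (c i) / (Real.Gamma (b i) * Real.Gamma (c i - b i))) *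
    ∫ u in Set.univ.pi (fun _ : ι => Set.Icc (0 : ℝ) 1),
      (∏ i, u i ^ (b i - 1) * (1 - u i) ^ (c i - b i - 1)) * (r + ∑ i, z i * u i) ^ (-β) := by
  rw [lauricellaFA, mul_left_comm, ← integral_const_mul]
  congr 1
  refine setIntegral_congr_fun (MeasurableSet.univ_pi fun _ => measurableSet_Icc) fun u hu => ?_
  have hu' : ∀ i, 0 ≤ u i := fun i => (hu i (Set.mem_univ i)).1
  have e : 1 - ∑ i, x i * u i = (r + ∑ i, z i * u i) / r := by
    rw [add_div, div_self hr.ne', Finset.sum_div, sub_eq_add_neg, ← Finset.sum_neg_distrib]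
    congr 1
    refine Finset.sum_congr rfl fun i _ => ?_
    rw [hx]; ring
  have hs : 0 ≤ ∑ i, z i * u i := Finset.sum_nonneg fun i _ => mul_nonneg (hz i) (hu' i)
  simp only [e]
  rw [mul_left_comm, ← mul_rpow hr.le (by positivity), mul_div_cancel₀ _ hr.ne']

lemma aux_kernel_lip {ι : Type*} [Fintype ι] (L : ι) (β y D : ℝ) (b c : ι → ℝ)
    (r : ℝ → ℝ) (x z : ℝ → ι → ℝ) (Q : (ι → ℝ) → ℝ)
    (hb : ∀ i, 0 < b i) (hc : ∀ i, 0 < c i - b i) (hβ : 0 < β) (hD : 0 < D)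
    (hr : ∀ s ∈ Set.Ioo (0 : ℝ) 1, D ≤ r s)
    (hz : ∀ s ∈ Set.Ioo (0 : ℝ) 1, ∀ i, 0 ≤ z s i)
    (hx : ∀ s i, x s i = - z s i / r s)
    (hQ0 : ∀ u, (∀ i, 0 ≤ u i) → 0 ≤ Q u)
    (hQ : ∀ s u, r s + ∑ i, z s i * u i = Q u + (y - s) ^ 2 + 4 * y * s * u L)
    {s t : ℝ} (hs : s ∈ Set.Ioo (0 : ℝ) 1) (ht : t ∈ Set.Ioo (0 : ℝ) 1) :
    |r s ^ (-β) * lauricellaFA β b c (x s) - r t ^ (-β) * lauricellaFA β b c (x t)| ≤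
    |∏ i, Real.Gamma (c i) / (Real.Gamma (b i) * Real.Gamma (c i - b i))| *
    ((∫ u in Set.univ.pi (fun _ : ι => Set.Icc (0 : ℝ) 1),
      (∏ i, u i ^ (b i - 1) * (1 - u i) ^ (c i - b i - 1))) *
      (2 * β * D ^ (-β - 1 / 2) * |s - t|)) := by
  rw [aux_FA β (r s) b c (x s) (z s) (hD.trans_le (hr s hs)) (hz s hs) (hx s),
    aux_FA β (r t) b c (x t) (z t) (hD.trans_le (hr t ht)) (hz t ht) (hx t), ← mul_sub, abs_mul,
    ← integral_mul_const]
  refine mul_le_mul_of_nonneg_left ?_ (abs_nonneg _)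
  refine aux_integral_diff ?_ ?_ ((aux_w_int b c hb hc).mul_const _) ?_
  · apply Measurable.aestronglyMeasurable; fun_prop
  · apply Measurable.aestronglyMeasurable; fun_prop
  refine ae_restrict_of_forall_mem (MeasurableSet.univ_pi fun _ => measurableSet_Icc) fun u hu => ?_
  have hu0 : ∀ i, 0 ≤ u i := fun i => (hu i (Set.mem_univ i)).1
  have hu1 : ∀ i, u i ≤ 1 := fun i => (hu i (Set.mem_univ i)).2
  have hw : 0 ≤ ∏ i, u i ^ (b i - 1) * (1 - u i) ^ (c i - b i - 1) :=
    Finset.prod_nonneg fun i _ => mul_nonneg (rpow_nonneg (hu0 i) _)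
      (rpow_nonneg (by linarith [hu1 i]) _)
  rw [← mul_sub, abs_mul, abs_of_nonneg hw]
  refine mul_le_mul_of_nonneg_left ?_ hw
  rw [hQ, hQ]
  refine aux_lip (hQ0 u hu0) (hu0 L) (hu1 L) hβ hD (fun s hs => ?_) hs ht
  rw [← hQ]
  have := Finset.sum_nonneg (s := Finset.univ) fun i _ => mul_nonneg (hz s hs i) (hu0 i)
  linarith [hr s hs]

set_option maxHeartbeats 2000000 in
/-- The single-layer potential `I_k` fulfils the weighted Neumann boundary condition on
a different face: for `l ≠ k`, `lim_{ξ_l→0⁺} ξ_l^{2α_l} ∂I_k/∂ξ_l = 0`. -/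
theorem potential_boundary_condition_other_index (m n : ℕ) (hm : 2 < m) (hn : 1 ≤ n)
    (hnm : n ≤ m) (α : Fin m → ℝ)
    (hα : ∀ j : Fin m, (j : ℕ) < n → 0 < 2 * α j ∧ 2 * α j < 1)
    (β γ : ℝ)
    (hβ : β = ((m : ℝ) - 2) / 2 + ∑ j ∈ Finset.univ.filter fun j : Fin m => (j : ℕ) < n, α j)
    (hγ : γ = 2 ^ (2 * β - (m : ℝ)) * Real.Gamma β / Real.pi ^ ((m : ℝ) / 2) *
      ∏ j ∈ Finset.univ.filter fun j : Fin m => (j : ℕ) < n,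
        Real.Gamma (α j) / Real.Gamma (2 * α j))
    (k : Fin m) (hk : (k : ℕ) < n)
    (ν : ({i : Fin m // i ≠ k} → ℝ) → ℝ) (c ε : ℝ) (hc : 0 < c) (hε : 0 < ε)
    (hνcont : ContinuousOn ν {y | ∀ i : {i : Fin m // i ≠ k}, (i.1 : ℕ) < n → 0 < y i})
    (hνbd : ∀ y : {i : Fin m // i ≠ k} → ℝ, (∀ i, (i.1 : ℕ) < n → 0 < y i) →
      |ν y| ≤ c * (1 + ∑ i, y i ^ 2) ^ (-(1 - 2 * α k + ε) / 2))
    (I : (Fin m → ℝ) → ℝ)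
    (hI : ∀ ξ : Fin m → ℝ, I ξ = -γ *
      ∫ y in {y : {i : Fin m // i ≠ k} → ℝ | ∀ i, (i.1 : ℕ) < n → 0 < y i},
        ν y * (∏ j : {j : Fin m // (j : ℕ) < n ∧ j ≠ k}, y ⟨j.1, j.2.2⟩ ^ (2 * α j.1)) *
          (ξ k ^ 2 + ∑ i, (y i - ξ i.1) ^ 2) ^ (-β) *
          lauricellaFA β (fun j : {j : Fin m // (j : ℕ) < n ∧ j ≠ k} => α j.1)
            (fun j => 2 * α j.1)
            (fun j => -4 * y ⟨j.1, j.2.2⟩ * ξ j.1 / (ξ k ^ 2 + ∑ i, (y i - ξ i.1) ^ 2)))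
    (l : Fin m) (hl : (l : ℕ) < n) (hlk : l ≠ k)
    (ξ : Fin m → ℝ) (hξ : ∀ i : Fin m, (i : ℕ) < n → i ≠ l → 0 < ξ i) :
    Filter.Tendsto
      (fun t : ℝ => t ^ (2 * α l) * deriv (fun s : ℝ => I (Function.update ξ l s)) t)
      (nhdsWithin 0 (Set.Ioi 0)) (nhds 0) := by
  classical
  have hkl : k ≠ l := hlk.symm
  have hξk : 0 < ξ k := hξ k hk hkl
  -- nonnegativity and sums of the exponents
  have hα0 : ∀ j : {j : Fin m // (j : ℕ) < n ∧ j ≠ k}, 0 < α j.1 := fun j => by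
    linarith [(hα j.1 j.2.1).1]
  set σ : ℝ := ∑ j : {j : Fin m // (j : ℕ) < n ∧ j ≠ k}, α j.1 with hσ
  have hσ0 : 0 ≤ σ := Finset.sum_nonneg fun j _ => (hα0 j).le
  have hαk : 0 < α k := by linarith [(hα k hk).1]
  have hm' : (2 : ℝ) < m := by exact_mod_cast hm
  have hβσ : β = ((m : ℝ) - 2) / 2 + (α k + σ) := by
    rw [hβ, ← Finset.add_sum_erase _ _
      (show k ∈ Finset.univ.filter (fun j : Fin m => (j : ℕ) < n) by simpa using hk)]
    congr 2
    exact Finset.sum_subtype _ (by intro x; simp [and_comm]) _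
  have hβ0 : 0 < β := by rw [hβσ]; linarith
  set S : Set ({i : Fin m // i ≠ k} → ℝ) := {y | ∀ i, (i.1 : ℕ) < n → 0 < y i} with hS
  have hSm : MeasurableSet S := by
    rw [hS]
    simp only [Set.ofPred_forall]
    refine MeasurableSet.iInter fun i => MeasurableSet.iInter fun _ => ?_
    exact measurableSet_lt measurable_const (measurable_pi_apply i)
  -- the integrand
  set F : ℝ → ({i : Fin m // i ≠ k} → ℝ) → ℝ := fun s y =>
    ν y * (∏ j : {j : Fin m // (j : ℕ) < n ∧ j ≠ k}, y ⟨j.1, j.2.2⟩ ^ (2 * α j.1)) *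
          ((Function.update ξ l s) k ^ 2 + ∑ i : {i : Fin m // i ≠ k}, (y i - (Function.update ξ l s) i.1) ^ 2) ^ (-β) *
          lauricellaFA β (fun j : {j : Fin m // (j : ℕ) < n ∧ j ≠ k} => α j.1)
            (fun j => 2 * α j.1)
            (fun j => -4 * y ⟨j.1, j.2.2⟩ * (Function.update ξ l s) j.1 /
              ((Function.update ξ l s) k ^ 2 + ∑ i : {i : Fin m // i ≠ k}, (y i - (Function.update ξ l s) i.1) ^ 2)) with hF
  have hIF : ∀ s, I (Function.update ξ l s) = -γ * ∫ y in S, F s y := fun s => hI _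
  have hFm : ∀ s, AEStronglyMeasurable (F s) (volume.restrict S) := by
    intro s
    refine AEStronglyMeasurable.mul (AEStronglyMeasurable.mul (AEStronglyMeasurable.mul
      (hνcont.aestronglyMeasurable hSm) ?_) ?_) ?_
    · apply Measurable.aestronglyMeasurable; fun_prop
    · apply Measurable.aestronglyMeasurable; fun_prop
    · apply StronglyMeasurable.aestronglyMeasurable
      unfold lauricellaFA
      refine StronglyMeasurable.const_mul ?_ _
      apply StronglyMeasurable.integral_prod_right
      apply Measurable.stronglyMeasurable
      unfold Function.uncurry
      fun_prop
  -- constants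
  set A : ℝ := ξ k ^ 2 with hA
  have hA0 : 0 < A := by positivity
  set B : ℝ := ∑ i : {i : Fin m // i ≠ k}, (|ξ i.1| + 1) ^ 2 with hB
  have hB0 : 0 ≤ B := Finset.sum_nonneg fun i _ => by positivity
  set K : ℝ := max 2 ((1 + 2 * B) / A) with hK
  have hK2 : 2 ≤ K := le_max_left _ _
  have hK0 : 0 < K := by linarith
  have hKA : 1 + 2 * B ≤ K * A := by
    rw [← div_le_iff₀ hA0]; exact le_max_right _ _
  set T : ({i : Fin m // i ≠ k} → ℝ) → ℝ := fun y => 1 + ∑ i, y i ^ 2 with hT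
  have hT1 : ∀ y, 1 ≤ T y := fun y => by
    have : 0 ≤ ∑ i, y i ^ 2 := Finset.sum_nonneg fun i _ => sq_nonneg _
    simp only [hT]; linarith
  have hTK : ∀ s ∈ Set.Ioo (0 : ℝ) 1, ∀ y, T y / K ≤ (Function.update ξ l s) k ^ 2 +
      ∑ i : {i : Fin m // i ≠ k}, (y i - (Function.update ξ l s) i.1) ^ 2 := by
    intro s hs y
    rw [div_le_iff₀ hK0, Function.update_of_ne hkl]
    have h1 : ∑ i : {i : Fin m // i ≠ k}, y i ^ 2 ≤
        2 * ∑ i : {i : Fin m // i ≠ k}, (y i - (Function.update ξ l s) i.1) ^ 2 + 2 * B := by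
      rw [hB, Finset.mul_sum, Finset.mul_sum, ← Finset.sum_add_distrib]
      refine Finset.sum_le_sum fun i _ => ?_
      have h2 : (Function.update ξ l s i.1) ^ 2 ≤ (|ξ i.1| + 1) ^ 2 := by
        rw [sq_le_sq, abs_of_nonneg (show 0 ≤ |ξ i.1| + 1 by positivity)]
        by_cases hil : i.1 = l
        · rw [hil, Function.update_self, abs_of_pos hs.1]
          linarith [hs.2, abs_nonneg (ξ l)]
        · rw [Function.update_of_ne hil]; linarith
      nlinarith [sq_nonneg (y i - 2 * Function.update ξ l s i.1)]
    have h3 : 0 ≤ ∑ i : {i : Fin m // i ≠ k}, (y i - (Function.update ξ l s) i.1) ^ 2 :=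
      Finset.sum_nonneg fun i _ => sq_nonneg _
    simp only [hT]
    nlinarith
  set Cst : ℝ := |∏ j : {j : Fin m // (j : ℕ) < n ∧ j ≠ k},
    Real.Gamma (2 * α j.1) / (Real.Gamma (α j.1) * Real.Gamma (2 * α j.1 - α j.1))| with hCst
  set W : ℝ := ∫ u in Set.univ.pi (fun _ : {j : Fin m // (j : ℕ) < n ∧ j ≠ k} => Set.Icc (0 : ℝ) 1),
      (∏ j, u j ^ (α j.1 - 1) * (1 - u j) ^ (2 * α j.1 - α j.1 - 1)) with hW
  have hW0 : 0 ≤ W := by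
    refine setIntegral_nonneg (MeasurableSet.univ_pi fun _ => measurableSet_Icc) fun u hu => ?_
    exact Finset.prod_nonneg fun i _ => mul_nonneg (rpow_nonneg (hu i (Set.mem_univ i)).1 _)
      (rpow_nonneg (by linarith [(hu i (Set.mem_univ i)).2]) _)
  -- kernel estimate
  have hker : ∀ s ∈ Set.Ioo (0 : ℝ) 1, ∀ t ∈ Set.Ioo (0 : ℝ) 1, ∀ y ∈ S,
      |F s y - F t y| ≤ |ν y| *
        (∏ j : {j : Fin m // (j : ℕ) < n ∧ j ≠ k}, y ⟨j.1, j.2.2⟩ ^ (2 * α j.1)) *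
        (Cst * (W * (2 * β * (T y / K) ^ (-β - 1 / 2) * |s - t|))) := by
    intro s hs t ht y hy
    have hp : 0 ≤ ∏ j : {j : Fin m // (j : ℕ) < n ∧ j ≠ k}, y ⟨j.1, j.2.2⟩ ^ (2 * α j.1) :=
      Finset.prod_nonneg fun j _ => rpow_nonneg (hy ⟨j.1, j.2.2⟩ j.2.1).le _
    simp only [hF]
    rw [mul_assoc, mul_assoc (ν y * _), ← mul_sub, abs_mul, abs_mul (ν y), abs_of_nonneg hp]
    refine mul_le_mul_of_nonneg_left ?_ (by positivity)
    let L : {j : Fin m // (j : ℕ) < n ∧ j ≠ k} := ⟨l, hl, hlk⟩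
    let l' : {i : Fin m // i ≠ k} := ⟨l, hlk⟩
    refine aux_kernel_lip L β (y l') (T y / K)
      (fun j : {j : Fin m // (j : ℕ) < n ∧ j ≠ k} => α j.1) (fun j => 2 * α j.1)
      (fun s => (Function.update ξ l s) k ^ 2 +
        ∑ i : {i : Fin m // i ≠ k}, (y i - (Function.update ξ l s) i.1) ^ 2)
      (fun s j => -4 * y ⟨j.1, j.2.2⟩ * (Function.update ξ l s) j.1 /
              ((Function.update ξ l s) k ^ 2 +
                ∑ i : {i : Fin m // i ≠ k}, (y i - (Function.update ξ l s) i.1) ^ 2))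
      (fun s j => 4 * y ⟨j.1, j.2.2⟩ * (Function.update ξ l s) j.1)
      (fun u => ξ k ^ 2 + ∑ i ∈ Finset.univ.erase l', (y i - ξ i.1) ^ 2 +
        ∑ j ∈ Finset.univ.erase L, 4 * y ⟨j.1, j.2.2⟩ * ξ j.1 * u j)
      hα0 (fun j => by linarith [hα0 j]) hβ0 (div_pos (by linarith [hT1 y]) hK0)
      (fun s hs => hTK s hs y) ?_ ?_ ?_ ?_ hs ht
    · intro s hs j
      have h1 := hy ⟨j.1, j.2.2⟩ j.2.1
      have h2 : 0 < Function.update ξ l s j.1 := by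
        by_cases hjl : j.1 = l
        · rw [hjl, Function.update_self]; exact hs.1
        · rw [Function.update_of_ne hjl]; exact hξ _ j.2.1 hjl
      positivity
    · intro s j
      congr 1; ring
    · intro u hu
      have h1 : 0 ≤ ∑ i ∈ Finset.univ.erase l', (y i - ξ i.1) ^ 2 :=
        Finset.sum_nonneg fun i _ => sq_nonneg _
      have h2 : 0 ≤ ∑ j ∈ Finset.univ.erase L, 4 * y ⟨j.1, j.2.2⟩ * ξ j.1 * u j := by
        refine Finset.sum_nonneg fun j hj => ?_
        have h3 := hy ⟨j.1, j.2.2⟩ j.2.1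
        have h4 : 0 < ξ j.1 := hξ _ j.2.1 fun h => (Finset.ne_of_mem_erase hj) (Subtype.ext h)
        have h5 := hu j
        positivity
      positivity
    · intro s u
      rw [← Finset.add_sum_erase _ _ (Finset.mem_univ l'),
        ← Finset.add_sum_erase _ _ (Finset.mem_univ L)]
      have e1 : ∑ i ∈ Finset.univ.erase l', (y i - (Function.update ξ l s) i.1) ^ 2 =
          ∑ i ∈ Finset.univ.erase l', (y i - ξ i.1) ^ 2 := by
        refine Finset.sum_congr rfl fun i hi => ?_
        rw [Function.update_of_ne]
        exact fun h => (Finset.ne_of_mem_erase hi) (Subtype.ext h)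
      have e2 : ∑ j ∈ Finset.univ.erase L, 4 * y ⟨j.1, j.2.2⟩ * (Function.update ξ l s) j.1 * u j =
          ∑ j ∈ Finset.univ.erase L, 4 * y ⟨j.1, j.2.2⟩ * ξ j.1 * u j := by
        refine Finset.sum_congr rfl fun i hi => ?_
        rw [Function.update_of_ne]
        exact fun h => (Finset.ne_of_mem_erase hi) (Subtype.ext h)
      rw [e1, e2, Function.update_of_ne hkl]
      simp only [L, l', Function.update_self]
      ring
  set ρ : ℝ := (m : ℝ) - 1 + 2 * α k with hρ
  set G : ({i : Fin m // i ≠ k} → ℝ) → ℝ := fun y => (1 + ‖y‖ ^ 2) ^ (-ρ / 2) with hG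
  have hGi : Integrable G := by
    apply integrable_rpow_neg_one_add_norm_sq
    have : Fintype.card {i : Fin m // i ≠ k} = m - 1 := by simp
    rw [Module.finrank_fintype_fun_eq_card, this, Nat.cast_sub (by omega)]
    push_cast
    linarith
  set M : ℝ := c * (Cst * (W * (2 * β * K ^ (β + 1 / 2)))) with hM
  have hM0 : 0 ≤ M := by positivity
  have hbound : ∀ s ∈ Set.Ioo (0 : ℝ) 1, ∀ t ∈ Set.Ioo (0 : ℝ) 1, ∀ y ∈ S,
      |F s y - F t y| ≤ G y * (M * |s - t|) := by
    intro s hs t ht y hy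
    have hT0 : 0 < T y := by linarith [hT1 y]
    have hν1 : |ν y| ≤ c := by
      refine (hνbd y hy).trans ?_
      have : (1 + ∑ i, y i ^ 2) ^ (-(1 - 2 * α k + ε) / 2) ≤ 1 :=
        rpow_le_one_of_one_le_of_nonpos (hT1 y) (by linarith [(hα k hk).2])
      nlinarith
    have hp : ∏ j : {j : Fin m // (j : ℕ) < n ∧ j ≠ k}, y ⟨j.1, j.2.2⟩ ^ (2 * α j.1)
        ≤ T y ^ σ := by
      rw [hσ, Real.rpow_sum_of_pos hT0]
      refine Finset.prod_le_prod (fun j _ => rpow_nonneg (hy ⟨j.1, j.2.2⟩ j.2.1).le _) fun j _ => ?_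
      rw [rpow_mul (hy ⟨j.1, j.2.2⟩ j.2.1).le]
      refine rpow_le_rpow (rpow_nonneg (hy ⟨j.1, j.2.2⟩ j.2.1).le _) ?_ (hα0 j).le
      rw [Real.rpow_two]
      have := Finset.single_le_sum (f := fun i => y i ^ 2) (fun i _ => sq_nonneg (y i))
        (Finset.mem_univ (⟨j.1, j.2.2⟩ : {i : Fin m // i ≠ k}))
      simp only [hT]
      linarith
    have hDT : (T y / K) ^ (-β - 1 / 2) = T y ^ (-β - 1 / 2) * K ^ (β + 1 / 2) := by
      rw [div_rpow hT0.le hK0.le, div_eq_mul_inv, ← rpow_neg hK0.le]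
      congr 2; ring
    have hTT : T y ^ σ * T y ^ (-β - 1 / 2) = T y ^ (-ρ / 2) := by
      rw [← rpow_add hT0]; congr 1; rw [hβσ, hρ]; ring
    have hTG : T y ^ (-ρ / 2) ≤ G y := by
      refine rpow_le_rpow_of_nonpos (by positivity) ?_ (by rw [hρ]; linarith)
      simp only [hT]
      have h0 : 0 ≤ ∑ i, y i ^ 2 := Finset.sum_nonneg fun i _ => sq_nonneg _
      have : ‖y‖ ≤ √(∑ i, y i ^ 2) := by
        rw [pi_norm_le_iff_of_nonneg (Real.sqrt_nonneg _)]
        intro i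
        exact Real.abs_le_sqrt (Finset.single_le_sum (f := fun i => y i ^ 2)
          (fun i _ => sq_nonneg (y i)) (Finset.mem_univ i))
      have h2 : ‖y‖ ^ 2 ≤ (√(∑ i, y i ^ 2)) ^ 2 := by gcongr
      rw [Real.sq_sqrt h0] at h2
      linarith
    refine (hker s hs t ht y hy).trans ?_
    calc _ ≤ c * T y ^ σ * (Cst * (W * (2 * β * (T y / K) ^ (-β - 1 / 2) * |s - t|))) := by
          gcongr
          exact Finset.prod_nonneg fun j _ => rpow_nonneg (hy ⟨j.1, j.2.2⟩ j.2.1).le _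
      _ = (T y ^ σ * T y ^ (-β - 1 / 2)) * (M * |s - t|) := by rw [hDT, hM]; ring
      _ ≤ G y * (M * |s - t|) := by rw [hTT]; gcongr
  set Lc : ℝ := |γ| * ((∫ y in S, G y) * M) with hLc
  have hG0 : 0 ≤ ∫ y in S, G y := integral_nonneg fun y => rpow_nonneg (by positivity) _
  have hLc0 : 0 ≤ Lc := by positivity
  have hlip : ∀ s ∈ Set.Ioo (0 : ℝ) 1, ∀ t ∈ Set.Ioo (0 : ℝ) 1,
      |I (Function.update ξ l s) - I (Function.update ξ l t)| ≤ Lc * |s - t| := by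
    intro s hs t ht
    rw [hIF, hIF, ← mul_sub, abs_mul, abs_neg, hLc, mul_assoc, mul_assoc]
    refine mul_le_mul_of_nonneg_left ?_ (abs_nonneg _)
    rw [← integral_mul_const]
    exact aux_integral_diff (hFm s) (hFm t) (hGi.restrict.mul_const _)
      (ae_restrict_of_forall_mem hSm fun y hy => hbound s hs t ht y hy)
  have hderiv : ∀ t ∈ Set.Ioo (0 : ℝ) 1,
      |deriv (fun s : ℝ => I (Function.update ξ l s)) t| ≤ Lc := by
    intro t ht
    rw [← Real.norm_eq_abs]
    refine norm_deriv_le_of_lip' (f := fun s : ℝ => I (Function.update ξ l s)) hLc0 ?_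
    filter_upwards [Ioo_mem_nhds ht.1 ht.2] with s hs using hlip s hs t ht
  have hlim : Tendsto (fun t : ℝ => t ^ (2 * α l) * Lc) (𝓝[>] 0) (𝓝 0) := by
    have h1 : ContinuousAt (fun t : ℝ => t ^ (2 * α l) * Lc) 0 :=
      (continuousAt_rpow_const _ _ (Or.inr (hα l hl).1.le)).mul continuousAt_const
    have h2 := h1.tendsto
    rw [zero_rpow (hα l hl).1.ne', zero_mul] at h2
    exact h2.mono_left nhdsWithin_le_nhds
  refine squeeze_zero_norm' ?_ hlim
  filter_upwards [Ioo_mem_nhdsGT (zero_lt_one' ℝ)] with t ht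
  rw [norm_mul, Real.norm_eq_abs, Real.norm_eq_abs, abs_of_nonneg (rpow_nonneg ht.1.le _)]
  exact mul_le_mul_of_nonneg_left (hderiv t ht) (rpow_nonneg ht.1.le _)
end

section
/- Let m > 2, 1 ≤ n ≤ m, and 0 < 2α_j < 1 for j = 1,…,n; set α = α_1+…+α_n, β = (m−2)/2 + α, γ = 2^{2β−m} Γ(β) π^{−m/2} ∏_{j=1}^n Γ(α_j)/Γ(2α_j), and Ω = {x ∈ ℝ^m : x_1 > 0, …, x_n > 0}. For x with x_j ≥ 0, ξ ∈ Ω, x ≠ ξ, let r² = Σ_{i=1}^m (x_i − ξ_i)² and q(x,ξ) = γ r^{−2β} F_A^{(n)}(β, (α_1,…,α_n); (2α_1,…,2α_n); −4x_1ξ_1/r², …, −4x_nξ_n/r²). For each k = 1,…,n let ν_k be a continuous function on S_k = {x̃_k : x_i > 0 for i ≤ n, i ≠ k} satisfying |ν_k(x̃_k)| ≤ c_k (1 + Σ_{i≠k} x_i²)^{−(1−2α_k+ε_k)/2} for some constants c_k > 0, ε_k > 0. Then the function u(ξ) = −Σ_{k=1}^n ∫_{S_k} [∏_{j≤n, j≠k}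 x_j^{2α_j}] ν_k(x̃_k) q(x_k^0, ξ) dx̃_k, where x_k^0 denotes the point whose k-th coordinate is 0 and whose remaining coordinates are those of x̃_k, is a solution of the Neumann problem: (i) u satisfies Σ_{i=1}^m ∂²u/∂ξ_i² + Σ_{j=1}^n (2α_j/ξ_j) ∂u/∂ξ_j = 0 in Ω; (ii) for each k, lim_{ξ_k→0+} ξ_k^{2α_k} ∂u/∂ξ_k = ν_k(ξ̃_k) at every ξ̃_k with positive coordinates ξ_i > 0 (i ≤ n, i ≠ k); and (iii) u(ξ) → 0 as |ξ| → ∞. -/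
open MeasureTheory Real Filter Topology

open scoped ENNReal

theorem lint_fin_prod {n : ℕ} (μ : Fin n → Measure ℝ) [∀ i, SigmaFinite (μ i)]
    (f : Fin n → ℝ → ℝ≥0∞) (hf : ∀ i, Measurable (f i)) :
    ∫⁻ x, ∏ i, f i (x i) ∂(Measure.pi μ) = ∏ i, ∫⁻ x, f i x ∂(μ i) := by
  induction n with
  | zero => simp
  | succ n ih =>
      calc
        _ = ∫⁻ x : ℝ × (Fin n → ℝ), f 0 x.1 * ∏ i : Fin n, f (Fin.succ i) (x.2 i)
            ∂((μ 0).prod (Measure.pi (fun i ↦ μ i.succ))) := by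
          rw [← ((measurePreserving_piFinSuccAbove μ 0).symm).lintegral_comp_emb
            (MeasurableEquiv.measurableEmbedding _)]
          simp_rw [MeasurableEquiv.piFinSuccAbove_symm_apply, Fin.insertNthEquiv,
            Fin.prod_univ_succ, Fin.insertNth_zero]
          rfl
        _ = (∫⁻ x, f 0 x ∂μ 0)
            * ∏ i : Fin n, ∫⁻ x, f (Fin.succ i) x ∂(μ i.succ) := by
          rw [← ih (fun i => μ i.succ) (fun i => f i.succ) (fun i => hf _),
            ← lintegral_prod_mul]
          · exact (hf 0).aemeasurable
          · exact (Finset.measurable_prod _ (fun i _ =>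
              (hf i.succ).comp (measurable_pi_apply i))).aemeasurable
        _ = ∏ i, ∫⁻ x, f i x ∂(μ i) := by rw [Fin.prod_univ_succ]

theorem lint_prod {ι : Type*} [Fintype ι] (μ : ι → Measure ℝ) [∀ i, SigmaFinite (μ i)]
    (f : ι → ℝ → ℝ≥0∞) (hf : ∀ i, Measurable (f i)) :
    ∫⁻ x, ∏ i, f i (x i) ∂(Measure.pi μ) = ∏ i, ∫⁻ x, f i x ∂(μ i) := by
  let e := (Fintype.equivFin ι).symm
  rw [← (measurePreserving_piCongrLeft _ e).lintegral_comp_emb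
    (MeasurableEquiv.measurableEmbedding _)]
  simp_rw [← e.prod_comp, MeasurableEquiv.coe_piCongrLeft, Equiv.piCongrLeft_apply_apply]
  exact lint_fin_prod _ _ (fun i => hf _)

theorem pi_wd {ι : Type*} [Fintype ι] (μ : ι → Measure ℝ) [∀ i, SigmaFinite (μ i)]
    (d : ι → ℝ → ℝ≥0∞) (hd : ∀ i, Measurable (d i))
    [∀ i, SigmaFinite ((μ i).withDensity (d i))] :
    Measure.pi (fun i => (μ i).withDensity (d i))
      = (Measure.pi μ).withDensity (fun x => ∏ i, d i (x i)) := by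
  refine Measure.pi_eq (fun s hs => ?_)
  rw [withDensity_apply _ (MeasurableSet.univ_pi hs), ← lintegral_indicator (MeasurableSet.univ_pi hs)]
  have : ((Set.univ.pi s).indicator fun x : ι → ℝ => ∏ i, d i (x i))
      = fun x => ∏ i, (s i).indicator (d i) (x i) := by
    funext x
    by_cases hx : x ∈ Set.univ.pi s
    · rw [Set.indicator_of_mem hx]
      refine Finset.prod_congr rfl fun i _ => ?_
      rw [Set.indicator_of_mem (hx i trivial)]
    · rw [Set.indicator_of_notMem hx]
      simp only [Set.mem_pi, Set.mem_univ, true_imp_iff, not_forall] at hx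
      obtain ⟨i, hi⟩ := hx
      exact (Finset.prod_eq_zero (Finset.mem_univ i) (Set.indicator_of_notMem hi _)).symm
  rw [this, lint_prod _ _ (fun i => (hd i).indicator (hs i))]
  refine Finset.prod_congr rfl fun i _ => ?_
  rw [lintegral_indicator (hs i), withDensity_apply _ (hs i)]

theorem pi_update {ι : Type*} [Fintype ι] [DecidableEq ι] (κ : ι → Measure ℝ)
    [∀ i, IsProbabilityMeasure (κ i)] (j : ι) :
    MeasurePreserving (fun p : (ι → ℝ) × ℝ => Function.update p.1 j p.2)
      ((Measure.pi κ).prod (κ j)) (Measure.pi κ) := by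
  have hmeas : Measurable (fun p : (ι → ℝ) × ℝ => Function.update p.1 j p.2) := by
    refine measurable_pi_lambda _ fun i => ?_
    by_cases h : i = j
    · subst h; simpa using measurable_snd
    · simp only [Function.update_of_ne h]; fun_prop
  refine ⟨hmeas, (Measure.pi_eq fun s hs => ?_).symm⟩
  rw [Measure.map_apply hmeas (MeasurableSet.univ_pi hs)]
  have : (fun p : (ι → ℝ) × ℝ => Function.update p.1 j p.2) ⁻¹' (Set.univ.pi s)
      = (Set.univ.pi (Function.update s j Set.univ)) ×ˢ (s j) := by
    ext ⟨u, t⟩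
    simp only [Set.mem_preimage, Set.mem_pi, Set.mem_univ, true_imp_iff, Set.mem_prod]
    constructor
    · intro h
      refine ⟨fun i => ?_, by simpa using h j⟩
      by_cases hi : i = j
      · subst hi; simp
      · simpa [hi] using h i
    · rintro ⟨h1, h2⟩ i
      by_cases hi : i = j
      · subst hi; simpa using h2
      · simpa [hi] using h1 i
  rw [this, Measure.prod_prod, Measure.pi_pi, ← Finset.mul_prod_erase _ _ (Finset.mem_univ j),
    ← Finset.mul_prod_erase _ (fun i => κ i (s i)) (Finset.mem_univ j)]
  simp only [Function.update_self, measure_univ, one_mul]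
  rw [mul_comm]
  congr 1
  refine Finset.prod_congr rfl fun i hi => ?_
  rw [Function.update_of_ne (Finset.ne_of_mem_erase hi)]

theorem pi_subtype {ι : Type*} [Fintype ι] (κ : ι → Measure ℝ) [∀ i, IsProbabilityMeasure (κ i)]
    (p : ι → Prop) [DecidablePred p] :
    MeasurePreserving (fun (u : ι → ℝ) (j : {i // p i}) => u j) (Measure.pi κ)
      (Measure.pi fun j : {i // p i} => κ j) :=
  (measurePreserving_fst (ν := Measure.pi fun j : {i // ¬ p i} => κ j)).comp
    (measurePreserving_piEquivPiSubtypeProd κ p)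

open Classical in
/-- Beta distribution if `b`, else Dirac mass at `0`. -/
noncomputable def kap (b : Prop) (a : ℝ) : Measure ℝ :=
  if b then ProbabilityTheory.betaMeasure a a else Measure.dirac 0

/-- Weighted Lebesgue measure on the half line (if `b`) or the line. -/
noncomputable def lam (b : Prop) (a : ℝ) : Measure ℝ :=
  (volume.restrict {y : ℝ | b → 0 < y}).withDensity (fun y => ENNReal.ofReal (y ^ (2 * a)))

open Classical in
noncomputable def Cm (b : Prop) (a : ℝ) : ℝ := if b then Real.Gamma (a + 1 / 2) / 2 else √π

/-- Admissible pairs. -/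
def Adm (b : Prop) (a : ℝ) : Prop := (b → 0 < a ∧ a < 1 / 2) ∧ (¬ b → a = 0)

theorem Adm.nonneg {b : Prop} {a : ℝ} (h : Adm b a) : 0 ≤ a := by
  by_cases hb : b
  · exact (h.1 hb).1.le
  · exact (h.2 hb).ge

theorem kap_prob {b : Prop} {a : ℝ} (h : Adm b a) : IsProbabilityMeasure (kap b a) := by
  unfold kap
  split_ifs with hb
  · exact ProbabilityTheory.isProbabilityMeasureBeta (h.1 hb).1 (h.1 hb).1
  · infer_instance

instance lam_sf (b : Prop) (a : ℝ) : SigmaFinite (lam b a) := by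
  unfold lam; infer_instance

theorem kap_ae (b : Prop) (a : ℝ) : ∀ᵐ u ∂(kap b a), 0 ≤ u ∧ u ≤ 1 ∧ (¬ b → u = 0) := by
  unfold kap
  split_ifs with hb
  · rw [ProbabilityTheory.betaMeasure, ae_withDensity_iff (by unfold ProbabilityTheory.betaPDF; fun_prop)]
    refine Eventually.of_forall fun u hu => ?_
    refine ⟨?_, ?_, fun h => absurd hb h⟩
    · by_contra h; exact hu (ProbabilityTheory.betaPDF_eq_zero_of_nonpos (not_le.1 h).le)
    · by_contra h; exact hu (ProbabilityTheory.betaPDF_eq_zero_of_one_le (not_le.1 h).le)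
  · rw [ae_dirac_iff]
    · simp
    · have : MeasurableSet ({u : ℝ | 0 ≤ u} ∩ {u | u ≤ 1} ∩ {u | ¬ b → u = 0}) := by
        refine (measurableSet_Ici.inter measurableSet_Iic).inter ?_
        have : {u : ℝ | ¬ b → u = 0} = {0} := by ext; simp [hb]
        rw [this]; exact measurableSet_singleton _
      convert this using 1
      ext u; simp [and_assoc]

theorem meas_T (b : Prop) : MeasurableSet {y : ℝ | b → 0 < y} := by
  by_cases hb : b
  · have hT : {y : ℝ | b → 0 < y} = Set.Ioi 0 := by ext; simp [hb]
    rw [hT]; exact measurableSet_Ioi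
  · simp [hb]

theorem lam_ae (b : Prop) (a : ℝ) : ∀ᵐ y ∂(lam b a), (b → 0 < y) := by
  unfold lam
  refine (withDensity_absolutelyContinuous _ _).ae_le ?_
  exact ae_restrict_mem (meas_T b)

theorem lint_gauss {τ : ℝ} (hτ : 0 < τ) (ξ : ℝ) :
    ∫⁻ y, ENNReal.ofReal (exp (-(τ * (y - ξ) ^ 2))) = ENNReal.ofReal (√π * τ ^ (-(1 / 2) : ℝ)) := by
  rw [lintegral_sub_right_eq_self (fun y => ENNReal.ofReal (exp (-(τ * y ^ 2)))) ξ]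
  have h := ofReal_integral_eq_lintegral_ofReal (integrable_exp_neg_mul_sq hτ)
    (Eventually.of_forall fun x => (exp_pos _).le)
  simp only [neg_mul] at h
  rw [← h]
  have h2 := integral_gaussian τ
  simp only [neg_mul] at h2
  rw [h2, sqrt_div' _ hτ.le, rpow_neg hτ.le, ← sqrt_eq_rpow, div_eq_mul_inv]

theorem lint_halfgauss {τ a : ℝ} (hτ : 0 < τ) (ha : 0 < a) :
    ∫⁻ y in Set.Ioi (0 : ℝ), ENNReal.ofReal (y ^ (2 * a - 1) * exp (-(τ * y ^ 2)))
      = ENNReal.ofReal (τ ^ (-a) * (1 / 2) * Real.Gamma a) := by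
  have h := ofReal_integral_eq_lintegral_ofReal
    (integrableOn_rpow_mul_exp_neg_mul_sq hτ (s := 2 * a - 1) (by linarith))
    ((ae_restrict_iff' measurableSet_Ioi).2 (Eventually.of_forall fun x hx =>
      mul_nonneg (rpow_nonneg (le_of_lt hx) _) (exp_pos _).le))
  simp only [neg_mul] at h
  rw [← h]
  have h2 := integral_rpow_mul_exp_neg_mul_rpow (p := 2) (q := 2 * a - 1) (b := τ) (by norm_num)
    (by linarith) hτ
  simp only [neg_mul, rpow_two] at h2
  rw [h2]
  congr 4 <;> ring

theorem beta_theta {a : ℝ} (ha : 0 < a) (F : ℝ → ℝ≥0∞) (hF : Measurable F) :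
    ∫⁻ u, F u ∂(ProbabilityTheory.betaMeasure a a)
     = ∫⁻ θ in Set.Ioo 0 π, ENNReal.ofReal (2 ^ (1 - 2 * a) / ProbabilityTheory.beta a a *
        sin θ ^ (2 * a - 1)) * F ((1 - cos θ) / 2) := by
  have hB := ProbabilityTheory.beta_pos ha ha
  rw [ProbabilityTheory.betaMeasure, lintegral_withDensity_eq_lintegral_mul _
    (by unfold ProbabilityTheory.betaPDF; fun_prop) hF]
  have h1 : ∫⁻ u, (ProbabilityTheory.betaPDF a a * F) u
      = ∫⁻ u in Set.Ioo (0:ℝ) 1, ProbabilityTheory.betaPDF a a u * F u := by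
    rw [← lintegral_indicator measurableSet_Ioo]
    refine lintegral_congr fun u => ?_
    by_cases hu : u ∈ Set.Ioo (0:ℝ) 1
    · rw [Set.indicator_of_mem hu]; rfl
    · rw [Set.indicator_of_notMem hu]
      have : ProbabilityTheory.betaPDF a a u = 0 := by
        rw [ProbabilityTheory.betaPDF_eq, if_neg (show ¬ (0 < u ∧ u < 1) from hu)]; simp
      simp [this]
  have him : (fun θ : ℝ => (1 - cos θ) / 2) '' Set.Ioo 0 π = Set.Ioo (0:ℝ) 1 := by
    ext u
    constructor
    · rintro ⟨θ, ⟨h0, h1⟩, rfl⟩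
      have c1 := strictAntiOn_cos (Set.left_mem_Icc.2 pi_pos.le) ⟨h0.le, h1.le⟩ h0
      have c2 := strictAntiOn_cos ⟨h0.le, h1.le⟩ (Set.right_mem_Icc.2 pi_pos.le) h1
      simp only [cos_zero, cos_pi] at c1 c2
      constructor <;> simp only <;> linarith
    · rintro ⟨h0, h1⟩
      refine ⟨arccos (1 - 2 * u), ⟨arccos_pos.2 (by linarith), ?_⟩, ?_⟩
      · exact lt_of_le_of_ne (arccos_le_pi _) (fun h => by
          rw [arccos_eq_pi] at h; linarith)
      · simp only; rw [cos_arccos (by linarith) (by linarith)]; ring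
  rw [h1, ← him, lintegral_image_eq_lintegral_abs_deriv_mul (f' := fun θ => sin θ / 2)
    measurableSet_Ioo]
  · refine setLIntegral_congr_fun measurableSet_Ioo fun θ hθ => ?_
    have hs : 0 < sin θ := sin_pos_of_mem_Ioo hθ
    have hm : (1 - cos θ) / 2 ∈ Set.Ioo (0:ℝ) 1 := him ▸ Set.mem_image_of_mem _ hθ
    rw [ProbabilityTheory.betaPDF_of_pos_lt_one hm.1 hm.2, ← mul_assoc,
      ← ENNReal.ofReal_mul (by positivity)]
    congr 2
    rw [abs_of_pos (by positivity), mul_assoc (1 / _), ← mul_rpow hm.1.le (by linarith [hm.2])]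
    have : (1 - cos θ) / 2 * (1 - (1 - cos θ) / 2) = (sin θ / 2) ^ (2 : ℝ) := by
      rw [rpow_two]; nlinarith [sin_sq_add_cos_sq θ]
    rw [this, ← rpow_mul (by positivity), show 2 * (a - 1) = (2 * a - 1) - 1 by ring,
      rpow_sub_one (by positivity), div_rpow hs.le (by norm_num),
      show (1 - 2 * a) = -(2 * a - 1) by ring, rpow_neg (by norm_num)]
    field_simp
  · intro θ _
    have := ((hasDerivAt_cos θ).const_sub 1).div_const 2
    simpa using this.hasDerivWithinAt
  · intro x hx y hy hxy
    have : cos x = cos y := by simp only at hxy; linarith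
    exact injOn_cos ⟨hx.1.le, hx.2.le⟩ ⟨hy.1.le, hy.2.le⟩ this

theorem polar_half {a τ : ℝ} (ha : 0 < a) (hτ : 0 < τ) (ξ : ℝ) :
    ∫⁻ r in Set.Ioi (0:ℝ), ∫⁻ θ in Set.Ioo 0 π, ENNReal.ofReal (r ^ (2 * a) * sin θ ^ (2 * a - 1) *
        exp (-(τ * (r ^ 2 + ξ ^ 2 - 2 * r * ξ * cos θ))))
      = ENNReal.ofReal (√π * (1 / 2) * Real.Gamma a * τ ^ (-a - 1 / 2)) := by
  set f : ℝ × ℝ → ℝ≥0∞ := fun p => ENNReal.ofReal (exp (-(τ * (p.1 - ξ) ^ 2))) *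
    (Set.Ioi (0:ℝ)).indicator (fun y => ENNReal.ofReal (y ^ (2 * a - 1) * exp (-(τ * y ^ 2)))) p.2
    with hf
  have h1 : ∫⁻ p, f p = ENNReal.ofReal (√π * (1 / 2) * Real.Gamma a * τ ^ (-a - 1 / 2)) := by
    rw [Measure.volume_eq_prod, hf, lintegral_prod_mul
      (f := fun x => ENNReal.ofReal (exp (-(τ * (x - ξ) ^ 2)))) (by fun_prop)
      ((Measurable.indicator (f := fun y => ENNReal.ofReal (y ^ (2 * a - 1) * exp (-(τ * y ^ 2))))
        (by fun_prop) measurableSet_Ioi).aemeasurable), lint_gauss hτ,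
      lintegral_indicator measurableSet_Ioi, lint_halfgauss hτ ha, ← ENNReal.ofReal_mul (by positivity)]
    congr 1
    rw [show -a - 1 / 2 = -(1 / 2) + -a by ring, rpow_add hτ]; ring
  rw [← h1, ← lintegral_comp_polarCoord_symm, polarCoord_target, Measure.volume_eq_prod,
    ← Measure.prod_restrict, lintegral_prod]
  · refine setLIntegral_congr_fun measurableSet_Ioi fun r hr => ?_
    have hr : 0 < r := hr
    simp only
    rw [← lintegral_indicator measurableSet_Ioo, ← lintegral_indicator measurableSet_Ioo]
    refine lintegral_congr fun θ => ?_
    by_cases h : θ ∈ Set.Ioo 0 π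
    · have h' : θ ∈ Set.Ioo (-π) π := ⟨by linarith [h.1, pi_pos], h.2⟩
      have hs : 0 < sin θ := sin_pos_of_mem_Ioo h
      rw [Set.indicator_of_mem h, Set.indicator_of_mem h', hf, polarCoord_symm_apply]
      simp only [smul_eq_mul]
      rw [Set.indicator_of_mem (show r * sin θ ∈ Set.Ioi (0:ℝ) from mul_pos hr hs),
        ← ENNReal.ofReal_mul (exp_pos _).le, ← ENNReal.ofReal_mul hr.le]
      congr 1
      have e1 : exp (-(τ * (r ^ 2 + ξ ^ 2 - 2 * r * ξ * cos θ))) =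
          exp (-(τ * (r * cos θ - ξ) ^ 2)) * exp (-(τ * (r * sin θ) ^ 2)) := by
        rw [← exp_add]; congr 1
        have := sin_sq_add_cos_sq θ
        have h3 : sin θ ^ 2 = 1 - cos θ ^ 2 := by linarith
        ring_nf; rw [h3]; ring
      have e2 : r ^ (2 * a) = r * r ^ (2 * a - 1) := by
        rw [rpow_sub_one hr.ne']; field_simp
      rw [e1, e2, mul_rpow hr.le hs.le]; ring
    · rw [Set.indicator_of_notMem h]
      by_cases h' : θ ∈ Set.Ioo (-π) π
      · rw [Set.indicator_of_mem h', hf, polarCoord_symm_apply]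
        simp only [smul_eq_mul]
        have hθ : θ ≤ 0 := by
          by_contra hc; exact h ⟨not_le.1 hc, h'.2⟩
        have hs : sin θ ≤ 0 := sin_nonpos_of_nonpos_of_neg_pi_le hθ h'.1.le
        rw [Set.indicator_of_notMem (show r * sin θ ∉ Set.Ioi (0:ℝ) from
          not_lt.2 (mul_nonpos_of_nonneg_of_nonpos hr.le hs))]
        simp
      · rw [Set.indicator_of_notMem h']
  · have hfm : Measurable f := by
      refine Measurable.mul (by fun_prop) ?_
      exact (Measurable.indicator (by fun_prop) measurableSet_Ioi).comp measurable_snd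
    have : Measurable (fun p : ℝ × ℝ => polarCoord.symm p) := by
      simp only [polarCoord_symm_apply]; fun_prop
    simp only [smul_eq_mul]
    exact ((ENNReal.measurable_ofReal.comp measurable_fst).mul (hfm.comp this)).aemeasurable

/-- One-dimensional total mass. -/
theorem mass1 {b : Prop} {a : ℝ} (h : Adm b a) {τ : ℝ} (hτ : 0 < τ) (ξ : ℝ) :
    ∫⁻ y, ∫⁻ u, ENNReal.ofReal (exp (-(τ * ((y - ξ) ^ 2 + 4 * y * ξ * u)))) ∂(kap b a) ∂(lam b a)
      = ENNReal.ofReal (Cm b a * τ ^ (-a - 1 / 2)) := by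
  by_cases hb : b
  · have ha := (h.1 hb).1
    have hB := ProbabilityTheory.beta_pos ha ha
    have hT : {y : ℝ | b → 0 < y} = Set.Ioi 0 := by ext; simp [hb]
    rw [lam, lintegral_withDensity_eq_lintegral_mul_non_measurable _ (by fun_prop)
      (Eventually.of_forall fun _ => ENNReal.ofReal_lt_top), kap, if_pos hb, hT, Cm, if_pos hb]
    have hG := Real.Gamma_mul_Gamma_add_half a
    have hGa := Real.Gamma_pos_of_pos ha
    have hG2 := Real.Gamma_pos_of_pos (show 0 < 2 * a by linarith)
    have hc : Real.Gamma (a + 1 / 2) / 2 * τ ^ (-a - 1 / 2) =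
        2 ^ (1 - 2 * a) / ProbabilityTheory.beta a a *
          (√π * (1 / 2) * Real.Gamma a * τ ^ (-a - 1 / 2)) := by
      have : Real.Gamma (a + 1 / 2) = Real.Gamma (2 * a) * 2 ^ (1 - 2 * a) * √π / Real.Gamma a := by
        rw [← hG]; field_simp
      rw [this, ProbabilityTheory.beta, ← two_mul]; field_simp
    rw [hc, ENNReal.ofReal_mul (by positivity), ← polar_half ha hτ ξ,
      ← lintegral_const_mul' _ _ ENNReal.ofReal_ne_top]
    refine setLIntegral_congr_fun measurableSet_Ioi fun r hr => ?_
    have hr : 0 < r := hr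
    simp only [Pi.mul_apply]
    rw [beta_theta ha _ (by fun_prop), ← lintegral_const_mul' _ _ ENNReal.ofReal_ne_top,
      ← lintegral_const_mul' _ _ ENNReal.ofReal_ne_top]
    refine setLIntegral_congr_fun measurableSet_Ioo fun θ hθ => ?_
    have hs : 0 < sin θ := sin_pos_of_mem_Ioo hθ
    rw [← ENNReal.ofReal_mul (by positivity), ← ENNReal.ofReal_mul (by positivity),
      ← ENNReal.ofReal_mul (by positivity)]
    congr 1
    have : (r - ξ) ^ 2 + 4 * r * ξ * ((1 - cos θ) / 2) = r ^ 2 + ξ ^ 2 - 2 * r * ξ * cos θ := by ring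
    rw [this]; ring
  · have ha := h.2 hb
    subst ha
    have hT : {y : ℝ | b → 0 < y} = Set.univ := by ext; simp [hb]
    rw [kap, if_neg hb, Cm, if_neg hb, lam, hT]
    simp only [mul_zero, rpow_zero, ENNReal.ofReal_one, Measure.restrict_univ, lintegral_dirac, add_zero]
    rw [lintegral_withDensity_eq_lintegral_mul_non_measurable _ (by fun_prop) (by simp)]
    simp only [Pi.mul_apply, one_mul]
    rw [lint_gauss hτ]; congr 3; norm_num

instance kap_sf (b : Prop) (a : ℝ) : SigmaFinite (kap b a) := by
  unfold kap
  split_ifs with hb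
  · unfold ProbabilityTheory.betaMeasure ProbabilityTheory.betaPDF; infer_instance
  · infer_instance

theorem lam_integrable {b : Prop} {a : ℝ} (h : Adm b a) {p : ℝ} (hp : 1 + 2 * a < p) :
    Integrable (fun y : ℝ => (1 + y ^ 2) ^ (-p / 2)) (lam b a) := by
  unfold lam
  rw [integrable_withDensity_iff_integrable_smul' (by fun_prop) (by simp)]
  have h1 : Integrable (fun x : ℝ => (1 + ‖x‖ ^ 2) ^ (-(p - 2 * a) / 2)) volume :=
    integrable_rpow_neg_one_add_norm_sq (by simp; linarith)
  refine Integrable.mono' (h1.restrict (s := {y : ℝ | b → 0 < y})) ?_ ?_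
  · exact (by fun_prop : Measurable _).aestronglyMeasurable
  · refine (ae_restrict_iff' (meas_T b)).2 (Eventually.of_forall fun y hy => ?_)
    have h0 : (0:ℝ) < 1 + y ^ 2 := by positivity
    have hy0 : 0 ≤ y ^ (2 * a) ∧ y ^ (2 * a) ≤ (1 + y ^ 2) ^ a := by
      by_cases hb : b
      · have : 0 < y := hy hb
        refine ⟨by positivity, ?_⟩
        rw [rpow_mul this.le, rpow_two]
        exact rpow_le_rpow (by positivity) (by linarith) (h.1 hb).1.le
      · simp [h.2 hb]
    rw [ENNReal.toReal_ofReal hy0.1, norm_eq_abs, smul_eq_mul, abs_of_nonneg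
      (mul_nonneg hy0.1 (by positivity)), norm_eq_abs, sq_abs,
      show -(p - 2 * a) / 2 = a + -p / 2 by ring, rpow_add h0]
    exact mul_le_mul_of_nonneg_right hy0.2 (by positivity)

/-- integration by parts against the symmetric beta density -/
theorem beta_ibp {a : ℝ} (ha : 0 < a) {B d p : ℝ} (hB : 0 < B) (hd : 0 ≤ d) :
    ∫ u, (a * (1 - 2 * u) * (B + d * u) ^ (-p) - p * d * (u * (1 - u)) * (B + d * u) ^ (-p - 1))
      ∂(ProbabilityTheory.betaMeasure a a) = 0 := by
  have := ProbabilityTheory.isProbabilityMeasureBeta ha ha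
  set H : ℝ → ℝ := fun u =>
    a * (1 - 2 * u) * (B + d * u) ^ (-p) - p * d * (u * (1 - u)) * (B + d * u) ^ (-p - 1) with hH
  have hpos : ∀ u ∈ Set.Icc (0:ℝ) 1, 0 < B + d * u := fun u hu => by
    have := mul_nonneg hd hu.1; linarith
  have hHc : ContinuousOn H (Set.Icc 0 1) := by
    intro u hu
    have := hpos u hu
    refine ContinuousAt.continuousWithinAt ?_
    have h1 : ContinuousAt (fun u => (B + d * u) ^ (-p)) u :=
      ContinuousAt.rpow_const (by fun_prop) (Or.inl this.ne')
    have h2 : ContinuousAt (fun u => (B + d * u) ^ (-p - 1)) u :=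
      ContinuousAt.rpow_const (by fun_prop) (Or.inl this.ne')
    fun_prop
  have hHm : Measurable H := by fun_prop
  obtain ⟨C, hC⟩ := isCompact_Icc.exists_bound_of_continuousOn hHc
  have hIntg : Integrable H (ProbabilityTheory.betaMeasure a a) := by
    refine Integrable.of_bound hHm.aestronglyMeasurable C ?_
    have := kap_ae True a
    rw [kap, if_pos trivial] at this
    filter_upwards [this] with u hu using hC u ⟨hu.1, hu.2.1⟩
  have hbm : Measurable (ProbabilityTheory.betaPDF a a) := by
    unfold ProbabilityTheory.betaPDF; fun_prop
  rw [ProbabilityTheory.betaMeasure] at hIntg ⊢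
  rw [integrable_withDensity_iff_integrable_smul' hbm
    (Eventually.of_forall fun _ => ENNReal.ofReal_lt_top)] at hIntg
  rw [integral_withDensity_eq_integral_toReal_smul hbm
    (Eventually.of_forall fun _ => ENNReal.ofReal_lt_top)]
  have hBe := ProbabilityTheory.beta_pos ha ha
  set K := 1 / ProbabilityTheory.beta a a with hK
  set G : ℝ → ℝ := fun u => K * ((u * (1 - u)) ^ a * (B + d * u) ^ (-p)) with hG
  set f : ℝ → ℝ := fun u => (ProbabilityTheory.betaPDF a a u).toReal • H u with hf
  have hsupp : ∫ u, f u = ∫ u in Set.Ioc (0:ℝ) 1, f u := by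
    symm
    refine setIntegral_eq_integral_of_forall_compl_eq_zero fun u hu => ?_
    have : ProbabilityTheory.betaPDF a a u = 0 := by
      rw [ProbabilityTheory.betaPDF_eq, if_neg (fun h => hu ⟨h.1, h.2.le⟩)]; simp
    simp [hf, this]
  have hmain : ∫ u in (0:ℝ)..1, f u = G 1 - G 0 := by
    refine intervalIntegral.integral_eq_sub_of_hasDerivAt_of_le zero_le_one ?_ ?_ ?_
    · intro u hu
      have := hpos u hu
      refine ContinuousAt.continuousWithinAt ?_
      have h1 : ContinuousAt (fun u => (B + d * u) ^ (-p)) u :=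
        ContinuousAt.rpow_const (by fun_prop) (Or.inl this.ne')
      have h2 : ContinuousAt (fun u : ℝ => (u * (1 - u)) ^ a) u :=
        ContinuousAt.rpow_const (by fun_prop) (Or.inr ha.le)
      fun_prop
    · intro u hu
      have hq := hpos u ⟨hu.1.le, hu.2.le⟩
      have hu0 : 0 < u := hu.1
      have hu1 : 0 < 1 - u := by linarith [hu.2]
      have d1 : HasDerivAt (fun u : ℝ => u * (1 - u)) (1 * (1 - u) + u * (-1)) u :=
        (hasDerivAt_id u).mul ((hasDerivAt_id u).const_sub 1)
      have d2 : HasDerivAt (fun u : ℝ => B + d * u) (d * 1) u :=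
        ((hasDerivAt_id u).const_mul d).const_add B
      have d3 := ((d1.rpow_const (p := a) (Or.inl (mul_pos hu0 hu1).ne')).mul
        (d2.rpow_const (p := -p) (Or.inl hq.ne'))).const_mul K
      convert! d3 using 1
      simp only [hf, hH]
      rw [ProbabilityTheory.betaPDF_of_pos_lt_one hu0 hu.2, ENNReal.toReal_ofReal (by positivity),
        mul_rpow hu0.le hu1.le, mul_rpow hu0.le hu1.le, rpow_sub_one hu0.ne', rpow_sub_one hu1.ne',
        smul_eq_mul]
      simp only [hK]
      field_simp
      ring
    · rw [intervalIntegrable_iff_integrableOn_Ioc_of_le zero_le_one]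
      exact hIntg.integrableOn
  rw [intervalIntegral.integral_of_le zero_le_one] at hmain
  rw [hsupp, hmain]
  simp [hG, zero_rpow ha.ne']

/-- the one-dimensional Gaussian average with weight -/
noncomputable def gg (b : Prop) (a s τ ξ : ℝ) : ℝ≥0∞ :=
  ∫⁻ y, ENNReal.ofReal ((1 + y ^ 2) ^ (-s / 2)) *
    ∫⁻ u, ENNReal.ofReal (exp (-(τ * ((y - ξ) ^ 2 + 4 * y * ξ * u)))) ∂(kap b a) ∂(lam b a)

theorem quad_nonneg {y ξ u : ℝ} (h0 : 0 ≤ u) (h1 : u ≤ 1) :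
    (|y| - |ξ|) ^ 2 ≤ (y - ξ) ^ 2 + 4 * y * ξ * u := by
  have h2 : |y * ξ| = |y| * |ξ| := abs_mul y ξ
  have h3 : y * ξ * (1 - 2 * u) ≤ |y| * |ξ| := by
    rw [← h2]
    calc y * ξ * (1 - 2 * u) ≤ |y * ξ * (1 - 2 * u)| := le_abs_self _
      _ = |y * ξ| * |1 - 2 * u| := abs_mul _ _
      _ ≤ |y * ξ| * 1 := by
        refine mul_le_mul_of_nonneg_left ?_ (abs_nonneg _)
        rw [abs_le]; constructor <;> linarith
      _ = _ := mul_one _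
  nlinarith [sq_abs y, sq_abs ξ]

theorem wt_le_one {s y : ℝ} (hs : 0 ≤ s) : (1 + y ^ 2) ^ (-s / 2) ≤ 1 :=
  rpow_le_one_of_one_le_of_nonpos (by nlinarith [sq_nonneg y]) (by linarith)

theorem inner_le_one {b : Prop} {a τ : ℝ} (h : Adm b a) (hτ : 0 < τ) (y ξ : ℝ) :
    ∫⁻ u, ENNReal.ofReal (exp (-(τ * ((y - ξ) ^ 2 + 4 * y * ξ * u)))) ∂(kap b a) ≤ 1 := by
  have := kap_prob h
  calc _ ≤ ∫⁻ u, 1 ∂(kap b a) := by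
        refine lintegral_mono_ae ?_
        filter_upwards [kap_ae b a] with u hu
        rw [ENNReal.ofReal_le_one, exp_le_one_iff]
        have := quad_nonneg (y := y) (ξ := ξ) hu.1 hu.2.1
        have : 0 ≤ (y - ξ) ^ 2 + 4 * y * ξ * u := le_trans (sq_nonneg _) this
        nlinarith
    _ = 1 := by simp

theorem gg_le1 {b : Prop} {a : ℝ} (h : Adm b a) {s τ : ℝ} (hs : 0 ≤ s) (hτ : 0 < τ) (ξ : ℝ) :
    gg b a s τ ξ ≤ ENNReal.ofReal (Cm b a * τ ^ (-a - 1 / 2)) := by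
  rw [← mass1 h hτ ξ]
  refine lintegral_mono fun y => ?_
  refine mul_le_of_le_one_left (by positivity) ?_
  exact ENNReal.ofReal_le_one.2 (wt_le_one hs)

theorem lint_small {b : Prop} {a : ℝ} (h : Adm b a) {s ρ : ℝ} (hs : 0 ≤ s) (hs1 : s < 1)
    (hρ : 0 < ρ) :
    ∫⁻ y, {y : ℝ | |y| < ρ}.indicator (fun y => ENNReal.ofReal ((1 + y ^ 2) ^ (-s / 2))) y ∂(lam b a)
      ≤ ENNReal.ofReal (2 / (2 * a + 1 - s) * ρ ^ (2 * a + 1 - s)) := by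
  have ha := h.nonneg
  have hq : -1 < 2 * a - s := by linarith
  have hms : MeasurableSet {y : ℝ | |y| < ρ} := measurableSet_lt (by fun_prop) (by fun_prop)
  have hm : Measurable ({y : ℝ | |y| < ρ}.indicator
    (fun y => ENNReal.ofReal ((1 + y ^ 2) ^ (-s / 2)))) := Measurable.indicator (by fun_prop) hms
  set F : ℝ → ℝ≥0∞ := (Set.Ioc 0 ρ).indicator (fun y => ENNReal.ofReal (y ^ (2 * a - s))) with hF
  have hFm : Measurable F := Measurable.indicator (by fun_prop) measurableSet_Ioc
  have hFi : ∫⁻ y, F y = ENNReal.ofReal (1 / (2 * a + 1 - s) * ρ ^ (2 * a + 1 - s)) := by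
    rw [hF, lintegral_indicator measurableSet_Ioc, ← ofReal_integral_eq_lintegral_ofReal,
      ← intervalIntegral.integral_of_le hρ.le, integral_rpow (Or.inl hq),
      zero_rpow (by linarith), show 2 * a - s + 1 = 2 * a + 1 - s by ring]
    · congr 1; ring
    · exact (intervalIntegrable_iff_integrableOn_Ioc_of_le hρ.le).1
        (intervalIntegral.intervalIntegrable_rpow' hq)
    · exact (ae_restrict_iff' measurableSet_Ioc).2 (Eventually.of_forall fun x hx =>
        rpow_nonneg hx.1.le _)
  rw [lam, lintegral_withDensity_eq_lintegral_mul _ (by fun_prop) hm]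
  calc _ ≤ ∫⁻ y in {y : ℝ | b → 0 < y}, (F y + F (-y)) := by
        refine lintegral_mono_ae ?_
        have h0 : ∀ᵐ y : ℝ, y ≠ 0 := by simp [ae_iff]
        filter_upwards [ae_restrict_of_ae h0] with y hy
        simp only [Pi.mul_apply]
        by_cases hyρ : |y| < ρ
        · rw [Set.indicator_of_mem (show y ∈ {y : ℝ | |y| < ρ} from hyρ)]
          have hpos : 0 < |y| := abs_pos.2 hy
          have h1 : ENNReal.ofReal (|y| ^ (2 * a - s)) ≤ F y + F (-y) := by
            rcases lt_or_gt_of_ne hy with hn | hp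
            · refine le_trans ?_ le_add_self
              rw [abs_of_neg hn] at hyρ ⊢
              rw [hF, Set.indicator_of_mem (show -y ∈ Set.Ioc 0 ρ from ⟨by linarith, hyρ.le⟩)]
            · refine le_trans ?_ le_self_add
              rw [abs_of_pos hp] at hyρ ⊢
              rw [hF, Set.indicator_of_mem (show y ∈ Set.Ioc 0 ρ from ⟨hp, hyρ.le⟩)]
          refine le_trans ?_ h1
          rw [← ENNReal.ofReal_mul' (by positivity)]
          refine ENNReal.ofReal_le_ofReal ?_
          have e1 : y ^ (2 * a) ≤ |y| ^ (2 * a) := (le_abs_self _).trans (abs_rpow_le_abs_rpow _ _)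
          have e2 : (1 + y ^ 2) ^ (-s / 2) ≤ |y| ^ (-s) := by
            have : |y| ^ (-s) = (|y| ^ 2) ^ (-s / 2) := by
              rw [← rpow_natCast, ← rpow_mul (abs_nonneg _)]; congr 1; push_cast; ring
            rw [this, sq_abs]
            exact rpow_le_rpow_of_nonpos (by positivity) (by linarith) (by linarith)
          rw [sub_eq_add_neg, rpow_add hpos]
          exact mul_le_mul e1 e2 (by positivity) (by positivity)
        · rw [Set.indicator_of_notMem (show y ∉ {y : ℝ | |y| < ρ} from hyρ)]; simp
    _ ≤ ∫⁻ y, (F y + F (-y)) := setLIntegral_le_lintegral _ _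
    _ = _ := by
        rw [lintegral_add_left hFm, lintegral_neg_eq_self F, hFi,
          ← ENNReal.ofReal_add (by have : 0 < 2 * a + 1 - s := by linarith
                                   positivity) (by have : 0 < 2 * a + 1 - s := by linarith
                                                   positivity)]
        congr 1; ring

theorem Cm_nonneg {b : Prop} {a : ℝ} (h : Adm b a) : 0 ≤ Cm b a := by
  have := h.nonneg
  unfold Cm; split_ifs
  · have := Real.Gamma_pos_of_pos (show 0 < a + 1 / 2 by linarith); positivity
  · positivity

theorem meas_inner (b : Prop) (a τ ξ : ℝ) : Measurable (fun y : ℝ =>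
    ∫⁻ u, ENNReal.ofReal (exp (-(τ * ((y - ξ) ^ 2 + 4 * y * ξ * u)))) ∂(kap b a)) := by
  refine Measurable.lintegral_prod_right ?_
  unfold Function.uncurry; fun_prop

theorem gg_le2 {b : Prop} {a : ℝ} (h : Adm b a) {s τ : ℝ} (hs : 0 ≤ s) (hs1 : s < 1) (hτ : 0 < τ)
    (ξ : ℝ) :
    gg b a s τ ξ ≤ ENNReal.ofReal ((2 / (2 * a + 1 - s) + Cm b a) * τ ^ (-a - 1 / 2 + s / 2)) := by
  have ha := h.nonneg
  have hC := Cm_nonneg h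
  set ρ := τ ^ (-(1 / 2) : ℝ) with hρ
  have hρ0 : 0 < ρ := by positivity
  have hms : MeasurableSet {y : ℝ | |y| < ρ} := measurableSet_lt (by fun_prop) (by fun_prop)
  have e1 : ρ ^ (2 * a + 1 - s) = τ ^ (-a - 1 / 2 + s / 2) := by
    rw [hρ, ← rpow_mul hτ.le]; congr 1; ring
  have hpos : 0 < 2 * a + 1 - s := by linarith
  rw [add_mul, ENNReal.ofReal_add (by positivity) (by positivity)]
  have e2 : ENNReal.ofReal (Cm b a * τ ^ (-a - 1 / 2 + s / 2)) = ENNReal.ofReal (τ ^ (s / 2)) *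
      ENNReal.ofReal (Cm b a * τ ^ (-a - 1 / 2)) := by
    rw [← ENNReal.ofReal_mul (by positivity), rpow_add hτ]; congr 1; ring
  rw [e2, ← mass1 h hτ ξ, ← lintegral_const_mul' _ _ ENNReal.ofReal_ne_top, ← e1]
  refine le_trans ?_ (add_le_add_left (lint_small h hs hs1 hρ0) _)
  rw [← lintegral_add_left (Measurable.indicator (by fun_prop) hms)]
  refine lintegral_mono fun y => ?_
  simp only
  by_cases hy : |y| < ρ
  · rw [Set.indicator_of_mem (show y ∈ {y : ℝ | |y| < ρ} from hy)]
    refine le_trans ?_ le_self_add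
    exact mul_le_of_le_one_right (by positivity) (inner_le_one h hτ y ξ)
  · rw [Set.indicator_of_notMem (show y ∉ {y : ℝ | |y| < ρ} from hy), zero_add]
    gcongr
    have hy : ρ ≤ |y| := not_lt.1 hy
    have : τ ^ (s / 2) = (ρ ^ 2) ^ (-s / 2) := by
      rw [hρ, ← rpow_natCast, ← rpow_mul hτ.le, ← rpow_mul hτ.le]; congr 1; push_cast; ring
    rw [this]
    refine rpow_le_rpow_of_nonpos (by positivity) ?_ (by linarith)
    have : ρ ^ 2 ≤ |y| ^ 2 := by gcongr
    rw [sq_abs] at this; linarith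

theorem gg_tendsto {b : Prop} {a : ℝ} (h : Adm b a) {s τ : ℝ} (hs : 0 < s) (hτ : 0 < τ) :
    Tendsto (fun ξ => gg b a s τ ξ) (comap (fun ξ : ℝ => |ξ|) atTop) (𝓝 0) := by
  have hC := Cm_nonneg h
  have hle : ∀ ξ, gg b a s τ ξ ≤ ENNReal.ofReal ((1 + ξ ^ 2 / 4) ^ (-s / 2) * (Cm b a * τ ^ (-a - 1 / 2))
      + exp (-(τ * ξ ^ 2 / 8)) * (Cm b a * (τ / 2) ^ (-a - 1 / 2))) := by
    intro ξ
    rw [ENNReal.ofReal_add (by positivity) (by positivity),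
      ENNReal.ofReal_mul (p := (1 + ξ ^ 2 / 4) ^ (-s / 2)) (by positivity),
      ENNReal.ofReal_mul (p := exp (-(τ * ξ ^ 2 / 8))) (by positivity), ← mass1 h hτ ξ, ← mass1 h (half_pos hτ) ξ,
      ← lintegral_const_mul' _ _ ENNReal.ofReal_ne_top, ← lintegral_const_mul' _ _ ENNReal.ofReal_ne_top,
      ← lintegral_add_left ((meas_inner b a τ ξ).const_mul _)]
    refine lintegral_mono fun y => ?_
    simp only
    by_cases hy : |ξ| / 2 ≤ |y|
    · refine le_trans ?_ le_self_add
      refine mul_le_mul_left (ENNReal.ofReal_le_ofReal ?_) _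
      refine rpow_le_rpow_of_nonpos (by positivity) ?_ (by linarith)
      have : (|ξ| / 2) ^ 2 ≤ |y| ^ 2 := by gcongr
      rw [div_pow, sq_abs, sq_abs] at this; linarith
    · refine le_trans ?_ le_add_self
      refine le_trans (mul_le_of_le_one_left (by positivity)
        (ENNReal.ofReal_le_one.2 (wt_le_one hs.le))) ?_
      rw [← lintegral_const_mul' _ _ ENNReal.ofReal_ne_top]
      refine lintegral_mono_ae ?_
      filter_upwards [kap_ae b a] with u hu
      rw [← ENNReal.ofReal_mul (exp_pos _).le, ← exp_add]
      refine ENNReal.ofReal_le_ofReal (exp_le_exp.2 ?_)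
      have h1 := quad_nonneg (y := y) (ξ := ξ) hu.1 hu.2.1
      have h2 : ξ ^ 2 / 4 ≤ (|y| - |ξ|) ^ 2 := by
        have : |ξ| / 2 ≤ |ξ| - |y| := by linarith [not_le.1 hy]
        have : (|ξ| / 2) ^ 2 ≤ (|ξ| - |y|) ^ 2 := by gcongr
        rw [div_pow, sq_abs] at this; nlinarith
      nlinarith
  refine tendsto_of_tendsto_of_tendsto_of_le_of_le tendsto_const_nhds ?_ (fun _ => zero_le) hle
  have hsq : Tendsto (fun ξ : ℝ => ξ ^ 2) (comap (fun ξ : ℝ => |ξ|) atTop) atTop := by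
    have : (fun ξ : ℝ => ξ ^ 2) = (fun x : ℝ => x ^ 2) ∘ (fun ξ => |ξ|) := by
      funext x; simp
    rw [this]
    exact (tendsto_pow_atTop two_ne_zero).comp tendsto_comap
  rw [← ENNReal.ofReal_zero]
  refine ENNReal.tendsto_ofReal ?_
  have t1 : Tendsto (fun ξ : ℝ => (1 + ξ ^ 2 / 4) ^ (-s / 2)) (comap (fun ξ : ℝ => |ξ|) atTop) (𝓝 0) := by
    rw [show -s / 2 = -(s / 2) by ring]
    exact (tendsto_rpow_neg_atTop (by linarith)).comp
      (tendsto_atTop_add_const_left _ _ (hsq.atTop_div_const (by norm_num)))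
  have t2 : Tendsto (fun ξ : ℝ => exp (-(τ * ξ ^ 2 / 8))) (comap (fun ξ : ℝ => |ξ|) atTop) (𝓝 0) := by
    refine tendsto_exp_neg_atTop_nhds_zero.comp ?_
    exact (hsq.const_mul_atTop hτ).atTop_div_const (by norm_num)
  simpa using (t1.mul_const _).add (t2.mul_const _)

theorem meas_gg (b : Prop) (a s ξ : ℝ) : Measurable (fun τ => gg b a s τ ξ) := by
  unfold gg
  refine Measurable.lintegral_prod_right (f := fun (τ y : ℝ) => _) ?_
  unfold Function.uncurry
  refine Measurable.mul (by fun_prop) ?_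
  refine Measurable.lintegral_prod_right (f := fun (p : ℝ × ℝ) (u : ℝ) => _) ?_
  unfold Function.uncurry
  fun_prop

/-- dominating function for the heat-type integrals -/
noncomputable def Dm (K ak e τ : ℝ) : ℝ≥0∞ :=
  (Set.Ioc (0:ℝ) 1).indicator (fun τ => ENNReal.ofReal (K * τ ^ (-1 + e / 2))) τ +
    (Set.Ioi (1:ℝ)).indicator (fun τ => ENNReal.ofReal (K * τ ^ (ak - 3 / 2))) τ

theorem meas_Dm (K ak e : ℝ) : Measurable (Dm K ak e) := by
  unfold Dm
  exact (Measurable.indicator (by fun_prop) measurableSet_Ioc).add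
    (Measurable.indicator (by fun_prop) measurableSet_Ioi)

theorem Dm_fin {K ak e : ℝ} (hak : ak < 1 / 2) (he : 0 < e) :
    ∫⁻ τ in Set.Ioi (0:ℝ), Dm K ak e τ ≠ ∞ := by
  refine ne_of_lt (lt_of_le_of_lt (setLIntegral_le_lintegral _ _) ?_)
  unfold Dm
  rw [lintegral_add_left (Measurable.indicator (by fun_prop) measurableSet_Ioc),
    lintegral_indicator measurableSet_Ioc, lintegral_indicator measurableSet_Ioi]
  refine ENNReal.add_lt_top.2 ⟨?_, ?_⟩
  · have : IntegrableOn (fun τ : ℝ => K * τ ^ (-1 + e / 2)) (Set.Ioc 0 1) :=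
      ((intervalIntegrable_iff_integrableOn_Ioc_of_le zero_le_one).1
        (intervalIntegral.intervalIntegrable_rpow' (by linarith))).const_mul K
    exact this.lintegral_lt_top
  · have : IntegrableOn (fun τ : ℝ => K * τ ^ (ak - 3 / 2)) (Set.Ioi 1) :=
      (integrableOn_Ioi_rpow_of_lt (by linarith) zero_lt_one).const_mul K
    exact this.lintegral_lt_top

theorem gg_dom {b : Prop} {a ak e : ℝ} (h : Adm b a) (hak : 0 < ak) (hak1 : ak < 1 / 2)
    (he : 0 < e) (he1 : e < 2 * ak) : ∃ K : ℝ, ∀ τ > 0, ∀ ξ,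
    ENNReal.ofReal (τ ^ (ak + a - 1)) * gg b a (1 - 2 * ak + e) τ ξ ≤ Dm K ak e τ := by
  have hC := Cm_nonneg h
  have ha := h.nonneg
  have hp : 0 < 2 * a + 1 - (1 - 2 * ak + e) := by linarith
  refine ⟨2 / (2 * a + 1 - (1 - 2 * ak + e)) + Cm b a, fun τ hτ ξ => ?_⟩
  have hK : Cm b a ≤ 2 / (2 * a + 1 - (1 - 2 * ak + e)) + Cm b a := by
    have : 0 ≤ 2 / (2 * a + 1 - (1 - 2 * ak + e)) := by positivity
    linarith
  unfold Dm
  rcases le_or_gt τ 1 with h1 | h1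
  · refine le_trans ?_ le_self_add
    rw [Set.indicator_of_mem (show τ ∈ Set.Ioc (0:ℝ) 1 from ⟨hτ, h1⟩)]
    refine le_trans (mul_le_mul_right (gg_le2 h (by linarith) (by linarith) hτ ξ) _) ?_
    rw [← ENNReal.ofReal_mul (by positivity)]
    refine ENNReal.ofReal_le_ofReal (le_of_eq ?_)
    rw [mul_left_comm, ← rpow_add hτ]
    congr 2; ring
  · refine le_trans ?_ le_add_self
    rw [Set.indicator_of_mem (show τ ∈ Set.Ioi (1:ℝ) from h1)]
    refine le_trans (mul_le_mul_right (gg_le1 h (by linarith) hτ ξ) _) ?_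
    rw [← ENNReal.ofReal_mul (by positivity)]
    refine ENNReal.ofReal_le_ofReal ?_
    rw [mul_left_comm, ← rpow_add hτ, show ak + a - 1 + (-a - 1 / 2) = ak - 3 / 2 by ring]
    gcongr

noncomputable def Psi (b : Prop) (a s ak η ξ : ℝ) : ℝ≥0∞ :=
  ∫⁻ τ in Set.Ioi (0:ℝ), ENNReal.ofReal (τ ^ (ak + a - 1) * exp (-(τ * η ^ 2))) * gg b a s τ ξ

theorem psi_small {b : Prop} {a ak e : ℝ} (h : Adm b a) (hak : 0 < ak) (hak1 : ak < 1 / 2)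
    (he : 0 < e) (he1 : e < 2 * ak) {δ : ℝ≥0∞} (hδ : 0 < δ) : ∃ R : ℝ, ∀ η ξ,
    (R < |ξ| ∨ R < |η|) → Psi b a (1 - 2 * ak + e) ak η ξ < δ := by
  obtain ⟨K, hK⟩ := gg_dom h hak hak1 he he1
  have key1 : Tendsto (fun ξ => ∫⁻ τ in Set.Ioi (0:ℝ),
      ENNReal.ofReal (τ ^ (ak + a - 1)) * gg b a (1 - 2 * ak + e) τ ξ)
      (comap (fun ξ : ℝ => |ξ|) atTop) (𝓝 (∫⁻ τ in Set.Ioi (0:ℝ), 0)) := by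
    refine tendsto_lintegral_filter_of_dominated_convergence (Dm K ak e) ?_ ?_ (Dm_fin hak1 he) ?_
    · exact Eventually.of_forall fun ξ => Measurable.mul (by fun_prop) (meas_gg _ _ _ _)
    · exact Eventually.of_forall fun ξ => (ae_restrict_iff' measurableSet_Ioi).2
        (Eventually.of_forall fun τ hτ => hK τ hτ ξ)
    · refine (ae_restrict_iff' measurableSet_Ioi).2 (Eventually.of_forall fun τ hτ => ?_)
      have := ENNReal.Tendsto.const_mul (gg_tendsto h (s := 1 - 2 * ak + e) (by linarith) hτ)
        (Or.inr (ENNReal.ofReal_ne_top (r := τ ^ (ak + a - 1))))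
      simpa using this
  have key2 : Tendsto (fun η : ℝ => ∫⁻ τ in Set.Ioi (0:ℝ),
      ENNReal.ofReal (exp (-(τ * η ^ 2))) * Dm K ak e τ)
      (comap (fun ξ : ℝ => |ξ|) atTop) (𝓝 (∫⁻ τ in Set.Ioi (0:ℝ), 0)) := by
    refine tendsto_lintegral_filter_of_dominated_convergence (Dm K ak e) ?_ ?_ (Dm_fin hak1 he) ?_
    · exact Eventually.of_forall fun ξ => Measurable.mul (by fun_prop) (meas_Dm _ _ _)
    · refine Eventually.of_forall fun ξ => (ae_restrict_iff' measurableSet_Ioi).2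
        (Eventually.of_forall fun τ hτ => ?_)
      refine mul_le_of_le_one_left (by positivity) ?_
      rw [ENNReal.ofReal_le_one, exp_le_one_iff]
      have : 0 ≤ τ * ξ ^ 2 := mul_nonneg (le_of_lt hτ) (sq_nonneg _)
      linarith
    · refine (ae_restrict_iff' measurableSet_Ioi).2 (Eventually.of_forall fun τ hτ => ?_)
      have hsq : Tendsto (fun ξ : ℝ => ξ ^ 2) (comap (fun ξ : ℝ => |ξ|) atTop) atTop := by
        have : (fun ξ : ℝ => ξ ^ 2) = (fun x : ℝ => x ^ 2) ∘ (fun ξ => |ξ|) := by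
          funext x; simp
        rw [this]
        exact (tendsto_pow_atTop two_ne_zero).comp tendsto_comap
      have t : Tendsto (fun η : ℝ => exp (-(τ * η ^ 2))) (comap (fun ξ : ℝ => |ξ|) atTop) (𝓝 0) :=
        tendsto_exp_neg_atTop_nhds_zero.comp (hsq.const_mul_atTop hτ)
      have hfin : Dm K ak e τ ≠ ∞ := by
        unfold Dm
        refine ENNReal.add_ne_top.2 ⟨?_, ?_⟩ <;>
        · unfold Set.indicator
          split_ifs <;> simp
      have := ENNReal.Tendsto.mul_const (ENNReal.tendsto_ofReal t) (Or.inr hfin)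
      simpa using this
  simp only [lintegral_zero] at key1 key2
  have e1 := key1.eventually (gt_mem_nhds hδ)
  have e2 := key2.eventually (gt_mem_nhds hδ)
  obtain ⟨s, hs, h2⟩ := (e1.and e2)
  obtain ⟨R, hR⟩ := mem_atTop_sets.1 hs
  refine ⟨R, fun η ξ hor => ?_⟩
  have expand : ∀ τ, ENNReal.ofReal (τ ^ (ak + a - 1) * exp (-(τ * η ^ 2))) =
      ENNReal.ofReal (exp (-(τ * η ^ 2))) * ENNReal.ofReal (τ ^ (ak + a - 1)) := fun τ => by
    rw [mul_comm, ENNReal.ofReal_mul (exp_pos _).le]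
  rcases hor with h3 | h3
  · refine lt_of_le_of_lt ?_ (h2 (hR _ h3.le)).1
    refine setLIntegral_mono' measurableSet_Ioi fun τ hτ => ?_
    rw [expand, mul_assoc]
    refine mul_le_of_le_one_left (by positivity) ?_
    rw [ENNReal.ofReal_le_one, exp_le_one_iff]
    have : 0 ≤ τ * η ^ 2 := mul_nonneg (le_of_lt hτ) (sq_nonneg _)
    linarith
  · refine lt_of_le_of_lt ?_ (h2 (hR _ h3.le)).2
    refine setLIntegral_mono' measurableSet_Ioi fun τ hτ => ?_
    rw [expand, mul_assoc]
    exact mul_le_mul_right (hK τ hτ ξ) _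

section setup
set_option linter.unusedSectionVars false
variable {ι : Type*} [Fintype ι] [DecidableEq ι]

noncomputable def KP (b : ι → Prop) (a : ι → ℝ) : Measure (ι → ℝ) :=
  Measure.pi (fun i => kap (b i) (a i))

noncomputable def LP (b : ι → Prop) (a : ι → ℝ) (k : ι) : Measure ({i // i ≠ k} → ℝ) :=
  Measure.pi (fun i : {i // i ≠ k} => lam (b i) (a i))

noncomputable def MM (b : ι → Prop) (a : ι → ℝ) (k : ι) :
    Measure (({i // i ≠ k} → ℝ) × (ι → ℝ)) :=
  (LP b a k).prod (KP b a)

instance (b : ι → Prop) (a : ι → ℝ) : SigmaFinite (KP b a) := by unfold KP; infer_instance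
instance (b : ι → Prop) (a : ι → ℝ) (k : ι) : SigmaFinite (LP b a k) := by unfold LP; infer_instance
instance (b : ι → Prop) (a : ι → ℝ) (k : ι) : SigmaFinite (MM b a k) := by unfold MM; infer_instance

theorem KP_prob {b : ι → Prop} {a : ι → ℝ} (h : ∀ i, Adm (b i) (a i)) :
    IsProbabilityMeasure (KP b a) := by
  have := fun i => kap_prob (h i)
  unfold KP; infer_instance

def ext0 (k : ι) (y : {i // i ≠ k} → ℝ) : ι → ℝ := fun i => if h : i = k then 0 else y ⟨i, h⟩

theorem ext0_self (k : ι) (y : {i // i ≠ k} → ℝ) : ext0 k y k = 0 := by simp [ext0]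
theorem ext0_ne (k : ι) (y : {i // i ≠ k} → ℝ) (i : {i // i ≠ k}) : ext0 k y i = y i := by
  simp [ext0, i.2]

theorem meas_ext0 (k : ι) (i : ι) : Measurable (fun y : {i // i ≠ k} → ℝ => ext0 k y i) := by
  unfold ext0
  by_cases h : i = k
  · simp [h]
  · simp only [h, dite_false]; fun_prop

def AA (x u ξ : ι → ℝ) : ℝ := ∑ i, ((x i - ξ i) ^ 2 + 4 * x i * ξ i * u i)

theorem meas_AA (k : ι) (ξ : ι → ℝ) :
    Measurable (fun z : ({i // i ≠ k} → ℝ) × (ι → ℝ) => AA (ext0 k z.1) z.2 ξ) := by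
  unfold AA
  refine Finset.measurable_sum _ fun i _ => ?_
  have h1 : Measurable (fun z : ({i // i ≠ k} → ℝ) × (ι → ℝ) => ext0 k z.1 i) :=
    (meas_ext0 k i).comp measurable_fst
  fun_prop

theorem KP_ae {b : ι → Prop} {a : ι → ℝ} :
    ∀ᵐ u ∂(KP b a), ∀ i, 0 ≤ u i ∧ u i ≤ 1 ∧ (¬ b i → u i = 0) := by
  unfold KP
  rw [ae_all_iff]
  intro i
  exact (Measure.quasiMeasurePreserving_eval (fun i => kap (b i) (a i)) i).ae (kap_ae (b i) (a i))

theorem LP_ae {b : ι → Prop} {a : ι → ℝ} {k : ι} :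
    ∀ᵐ y ∂(LP b a k), ∀ i : {i // i ≠ k}, b i → 0 < y i := by
  unfold LP
  rw [ae_all_iff]
  intro i
  exact (Measure.quasiMeasurePreserving_eval (fun i : {i // i ≠ k} => lam (b i) (a i)) i).ae
    (lam_ae (b i) (a i))

theorem MM_ae {b : ι → Prop} {a : ι → ℝ} {k : ι} :
    ∀ᵐ z ∂(MM b a k), (∀ i : {i // i ≠ k}, b i → 0 < z.1 i) ∧
      ∀ i, 0 ≤ z.2 i ∧ z.2 i ≤ 1 ∧ (¬ b i → z.2 i = 0) := by
  unfold MM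
  exact (Measure.quasiMeasurePreserving_fst.ae (LP_ae)).and (Measure.quasiMeasurePreserving_snd.ae KP_ae)

theorem AA_ge (k : ι) (y : {i // i ≠ k} → ℝ) (u ξ : ι → ℝ) (hu : ∀ i, 0 ≤ u i ∧ u i ≤ 1) :
    ξ k ^ 2 ≤ AA (ext0 k y) u ξ := by
  unfold AA
  rw [Fintype.sum_eq_add_sum_subtype_ne _ k, ext0_self]
  have : 0 ≤ ∑ i : {i // i ≠ k}, ((ext0 k y i - ξ i) ^ 2 + 4 * ext0 k y i * ξ i * u i) :=
    Finset.sum_nonneg fun i _ => le_trans (sq_nonneg _) (quad_nonneg (hu i).1 (hu i).2)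
  nlinarith

theorem factor {b : ι → Prop} {a : ι → ℝ} (h : ∀ i, Adm (b i) (a i)) (k : ι)
    (f : {i // i ≠ k} → ℝ → ℝ≥0∞) (hf : ∀ i, Measurable (f i)) (τ : ℝ) (ξ : ι → ℝ) :
    ∫⁻ z, (∏ i, f i (z.1 i)) * ENNReal.ofReal (exp (-(τ * AA (ext0 k z.1) z.2 ξ))) ∂(MM b a k)
      = ENNReal.ofReal (exp (-(τ * ξ k ^ 2))) * ∏ i : {i // i ≠ k}, ∫⁻ y, f i y *
        ∫⁻ u, ENNReal.ofReal (exp (-(τ * ((y - ξ i) ^ 2 + 4 * y * ξ i * u)))) ∂(kap (b i) (a i))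
          ∂(lam (b i) (a i)) := by
  have := fun i => kap_prob (h i)
  have hfm : Measurable (fun z : ({i // i ≠ k} → ℝ) × (ι → ℝ) => ∏ i, f i (z.1 i)) := by
    refine Finset.measurable_prod _ fun i _ => (hf i).comp (by fun_prop)
  have hm : Measurable (fun z : ({i // i ≠ k} → ℝ) × (ι → ℝ) =>
      (∏ i, f i (z.1 i)) * ENNReal.ofReal (exp (-(τ * AA (ext0 k z.1) z.2 ξ)))) := by
    have := meas_AA k ξ
    exact hfm.mul (by fun_prop)
  unfold MM
  rw [lintegral_prod _ hm.aemeasurable]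
  have hin : ∀ y : {i // i ≠ k} → ℝ, ∫⁻ u, (∏ i, f i (y i)) *
      ENNReal.ofReal (exp (-(τ * AA (ext0 k y) u ξ))) ∂(KP b a)
      = ENNReal.ofReal (exp (-(τ * ξ k ^ 2))) * ∏ i : {i // i ≠ k}, (f i (y i) *
        ∫⁻ u, ENNReal.ofReal (exp (-(τ * ((y i - ξ i) ^ 2 + 4 * y i * ξ i * u)))) ∂(kap (b i) (a i))) := by
    intro y
    have e1 : ∀ u : ι → ℝ, ENNReal.ofReal (exp (-(τ * AA (ext0 k y) u ξ))) =
        ∏ i, ENNReal.ofReal (exp (-(τ * ((ext0 k y i - ξ i) ^ 2 + 4 * ext0 k y i * ξ i * u i)))) := by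
      intro u
      rw [← ENNReal.ofReal_prod_of_nonneg (fun _ _ => (exp_pos _).le), ← exp_sum]
      unfold AA
      rw [Finset.mul_sum, Finset.sum_neg_distrib]
    have hmA : Measurable (fun u : ι → ℝ => ENNReal.ofReal (exp (-(τ * AA (ext0 k y) u ξ)))) := by
      unfold AA; fun_prop
    rw [lintegral_const_mul _ hmA]
    simp_rw [e1]
    unfold KP
    rw [lint_prod _ (fun i v => ENNReal.ofReal (exp (-(τ * ((ext0 k y i - ξ i) ^ 2 +
      4 * ext0 k y i * ξ i * v))))) (fun i => by fun_prop), Fintype.prod_eq_mul_prod_subtype_ne _ k,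
      Finset.prod_mul_distrib]
    simp_rw [ext0_self, ext0_ne]
    simp
    ring
  simp_rw [hin]
  have hm2 : ∀ i : {i // i ≠ k}, Measurable (fun y : ℝ => f i y * ∫⁻ u, ENNReal.ofReal
      (exp (-(τ * ((y - ξ i) ^ 2 + 4 * y * ξ i * u)))) ∂(kap (b i) (a i))) := fun i =>
    (hf i).mul (meas_inner _ _ _ _)
  rw [lintegral_const_mul' _ _ ENNReal.ofReal_ne_top]
  unfold LP
  rw [lint_prod (fun i : {i // i ≠ k} => lam (b i) (a i)) (fun i y => f i y * ∫⁻ u, ENNReal.ofReal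
      (exp (-(τ * ((y - ξ i) ^ 2 + 4 * y * ξ i * u)))) ∂(kap (b i) (a i))) hm2]

theorem lint_gamma {A p : ℝ} (hA : 0 < A) (hp : 0 < p) :
    ∫⁻ τ in Set.Ioi (0:ℝ), ENNReal.ofReal (τ ^ (p - 1)) * ENNReal.ofReal (exp (-(τ * A)))
      = ENNReal.ofReal (Real.Gamma p) * ENNReal.ofReal (A ^ (-p)) := by
  have hG := Real.Gamma_pos_of_pos hp
  have h1 : IntegrableOn (fun τ : ℝ => τ ^ (p - 1) * exp (-A * τ)) (Set.Ioi 0) := by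
    have := integrableOn_rpow_mul_exp_neg_mul_rpow (p := 1) (s := p - 1) (by linarith) one_pos hA
    simpa using this
  have h2 := ofReal_integral_eq_lintegral_ofReal h1 ((ae_restrict_iff' measurableSet_Ioi).2
    (Eventually.of_forall fun x hx => mul_nonneg (rpow_nonneg (le_of_lt hx) _) (exp_pos _).le))
  simp only [neg_mul] at h2
  rw [integral_rpow_mul_exp_neg_mul_Ioi hp hA] at h2
  rw [← ENNReal.ofReal_mul hG.le, rpow_neg hA.le, ← inv_rpow hA.le, ← one_div, mul_comm, h2]
  refine setLIntegral_congr_fun measurableSet_Ioi fun τ hτ => ?_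
  rw [← ENNReal.ofReal_mul (rpow_nonneg (le_of_lt hτ) _), mul_comm A]

theorem gamma_rep {b : ι → Prop} {a : ι → ℝ} (h : ∀ i, Adm (b i) (a i)) (k : ι)
    (f : {i // i ≠ k} → ℝ → ℝ≥0∞) (hf : ∀ i, Measurable (f i)) {p : ℝ} (hp : 0 < p) (ξ : ι → ℝ)
    (hξ : ξ k ≠ 0) :
    ENNReal.ofReal (Real.Gamma p) *
      ∫⁻ z, (∏ i, f i (z.1 i)) * ENNReal.ofReal (AA (ext0 k z.1) z.2 ξ ^ (-p)) ∂(MM b a k)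
      = ∫⁻ τ in Set.Ioi (0:ℝ), ENNReal.ofReal (τ ^ (p - 1)) *
        (ENNReal.ofReal (exp (-(τ * ξ k ^ 2))) * ∏ i : {i // i ≠ k}, ∫⁻ y, f i y *
        ∫⁻ u, ENNReal.ofReal (exp (-(τ * ((y - ξ i) ^ 2 + 4 * y * ξ i * u)))) ∂(kap (b i) (a i))
          ∂(lam (b i) (a i))) := by
  have hfm : Measurable (fun z : ({i // i ≠ k} → ℝ) × (ι → ℝ) => ∏ i, f i (z.1 i)) := by
    refine Finset.measurable_prod _ fun i _ => (hf i).comp (by fun_prop)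
  have hA := meas_AA k ξ
  simp_rw [← factor h k f hf]
  have hm1 : ∀ τ : ℝ, Measurable (fun z : ({i // i ≠ k} → ℝ) × (ι → ℝ) =>
      (∏ i, f i (z.1 i)) * ENNReal.ofReal (exp (-(τ * AA (ext0 k z.1) z.2 ξ)))) := fun τ =>
    hfm.mul (by fun_prop)
  simp_rw [← lintegral_const_mul _ (hm1 _)]
  rw [← lintegral_const_mul' _ _ ENNReal.ofReal_ne_top, lintegral_lintegral_swap]
  · refine lintegral_congr_ae ?_
    filter_upwards [MM_ae] with z hz
    have hpos : 0 < AA (ext0 k z.1) z.2 ξ :=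
      lt_of_lt_of_le (by positivity) (AA_ge k z.1 z.2 ξ (fun i => ⟨(hz.2 i).1, (hz.2 i).2.1⟩))
    rw [mul_left_comm, ← lint_gamma hpos hp, ← lintegral_const_mul _ (by fun_prop)]
    refine lintegral_congr fun τ => ?_
    ring
  · refine Measurable.aemeasurable ?_
    unfold Function.uncurry
    refine Measurable.mul (by fun_prop) (Measurable.mul (hfm.comp measurable_snd) ?_)
    have : Measurable (fun p : ℝ × (({i // i ≠ k} → ℝ) × (ι → ℝ)) => AA (ext0 k p.2.1) p.2.2 ξ) :=
      hA.comp measurable_snd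
    fun_prop

/-- total mass identity -/
theorem total_mass {b : ι → Prop} {a : ι → ℝ} (h : ∀ i, Adm (b i) (a i)) (k : ι) {β : ℝ}
    (hβ0 : 0 < β) (hβ : β + 1 = ∑ i, (a i + 1 / 2)) (ξ : ι → ℝ) (hξ : 0 < ξ k) :
    ENNReal.ofReal (Real.Gamma (β + 1)) *
      ∫⁻ z, ENNReal.ofReal (AA (ext0 k z.1) z.2 ξ ^ (-(β + 1))) ∂(MM b a k)
      = ENNReal.ofReal ((∏ i : {i // i ≠ k}, Cm (b i) (a i)) * (Real.Gamma (a k + 1 / 2) *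
        ξ k ^ (-(2 * a k + 1)))) := by
  have g := gamma_rep h k (fun _ _ => 1) (fun _ => measurable_const) (show 0 < β + 1 by linarith) ξ hξ.ne'
  simp only [Finset.prod_const_one, one_mul] at g
  rw [g]
  have hC : 0 ≤ ∏ i : {i // i ≠ k}, Cm (b i) (a i) := Finset.prod_nonneg fun i _ => Cm_nonneg (h i)
  have hak := (h k).nonneg
  have e : ξ k ^ (-(2 * a k + 1)) = (ξ k ^ 2) ^ (-(a k + 1 / 2)) := by
    rw [← rpow_natCast, ← rpow_mul hξ.le]; congr 1; push_cast; ring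
  rw [e, ENNReal.ofReal_mul hC, ENNReal.ofReal_mul (Real.Gamma_pos_of_pos (by linarith)).le,
    ← lint_gamma (by positivity) (by linarith), ← lintegral_const_mul _ (by fun_prop)]
  refine setLIntegral_congr_fun measurableSet_Ioi fun τ hτ => ?_
  have hτ : 0 < τ := hτ
  simp_rw [mass1 (h _) hτ]
  rw [← ENNReal.ofReal_prod_of_nonneg (fun i _ => mul_nonneg (Cm_nonneg (h _)) (rpow_nonneg hτ.le _)),
    Finset.prod_mul_distrib, ← rpow_sum_of_pos hτ, ENNReal.ofReal_mul hC]
  have : ENNReal.ofReal (τ ^ (a k + 1 / 2 - 1)) = ENNReal.ofReal (τ ^ (β + 1 - 1)) *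
      ENNReal.ofReal (τ ^ (∑ i : {i // i ≠ k}, (-a i - 1 / 2))) := by
    rw [← ENNReal.ofReal_mul (by positivity), ← rpow_add hτ, hβ, Fintype.sum_eq_add_sum_subtype_ne _ k]
    congr 2
    have : ∑ i : {i // i ≠ k}, (-a i - 1 / 2) = - ∑ i : {i // i ≠ k}, (a i + 1 / 2) := by
      rw [← Finset.sum_neg_distrib]; exact Finset.sum_congr rfl fun i _ => by ring
    rw [this]; ring
  rw [this]; ring

/-- the weighted potential is expressed by `Psi` -/
theorem psi_rep {b : ι → Prop} {a : ι → ℝ} (h : ∀ i, Adm (b i) (a i)) (k : ι) {β : ℝ}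
    (hβ0 : 0 < β) (hβ : β + 1 = ∑ i, (a i + 1 / 2)) (ξ : ι → ℝ) (hξ : 0 < ξ k) (j : {i // i ≠ k})
    (s : ℝ) :
    ENNReal.ofReal (Real.Gamma β) *
      ∫⁻ z, ENNReal.ofReal ((1 + z.1 j ^ 2) ^ (-s / 2)) *
        ENNReal.ofReal (AA (ext0 k z.1) z.2 ξ ^ (-β)) ∂(MM b a k)
      = ENNReal.ofReal (∏ i : {i // i ≠ j}, Cm (b i) (a i)) * Psi (b j) (a j) s (a k) (ξ k) (ξ j) := by
  have g := gamma_rep h k (fun i y => if i = j then ENNReal.ofReal ((1 + y ^ 2) ^ (-s / 2)) else 1)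
    (fun i => by by_cases hi : i = j
                 · simp only [hi, if_true]; fun_prop
                 · simp only [hi, if_false]; fun_prop) hβ0 ξ hξ.ne'
  simp only [Finset.prod_ite_eq', Finset.mem_univ, if_true] at g
  rw [g]
  have hC : 0 ≤ ∏ i : {i // i ≠ j}, Cm (b i) (a i) := Finset.prod_nonneg fun i _ => Cm_nonneg (h i)
  unfold Psi
  rw [← lintegral_const_mul' _ _ ENNReal.ofReal_ne_top]
  refine setLIntegral_congr_fun measurableSet_Ioi fun τ hτ => ?_
  have hτ : 0 < τ := hτ
  rw [Fintype.prod_eq_mul_prod_subtype_ne _ j]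
  simp only [if_true]
  have e2 : ∀ i : {i // i ≠ j}, (i : {i // i ≠ k}) ≠ j := fun i => i.2
  simp only [if_neg (e2 _), one_mul]
  simp_rw [mass1 (h _) hτ]
  rw [← ENNReal.ofReal_prod_of_nonneg (fun i _ => mul_nonneg (Cm_nonneg (h _)) (rpow_nonneg hτ.le _)),
    Finset.prod_mul_distrib, ← rpow_sum_of_pos hτ, ENNReal.ofReal_mul hC]
  have : ENNReal.ofReal (τ ^ (a k + a j - 1)) = ENNReal.ofReal (τ ^ (β - 1)) *
      ENNReal.ofReal (τ ^ (∑ i : {i // i ≠ j}, (-a i - 1 / 2))) := by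
    rw [← ENNReal.ofReal_mul (by positivity), ← rpow_add hτ]
    congr 2
    have e3 : ∑ i : {i // i ≠ j}, (-a i - 1 / 2) = - ∑ i : {i // i ≠ j}, (a i + 1 / 2) := by
      rw [← Finset.sum_neg_distrib]; exact Finset.sum_congr rfl fun i _ => by ring
    rw [Fintype.sum_eq_add_sum_subtype_ne _ k, Fintype.sum_eq_add_sum_subtype_ne _ j] at hβ
    rw [e3]; linarith
  rw [ENNReal.ofReal_mul (by positivity), this, gg]; ring

end setup

section conv
variable {ι : Type*} [Fintype ι] [DecidableEq ι]
set_option linter.unusedSectionVars false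

theorem lauricella_beta {κ : Type*} [Fintype κ] (β : ℝ) (a X : κ → ℝ) (ha : ∀ i, 0 < a i) :
    lauricellaFA β a (fun i => 2 * a i) X
      = ∫ u, (1 - ∑ i, X i * u i) ^ (-β)
        ∂(Measure.pi fun i => ProbabilityTheory.betaMeasure (a i) (a i)) := by
  have hbm : ∀ i, Measurable (ProbabilityTheory.betaPDF (a i) (a i)) := fun i => by
    unfold ProbabilityTheory.betaPDF; fun_prop
  have := fun i => ProbabilityTheory.isProbabilityMeasureBeta (ha i) (ha i)
  unfold ProbabilityTheory.betaMeasure at this ⊢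
  have hmm : Measurable (fun x : κ → ℝ => ∏ i, ProbabilityTheory.betaPDF (a i) (a i) (x i)) :=
    Finset.measurable_prod _ fun i _ => (hbm i).comp (measurable_pi_apply i)
  rw [pi_wd _ _ hbm, integral_withDensity_eq_integral_toReal_smul hmm
    (Eventually.of_forall fun u => ENNReal.prod_lt_top fun i _ => ENNReal.ofReal_lt_top)]
  unfold lauricellaFA
  have hS : MeasurableSet (Set.univ.pi fun _ : κ => Set.Icc (0:ℝ) 1) :=
    MeasurableSet.univ_pi fun _ => measurableSet_Icc
  rw [← integral_const_mul, ← integral_indicator hS, ← volume_pi]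
  refine integral_congr_ae ?_
  have hne : ∀ᵐ u : κ → ℝ, ∀ i, u i ≠ 0 ∧ u i ≠ 1 := by
    rw [ae_all_iff]
    intro i
    have h0 : ∀ᵐ y : ℝ, y ≠ 0 ∧ y ≠ 1 := by
      refine Filter.Eventually.and ?_ ?_ <;> simp [ae_iff]
    exact (Measure.quasiMeasurePreserving_eval (fun _ : κ => (volume : Measure ℝ)) i).ae h0
  filter_upwards [hne] with u hu
  rw [ENNReal.toReal_prod]
  by_cases hmem : u ∈ Set.univ.pi fun _ : κ => Set.Icc (0:ℝ) 1
  · rw [Set.indicator_of_mem hmem, ← mul_assoc, ← Finset.prod_mul_distrib, smul_eq_mul]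
    congr 1
    refine Finset.prod_congr rfl fun i _ => ?_
    have h1 := hmem i trivial
    have h2 : 0 < u i := lt_of_le_of_ne h1.1 (Ne.symm (hu i).1)
    have h3 : u i < 1 := lt_of_le_of_ne h1.2 (hu i).2
    have h4 : 0 < 1 - u i := by linarith
    have hB := ProbabilityTheory.beta_pos (ha i) (ha i)
    rw [ProbabilityTheory.betaPDF_of_pos_lt_one h2 h3, ENNReal.toReal_ofReal (by positivity),
      ProbabilityTheory.beta, show 2 * a i - a i = a i by ring, two_mul, one_div_div]
    ring
  · rw [Set.indicator_of_notMem hmem]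
    have : ∃ i, u i ∉ Set.Icc (0:ℝ) 1 := by
      by_contra hh; push Not at hh; exact hmem fun i _ => hh i
    obtain ⟨i, hi⟩ := this
    have hz : ProbabilityTheory.betaPDF (a i) (a i) (u i) = 0 := by
      rw [ProbabilityTheory.betaPDF_eq, if_neg (fun h => hi ⟨h.1.le, h.2.le⟩)]; simp
    rw [Finset.prod_eq_zero (Finset.mem_univ i) (by rw [hz]; simp), zero_smul]

theorem q_conv {b : ι → Prop} [DecidablePred b] {a : ι → ℝ} (h : ∀ i, Adm (b i) (a i)) (β : ℝ)
    (x ξ : ι → ℝ) (hx : ∀ i, b i → 0 ≤ x i) (hξ : ∀ i, b i → 0 ≤ ξ i)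
    (hr : 0 < ∑ i, (x i - ξ i) ^ 2) :
    (∑ i, (x i - ξ i) ^ 2) ^ (-β) *
        lauricellaFA β (fun j : {i // b i} => a j.1) (fun j => 2 * a j.1)
          (fun j => -4 * x j.1 * ξ j.1 / ∑ i, (x i - ξ i) ^ 2)
      = ∫ u, AA x u ξ ^ (-β) ∂(KP b a) := by
  have hp := fun i => kap_prob (h i)
  set r := ∑ i, (x i - ξ i) ^ 2 with hrd
  rw [lauricella_beta β (fun j : {i // b i} => a j.1) _ (fun j => ((h j).1 j.2).1)]
  have hpi : (Measure.pi fun j : {i // b i} => ProbabilityTheory.betaMeasure (a j) (a j))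
      = Measure.pi fun j : {i // b i} => kap (b j) (a j) := by
    congr 1; funext j; rw [kap, if_pos j.2]
  have hmp := pi_subtype (fun i => kap (b i) (a i)) b
  rw [hpi, ← hmp.map_eq, integral_map hmp.aemeasurable
    (by exact (by fun_prop : Measurable _).aestronglyMeasurable), ← integral_const_mul]
  change ∫ u, _ ∂(KP b a) = _
  refine integral_congr_ae ?_
  filter_upwards [KP_ae] with u hu
  have hw : 0 ≤ 1 - ∑ i : {i // b i}, -4 * x i * ξ i / r * u i := by
    have : ∑ i : {i // b i}, -4 * x i * ξ i / r * u i ≤ 0 := by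
      refine Finset.sum_nonpos fun i _ => ?_
      have h1 := hx i i.2
      have h2 := hξ i i.2
      have h3 := (hu i).1
      have : 0 ≤ 4 * x i * ξ i / r * u i := by positivity
      have e : -4 * x i * ξ i / r * u i = -(4 * x i * ξ i / r * u i) := by ring
      rw [e]; linarith
    linarith
  rw [← mul_rpow hr.le hw]
  congr 1
  rw [mul_sub, Finset.mul_sum]
  have e : ∀ i : {i // b i}, r * (-4 * x i * ξ i / r * u i) = -(4 * x i * ξ i * u i) := fun i => by
    field_simp
  simp_rw [e]
  rw [Finset.sum_neg_distrib, AA, Finset.sum_add_distrib, mul_one, sub_neg_eq_add, ← hrd]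
  congr 1
  rw [← Fintype.sum_subtype_add_sum_subtype b (fun i => 4 * x i * ξ i * u i)]
  have : ∑ i : {i // ¬ b i}, 4 * x i * ξ i * u i = 0 :=
    Finset.sum_eq_zero fun i _ => by rw [(hu i).2.2 i.2, mul_zero]
  rw [this, add_zero]

theorem LP_integral (b : ι → Prop) (a : ι → ℝ) (k : ι) (g : ({i // i ≠ k} → ℝ) → ℝ)
    (h : ∀ i, Adm (b i) (a i)) :
    ∫ y, g y ∂(LP b a k) = ∫ y in {y : {i // i ≠ k} → ℝ | ∀ i, b i.1 → 0 < y i},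
      (∏ i, y i ^ (2 * a i)) * g y := by
  have hS : {y : {i // i ≠ k} → ℝ | ∀ i, b i.1 → 0 < y i}
      = Set.univ.pi fun i : {i // i ≠ k} => {y : ℝ | b i → 0 < y} := by
    ext y; simp
  have hSm : MeasurableSet {y : {i // i ≠ k} → ℝ | ∀ i, b i.1 → 0 < y i} := by
    rw [hS]; exact MeasurableSet.univ_pi fun i => meas_T _
  have : ∀ i : {i // i ≠ k}, SigmaFinite ((volume.restrict {y : ℝ | b i → 0 < y}).withDensity
    (fun y => ENNReal.ofReal (y ^ (2 * a i)))) := fun i => lam_sf (b i) (a i)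
  have e1 : LP b a k = (volume.restrict {y : {i // i ≠ k} → ℝ | ∀ i, b i.1 → 0 < y i}).withDensity
      (fun y => ∏ i : {i // i ≠ k}, ENNReal.ofReal (y i ^ (2 * a i))) := by
    unfold LP lam
    rw [pi_wd (fun i : {i // i ≠ k} => volume.restrict {y : ℝ | b i → 0 < y})
      (fun i y => ENNReal.ofReal (y ^ (2 * a i))) (fun i => by fun_prop), hS, volume_pi,
      Measure.restrict_pi_pi]
  rw [e1, integral_withDensity_eq_integral_toReal_smul (by fun_prop)
    (Eventually.of_forall fun u => ENNReal.prod_lt_top fun i _ => ENNReal.ofReal_lt_top)]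
  refine setIntegral_congr_fun hSm fun y hy => ?_
  simp only [ENNReal.toReal_prod, smul_eq_mul]
  congr 1
  refine Finset.prod_congr rfl fun i _ => ENNReal.toReal_ofReal ?_
  by_cases hb : b i
  · exact rpow_nonneg (hy i hb).le _
  · simp [(h i).2 hb]

theorem prod_conv {b : ι → Prop} [DecidablePred b] {a : ι → ℝ} (h : ∀ i, Adm (b i) (a i)) (k : ι)
    (y : {i // i ≠ k} → ℝ) :
    ∏ j : {j // b j ∧ j ≠ k}, y ⟨j.1, j.2.2⟩ ^ (2 * a j.1) = ∏ i, y i ^ (2 * a i) := by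
  have e1 : ∏ j : {j // b j ∧ j ≠ k}, y ⟨j.1, j.2.2⟩ ^ (2 * a j.1)
      = ∏ j : {j // b j ∧ j ≠ k}, (fun i => ext0 k y i ^ (2 * a i)) j :=
    Finset.prod_congr rfl fun j _ => by simp [ext0, j.2.2]
  have e2 : ∏ i : {i // i ≠ k}, y i ^ (2 * a i)
      = ∏ j : {i // i ≠ k}, (fun i => ext0 k y i ^ (2 * a i)) j :=
    Finset.prod_congr rfl fun j _ => by rw [← ext0_ne k y j]
  rw [e1, e2, ← Finset.prod_subtype (Finset.univ.filter fun j => b j ∧ j ≠ k) (by simp)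
      (fun i => ext0 k y i ^ (2 * a i)),
    ← Finset.prod_subtype (Finset.univ.filter fun j => j ≠ k) (by simp)
      (fun i => ext0 k y i ^ (2 * a i))]
  refine Finset.prod_subset (fun i hi => by simp at hi ⊢; exact hi.2) fun i hi hni => ?_
  have : ¬ b i := fun hb => hni (by simp at hi ⊢; exact ⟨hb, hi⟩)
  simp [(h i).2 this]

theorem pot_conv {b : ι → Prop} [DecidablePred b] {a : ι → ℝ} (h : ∀ i, Adm (b i) (a i)) (k : ι)
    (hk : b k) (β γ : ℝ) (ν : ({i // i ≠ k} → ℝ) → ℝ) (ξ : ι → ℝ) (hξ : ∀ i, b i → 0 < ξ i) :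
    ∫ y in {y : {i // i ≠ k} → ℝ | ∀ i, b i.1 → 0 < y i},
      (∏ j : {j // b j ∧ j ≠ k}, y ⟨j.1, j.2.2⟩ ^ (2 * a j.1)) * ν y *
      (γ * (∑ i, (ext0 k y i - ξ i) ^ 2) ^ (-β) *
        lauricellaFA β (fun j : {i // b i} => a j.1) (fun j => 2 * a j.1)
          (fun j => -4 * ext0 k y j.1 * ξ j.1 / ∑ i, (ext0 k y i - ξ i) ^ 2))
      = γ * ∫ y, ∫ u, ν y * AA (ext0 k y) u ξ ^ (-β) ∂(KP b a) ∂(LP b a k) := by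
  rw [LP_integral _ _ _ _ h, ← integral_const_mul]
  have hSm : MeasurableSet {y : {i // i ≠ k} → ℝ | ∀ i, b i.1 → 0 < y i} := by
    have hS : {y : {i // i ≠ k} → ℝ | ∀ i, b i.1 → 0 < y i}
        = Set.univ.pi fun i : {i // i ≠ k} => {y : ℝ | b i → 0 < y} := by
      ext y; simp
    rw [hS]; exact MeasurableSet.univ_pi fun i => meas_T _
  refine setIntegral_congr_fun hSm fun y hy => ?_
  rw [prod_conv h, integral_const_mul, mul_assoc γ, q_conv h β (ext0 k y) ξ _ (fun i hi => (hξ i hi).le) _]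
  · ring
  · intro i hi
    by_cases hik : i = k
    · rw [hik, ext0_self]
    · rw [ext0_ne k y ⟨i, hik⟩]; exact (hy ⟨i, hik⟩ hi).le
  · refine lt_of_lt_of_le ?_ (Finset.single_le_sum (f := fun i => (ext0 k y i - ξ i) ^ 2)
      (fun i _ => sq_nonneg _) (Finset.mem_univ k))
    simp only [ext0_self]
    have := hξ k hk
    rw [zero_sub, neg_sq]; positivity

end conv

section derivs
variable {Z : Type*} [MeasurableSpace Z] {μ : Measure Z}

theorem pot_bd1 {p q Q G δ d : ℝ} (hp : 0 < p) (hδ : 0 < δ) (hG : 0 < G) (hGQ : G ≤ Q) (hd : d ^ 2 ≤ Q)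
    (hδQ : δ ^ 2 ≤ Q) (hq : q = -p - 1) : |d * Q ^ q| ≤ δ⁻¹ * G ^ (-p) := by
  have hQ : 0 < Q := lt_of_lt_of_le hG hGQ
  have h1 : |d| ≤ δ⁻¹ * Q := by
    rw [inv_mul_eq_div, le_div_iff₀ hδ]
    nlinarith [sq_nonneg (|d| - δ), sq_abs d]
  have h2 : Q ^ (-p) ≤ G ^ (-p) := rpow_le_rpow_of_nonpos hG hGQ (by linarith)
  have h3 : Q ^ q = Q ^ (-p) / Q := by rw [hq, rpow_sub_one hQ.ne']
  rw [abs_mul, abs_of_pos (rpow_pos_of_pos hQ _), h3]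
  calc |d| * (Q ^ (-p) / Q) ≤ (δ⁻¹ * Q) * (Q ^ (-p) / Q) :=
        mul_le_mul_of_nonneg_right h1 (by positivity)
    _ = δ⁻¹ * Q ^ (-p) := by field_simp
    _ ≤ _ := mul_le_mul_of_nonneg_left h2 (by positivity)

theorem pot_bd0 {p q Q G δ : ℝ} (hp : 0 < p) (hδ : 0 < δ) (hG : 0 < G) (hGQ : G ≤ Q)
    (hδQ : δ ^ 2 ≤ Q) (hq : q = -p - 1) : |Q ^ q| ≤ (δ ^ 2)⁻¹ * G ^ (-p) := by
  have hQ : 0 < Q := lt_of_lt_of_le hG hGQ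
  have h2 : Q ^ (-p) ≤ G ^ (-p) := rpow_le_rpow_of_nonpos hG hGQ (by linarith)
  have h3 : Q ^ q = Q ^ (-p) / Q := by rw [hq, rpow_sub_one hQ.ne']
  rw [abs_of_pos (rpow_pos_of_pos hQ _), h3, div_eq_inv_mul]
  exact mul_le_mul (inv_anti₀ (by positivity) hδQ) h2 (by positivity) (by positivity)

theorem pot_bd2 {p q Q G δ d : ℝ} (hp : 0 < p) (hδ : 0 < δ) (hG : 0 < G) (hGQ : G ≤ Q) (hd : d ^ 2 ≤ Q)
    (hδQ : δ ^ 2 ≤ Q) (hq : q = -p - 2) : |d ^ 2 * Q ^ q| ≤ (δ ^ 2)⁻¹ * G ^ (-p) := by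
  have hQ : 0 < Q := lt_of_lt_of_le hG hGQ
  refine le_trans ?_ (pot_bd0 hp hδ hG hGQ hδQ rfl)
  have h3 : Q ^ q = Q ^ (-p - 1) / Q := by
    rw [← rpow_sub_one hQ.ne', hq]; congr 1; ring
  rw [abs_mul, h3, abs_div, abs_of_pos hQ, abs_of_nonneg (sq_nonneg d), mul_div_assoc', div_le_iff₀ hQ,
    mul_comm]
  exact mul_le_mul_of_nonneg_left hd (abs_nonneg _)

/-- derivatives of potentials under the integral sign -/
theorem pot_deriv {f B C G : Z → ℝ} {p δ t0 : ℝ} {s : Set ℝ} (hs : s ∈ 𝓝 t0) (hp : 0 < p) (hδ : 0 < δ)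
    (hf : AEStronglyMeasurable f μ) (hB : Measurable B) (hC : Measurable C)
    (hdom : ∀ᵐ z ∂μ, 0 ≤ C z ∧ δ ^ 2 ≤ G z ∧ ∀ t ∈ s, G z ≤ (t - B z) ^ 2 + C z)
    (hIntg : Integrable (fun z => f z * G z ^ (-p)) μ) :
    Integrable (fun z => f z * ((t0 - B z) ^ 2 + C z) ^ (-p)) μ ∧
    Integrable (fun z => f z * ((t0 - B z) * ((t0 - B z) ^ 2 + C z) ^ (-p - 1))) μ ∧
    Integrable (fun z => f z * (((t0 - B z) ^ 2 + C z) ^ (-p - 1))) μ ∧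
    Integrable (fun z => f z * ((t0 - B z) ^ 2 * ((t0 - B z) ^ 2 + C z) ^ (-p - 2))) μ ∧
    HasDerivAt (fun t => ∫ z, f z * ((t - B z) ^ 2 + C z) ^ (-p) ∂μ)
      (∫ z, f z * (-2 * p * ((t0 - B z) * ((t0 - B z) ^ 2 + C z) ^ (-p - 1))) ∂μ) t0 ∧
    HasDerivAt (fun t => ∫ z, f z * (-2 * p * ((t - B z) * ((t - B z) ^ 2 + C z) ^ (-p - 1))) ∂μ)
      (∫ z, f z * (4 * p * (p + 1) * ((t0 - B z) ^ 2 * ((t0 - B z) ^ 2 + C z) ^ (-p - 2)) -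
        2 * p * ((t0 - B z) ^ 2 + C z) ^ (-p - 1)) ∂μ) t0 := by
  have ht0 := mem_of_mem_nhds hs
  have hm : ∀ (q : ℝ) (n : ℕ) (t : ℝ), AEStronglyMeasurable
      (fun z => f z * ((t - B z) ^ n * ((t - B z) ^ 2 + C z) ^ q)) μ := fun q n t =>
    hf.mul (by fun_prop : Measurable _).aestronglyMeasurable
  have hm0 : ∀ (q : ℝ) (t : ℝ), AEStronglyMeasurable
      (fun z => f z * (((t - B z) ^ 2 + C z) ^ q)) μ := fun q t => by simpa using hm q 0 t
  have hm1 : ∀ (q : ℝ) (t : ℝ), AEStronglyMeasurable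
      (fun z => f z * ((t - B z) * ((t - B z) ^ 2 + C z) ^ q)) μ := fun q t => by simpa using hm q 1 t
  have hi : Integrable (fun z => |f z| * G z ^ (-p)) μ := by
    refine hIntg.norm.congr ?_
    filter_upwards [hdom] with z hz
    have : 0 < G z := lt_of_lt_of_le (by positivity) hz.2.1
    rw [norm_mul, norm_eq_abs, norm_eq_abs, abs_of_pos (rpow_pos_of_pos this _)]
  have i0 : Integrable (fun z => f z * ((t0 - B z) ^ 2 + C z) ^ (-p)) μ := by
    refine hi.mono' (hm0 _ _) ?_
    filter_upwards [hdom] with z hz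
    have hG : 0 < G z := lt_of_lt_of_le (by positivity) hz.2.1
    have hGQ := hz.2.2 t0 ht0
    have hQ := lt_of_lt_of_le hG hGQ
    rw [norm_mul, norm_eq_abs, norm_eq_abs, abs_of_pos (rpow_pos_of_pos hQ _)]
    exact mul_le_mul_of_nonneg_left (rpow_le_rpow_of_nonpos hG hGQ (by linarith)) (abs_nonneg _)
  have i1 : Integrable (fun z => f z * ((t0 - B z) * ((t0 - B z) ^ 2 + C z) ^ (-p - 1))) μ := by
    refine (hi.const_mul δ⁻¹).mono' (hm1 _ _) ?_
    filter_upwards [hdom] with z hz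
    have hG : 0 < G z := lt_of_lt_of_le (by positivity) hz.2.1
    have hGQ := hz.2.2 t0 ht0
    rw [norm_mul, norm_eq_abs, norm_eq_abs, mul_left_comm]
    exact mul_le_mul_of_nonneg_left (pot_bd1 hp hδ hG hGQ (by linarith [hz.1]) (hz.2.1.trans hGQ) rfl)
      (abs_nonneg _)
  have i2 : Integrable (fun z => f z * (((t0 - B z) ^ 2 + C z) ^ (-p - 1))) μ := by
    refine (hi.const_mul (δ ^ 2)⁻¹).mono' (hm0 _ _) ?_
    filter_upwards [hdom] with z hz
    have hG : 0 < G z := lt_of_lt_of_le (by positivity) hz.2.1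
    have hGQ := hz.2.2 t0 ht0
    rw [norm_mul, norm_eq_abs, norm_eq_abs, mul_left_comm]
    exact mul_le_mul_of_nonneg_left (pot_bd0 hp hδ hG hGQ (hz.2.1.trans hGQ) rfl)
      (abs_nonneg _)
  have i3 : Integrable (fun z => f z * ((t0 - B z) ^ 2 * ((t0 - B z) ^ 2 + C z) ^ (-p - 2))) μ := by
    refine (hi.const_mul (δ ^ 2)⁻¹).mono' (hm _ _ _) ?_
    filter_upwards [hdom] with z hz
    have hG : 0 < G z := lt_of_lt_of_le (by positivity) hz.2.1
    have hGQ := hz.2.2 t0 ht0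
    rw [norm_mul, norm_eq_abs, norm_eq_abs, mul_left_comm]
    exact mul_le_mul_of_nonneg_left (pot_bd2 hp hδ hG hGQ (by linarith [hz.1]) (hz.2.1.trans hGQ) rfl)
      (abs_nonneg _)
  refine ⟨i0, i1, i2, i3, ?_, ?_⟩
  · refine (hasDerivAt_integral_of_dominated_loc_of_deriv_le (μ := μ)
      (F := fun t z => f z * ((t - B z) ^ 2 + C z) ^ (-p))
      (F' := fun t z => f z * (-2 * p * ((t - B z) * ((t - B z) ^ 2 + C z) ^ (-p - 1))))
      (bound := fun z => 2 * p * δ⁻¹ * (|f z| * G z ^ (-p))) hs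
      (Eventually.of_forall fun t => hm0 _ t) i0 ?_ ?_ (hi.const_mul _) ?_).2
    · have := (hm1 (-p - 1) t0).const_mul (-2 * p)
      refine this.congr (Eventually.of_forall fun z => ?_)
      simp only [smul_eq_mul]; ring
    · filter_upwards [hdom] with z hz t ht
      have hG : 0 < G z := lt_of_lt_of_le (by positivity) hz.2.1
      have hGQ := hz.2.2 t ht
      have := pot_bd1 (d := t - B z) hp hδ hG hGQ (by linarith [hz.1]) (hz.2.1.trans hGQ) rfl
      rw [norm_mul, norm_mul, norm_eq_abs, norm_eq_abs, norm_eq_abs, abs_mul, abs_of_pos hp]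
      simp only [abs_neg, Nat.abs_ofNat]
      calc |f z| * (2 * p * _) ≤ |f z| * (2 * p * (δ⁻¹ * G z ^ (-p))) := by gcongr
        _ = _ := by ring
    · filter_upwards [hdom] with z hz t ht
      have hG : 0 < G z := lt_of_lt_of_le (by positivity) hz.2.1
      have hQ := lt_of_lt_of_le hG (hz.2.2 t ht)
      have d1 : HasDerivAt (fun t => (t - B z) ^ 2 + C z) (2 * (t - B z)) t := by
        have := (((hasDerivAt_id t).sub_const (B z)).pow 2).add_const (C z)
        simpa using this
      have := (d1.rpow_const (p := -p) (Or.inl hQ.ne')).const_mul (f z)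
      convert! this using 1
      ring
  · refine (hasDerivAt_integral_of_dominated_loc_of_deriv_le (μ := μ)
      (F := fun t z => f z * (-2 * p * ((t - B z) * ((t - B z) ^ 2 + C z) ^ (-p - 1))))
      (F' := fun t z => f z * (4 * p * (p + 1) * ((t - B z) ^ 2 * ((t - B z) ^ 2 + C z) ^ (-p - 2)) -
        2 * p * ((t - B z) ^ 2 + C z) ^ (-p - 1)))
      (bound := fun z => (4 * p * (p + 1) + 2 * p) * (δ ^ 2)⁻¹ * (|f z| * G z ^ (-p))) hs
      (Eventually.of_forall fun t => ?_) ?_ ?_ ?_ (hi.const_mul _) ?_).2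
    · have := (hm1 (-p - 1) t).const_mul (-2 * p)
      refine this.congr (Eventually.of_forall fun z => ?_)
      simp only [smul_eq_mul]; ring
    · refine (i1.const_mul (-2 * p)).congr (Eventually.of_forall fun z => ?_)
      simp only; ring
    · exact hf.mul (by fun_prop : Measurable _).aestronglyMeasurable
    · filter_upwards [hdom] with z hz t ht
      have hG : 0 < G z := lt_of_lt_of_le (by positivity) hz.2.1
      have hGQ := hz.2.2 t ht
      have b2 := pot_bd2 (d := t - B z) hp hδ hG hGQ (by linarith [hz.1]) (hz.2.1.trans hGQ) rfl
      have b0 := pot_bd0 hp hδ hG hGQ (hz.2.1.trans hGQ) rfl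
      rw [norm_mul, norm_eq_abs, norm_eq_abs]
      set X := (t - B z) ^ 2 * ((t - B z) ^ 2 + C z) ^ (-p - 2)
      set Y := ((t - B z) ^ 2 + C z) ^ (-p - 1)
      have : |4 * p * (p + 1) * X - 2 * p * Y| ≤ 4 * p * (p + 1) * |X| + 2 * p * |Y| := by
        refine (abs_sub _ _).trans ?_
        rw [abs_mul, abs_mul _ Y, abs_of_pos (by positivity : 0 < 4 * p * (p + 1)),
          abs_of_pos (by positivity : 0 < 2 * p)]
      calc |f z| * |4 * p * (p + 1) * X - 2 * p * Y|
          ≤ |f z| * (4 * p * (p + 1) * ((δ ^ 2)⁻¹ * G z ^ (-p)) + 2 * p * ((δ ^ 2)⁻¹ * G z ^ (-p))) := by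
            refine mul_le_mul_of_nonneg_left (this.trans ?_) (abs_nonneg _)
            gcongr
        _ = _ := by ring
    · filter_upwards [hdom] with z hz t ht
      have hG : 0 < G z := lt_of_lt_of_le (by positivity) hz.2.1
      have hQ := lt_of_lt_of_le hG (hz.2.2 t ht)
      have d0 : HasDerivAt (fun t => t - B z) 1 t := (hasDerivAt_id t).sub_const (B z)
      have d1 : HasDerivAt (fun t => (t - B z) ^ 2 + C z) (2 * (t - B z)) t := by
        have := (((hasDerivAt_id t).sub_const (B z)).pow 2).add_const (C z)
        simpa using this
      have := ((d0.mul (d1.rpow_const (p := -p - 1) (Or.inl hQ.ne'))).const_mul (-2 * p)).const_mul (f z)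
      convert! this using 1
      rw [show -p - 1 - 1 = -p - 2 by ring]
      ring
end derivs

section domin
variable {ι : Type*} [Fintype ι] [DecidableEq ι]
set_option linter.unusedSectionVars false

theorem LP_int {b : ι → Prop} {a : ι → ℝ} (h : ∀ i, Adm (b i) (a i)) (k : ι) {p : ℝ}
    (hD : 0 < ∑ i : {i // i ≠ k}, (1 + 2 * a i)) (hp : ∑ i : {i // i ≠ k}, (1 + 2 * a i) < p) :
    Integrable (fun y : {i // i ≠ k} → ℝ => (1 + ∑ i, y i ^ 2) ^ (-p / 2)) (LP b a k) := by
  set D := ∑ i : {i // i ≠ k}, (1 + 2 * a i) with hDd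
  have ha := fun i => (h i).nonneg
  have hIntg : Integrable (fun y : {i // i ≠ k} → ℝ => ∏ i, (1 + y i ^ 2) ^ (-(p * (1 + 2 * a i) / D) / 2))
      (LP b a k) := by
    unfold LP
    refine Integrable.fintype_prod (f := fun (i : {i // i ≠ k}) (y : ℝ) =>
      (1 + y ^ 2) ^ (-(p * (1 + 2 * a i) / D) / 2)) fun i => ?_
    refine lam_integrable (h i) ?_
    rw [lt_div_iff₀ hD]
    have := ha i
    nlinarith
  refine hIntg.mono' (by fun_prop : Measurable _).aestronglyMeasurable (Eventually.of_forall fun y => ?_)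
  have hw : 0 < 1 + ∑ i, y i ^ 2 := by positivity
  rw [norm_eq_abs, abs_of_pos (by positivity)]
  have e : -p / 2 = ∑ i : {i // i ≠ k}, (-(p * (1 + 2 * a i) / D) / 2) := by
    rw [← Finset.sum_div, Finset.sum_neg_distrib, ← Finset.sum_div, ← Finset.mul_sum, ← hDd]
    field_simp
  rw [e, rpow_sum_of_pos hw]
  refine Finset.prod_le_prod (fun i _ => by positivity) fun i _ => ?_
  refine rpow_le_rpow_of_nonpos (by positivity) ?_ ?_
  · have := Finset.single_le_sum (f := fun i => y i ^ 2) (fun i _ => sq_nonneg _) (Finset.mem_univ i)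
    simpa using this
  · have := ha i
    have : 0 ≤ p * (1 + 2 * a i) / D := by
      have : 0 < p := hD.trans hp
      positivity
    linarith

theorem r_low (k : ι) (y : {i // i ≠ k} → ℝ) (ξ : ι → ℝ) {δ R : ℝ} (hδ : 0 < δ)
    (hR : ∑ i, ξ i ^ 2 ≤ R) (hr : δ ^ 2 ≤ ∑ i, (ext0 k y i - ξ i) ^ 2) :
    1 + ∑ i, y i ^ 2 ≤ (2 + (1 + 2 * R) / δ ^ 2) * ∑ i, (ext0 k y i - ξ i) ^ 2 := by
  set r := ∑ i, (ext0 k y i - ξ i) ^ 2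
  have h1 : ∑ i, y i ^ 2 = ∑ i, ext0 k y i ^ 2 := by
    rw [Fintype.sum_eq_add_sum_subtype_ne _ k, ext0_self]
    simp_rw [ext0_ne]; simp
  have h2 : ∑ i, ext0 k y i ^ 2 ≤ 2 * r + 2 * ∑ i, ξ i ^ 2 := by
    rw [Finset.mul_sum, Finset.mul_sum, ← Finset.sum_add_distrib]
    refine Finset.sum_le_sum fun i _ => ?_
    nlinarith [sq_nonneg (ext0 k y i - 2 * ξ i)]
  have hR0 : 0 ≤ R := le_trans (Finset.sum_nonneg fun i _ => sq_nonneg _) hR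
  have h3 : (1 + 2 * R) ≤ (1 + 2 * R) / δ ^ 2 * r := by
    rw [div_mul_eq_mul_div, le_div_iff₀ (by positivity)]
    exact mul_le_mul_of_nonneg_left hr (by linarith)
  rw [h1, add_mul]; linarith

theorem AA_ge_r {b : ι → Prop} (k : ι) (y : {i // i ≠ k} → ℝ) (u ξ : ι → ℝ)
    (hy : ∀ i : {i // i ≠ k}, b i → 0 < y i) (hu : ∀ i, 0 ≤ u i ∧ u i ≤ 1 ∧ (¬ b i → u i = 0))
    (hξ : ∀ i, b i → 0 < ξ i) :
    ∑ i, (ext0 k y i - ξ i) ^ 2 ≤ AA (ext0 k y) u ξ := by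
  unfold AA
  refine Finset.sum_le_sum fun i _ => ?_
  by_cases hb : b i
  · have h1 : 0 ≤ ext0 k y i := by
      by_cases hik : i = k
      · rw [hik, ext0_self]
      · rw [ext0_ne k y ⟨i, hik⟩]; exact (hy ⟨i, hik⟩ hb).le
    have h2 := (hξ i hb).le
    have h3 := (hu i).1
    have : 0 ≤ 4 * ext0 k y i * ξ i * u i := by positivity
    linarith
  · rw [(hu i).2.2 hb]; linarith

theorem r_ge_k (k : ι) (y : {i // i ≠ k} → ℝ) (ξ : ι → ℝ) :
    ξ k ^ 2 ≤ ∑ i, (ext0 k y i - ξ i) ^ 2 := by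
  have := Finset.single_le_sum (f := fun i => (ext0 k y i - ξ i) ^ 2) (fun i _ => sq_nonneg _)
    (Finset.mem_univ k)
  simp only [ext0_self] at this
  nlinarith

/-- the hypotheses on a density -/
structure Dens (b : ι → Prop) (a : ι → ℝ) (β : ℝ) (k : ι) (c s : ℝ) (ν : ({i // i ≠ k} → ℝ) → ℝ) :
    Prop where
  adm : ∀ i, Adm (b i) (a i)
  bk : b k
  hβ0 : 0 < β
  hD : 0 < ∑ i : {i // i ≠ k}, (1 + 2 * a i)
  hs : ∑ i : {i // i ≠ k}, (1 + 2 * a i) < 2 * β + s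
  meas : AEStronglyMeasurable ν (LP b a k)
  bd : ∀ y : {i // i ≠ k} → ℝ, (∀ i, b i.1 → 0 < y i) → |ν y| ≤ c * (1 + ∑ i, y i ^ 2) ^ (-s / 2)

theorem Dens.measMM {b : ι → Prop} {a : ι → ℝ} {β : ℝ} {k : ι} {c s : ℝ} {ν : ({i // i ≠ k} → ℝ) → ℝ}
    (H : Dens b a β k c s ν) : AEStronglyMeasurable (fun z : _ × (ι → ℝ) => ν z.1) (MM b a k) := by
  unfold MM; exact H.meas.comp_fst

theorem Dens.int {b : ι → Prop} {a : ι → ℝ} {β : ℝ} {k : ι} {c s : ℝ} {ν : ({i // i ≠ k} → ℝ) → ℝ}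
    (H : Dens b a β k c s ν) {κ : ℝ} (hκ : 0 < κ) :
    Integrable (fun z => ν z.1 * (κ * (1 + ∑ i, z.1 i ^ 2)) ^ (-β)) (MM b a k) := by
  have := KP_prob H.adm
  have h1 : Integrable (fun z : ({i // i ≠ k} → ℝ) × (ι → ℝ) =>
      (1 + ∑ i, z.1 i ^ 2) ^ (-(2 * β + s) / 2)) (MM b a k) := by
    unfold MM
    exact (LP_int H.adm k H.hD H.hs).comp_fst (KP b a)
  refine (h1.const_mul (c * κ ^ (-β))).mono' (H.measMM.mul
    (by fun_prop : Measurable _).aestronglyMeasurable) ?_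
  filter_upwards [MM_ae] with z hz
  have hw : 0 < 1 + ∑ i, z.1 i ^ 2 := by positivity
  rw [norm_mul, norm_eq_abs, norm_eq_abs,
    abs_of_pos (show 0 < (κ * (1 + ∑ i, z.1 i ^ 2)) ^ (-β) by positivity), mul_rpow hκ.le hw.le]
  calc |ν z.1| * (κ ^ (-β) * (1 + ∑ i, z.1 i ^ 2) ^ (-β))
      ≤ (c * (1 + ∑ i, z.1 i ^ 2) ^ (-s / 2)) * (κ ^ (-β) * (1 + ∑ i, z.1 i ^ 2) ^ (-β)) :=
        mul_le_mul_of_nonneg_right (H.bd z.1 hz.1) (by positivity)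
    _ = _ := by
      rw [show -(2 * β + s) / 2 = -s / 2 + -β by ring, rpow_add hw]; ring

/-- center of the quadratic form in the `i`-th coordinate -/
def Bc (k i : ι) (z : ({i // i ≠ k} → ℝ) × (ι → ℝ)) : ℝ := ext0 k z.1 i * (1 - 2 * z.2 i)

def Cc (k i : ι) (ξ : ι → ℝ) (z : ({i // i ≠ k} → ℝ) × (ι → ℝ)) : ℝ :=
  4 * ext0 k z.1 i ^ 2 * (z.2 i * (1 - z.2 i)) +
    ∑ j : {j // j ≠ i}, ((ext0 k z.1 j - ξ j) ^ 2 + 4 * ext0 k z.1 j * ξ j * z.2 j)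

theorem AA_split (k i : ι) (ξ : ι → ℝ) (t : ℝ) (z : ({i // i ≠ k} → ℝ) × (ι → ℝ)) :
    AA (ext0 k z.1) z.2 (Function.update ξ i t) = (t - Bc k i z) ^ 2 + Cc k i ξ z := by
  unfold AA Bc Cc
  rw [Fintype.sum_eq_add_sum_subtype_ne _ i]
  have : ∀ j : {j // j ≠ i}, Function.update ξ i t j = ξ j := fun j => Function.update_of_ne j.2 _ _
  simp_rw [this, Function.update_self]
  ring

theorem AA_split' (k i : ι) (ξ : ι → ℝ) (z : ({i // i ≠ k} → ℝ) × (ι → ℝ)) :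
    AA (ext0 k z.1) z.2 ξ = (ξ i - Bc k i z) ^ 2 + Cc k i ξ z := by
  rw [← AA_split, Function.update_eq_self]

theorem meas_Bc (k i : ι) : Measurable (Bc k i) := by
  unfold Bc
  exact ((meas_ext0 k i).comp measurable_fst).mul (by fun_prop)

theorem meas_Cc (k i : ι) (ξ : ι → ℝ) : Measurable (Cc k i ξ) := by
  have : ∀ j, Measurable (fun z : ({i // i ≠ k} → ℝ) × (ι → ℝ) => ext0 k z.1 j) := fun j =>
    (meas_ext0 k j).comp measurable_fst
  unfold Cc
  fun_prop

/-- uniform lower bound for the quadratic form -/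
theorem AA_low {b : ι → Prop} {k : ι} {z : ({i // i ≠ k} → ℝ) × (ι → ℝ)} {ξ : ι → ℝ} {δ R : ℝ}
    (hz : (∀ i : {i // i ≠ k}, b i → 0 < z.1 i) ∧ ∀ i, 0 ≤ z.2 i ∧ z.2 i ≤ 1 ∧ (¬ b i → z.2 i = 0))
    (hξ : ∀ i, b i → 0 < ξ i) (hδ : 0 < δ) (hk : δ ≤ ξ k) (hR : ∑ i, ξ i ^ 2 ≤ R) :
    (2 + (1 + 2 * R) / δ ^ 2)⁻¹ * (1 + ∑ i, z.1 i ^ 2) ≤ AA (ext0 k z.1) z.2 ξ := by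
  have hR0 : 0 ≤ R := le_trans (Finset.sum_nonneg fun i _ => sq_nonneg _) hR
  refine le_trans ?_ (AA_ge_r k z.1 z.2 ξ hz.1 hz.2 hξ)
  rw [inv_mul_le_iff₀ (by positivity)]
  exact r_low k z.1 ξ hδ hR (le_trans (by gcongr) (r_ge_k k z.1 ξ))

noncomputable def Uk (b : ι → Prop) (a : ι → ℝ) (β : ℝ) (k : ι) (ν : ({i // i ≠ k} → ℝ) → ℝ)
    (ξ : ι → ℝ) : ℝ := ∫ z, ν z.1 * AA (ext0 k z.1) z.2 ξ ^ (-β) ∂(MM b a k)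

noncomputable def D1 (b : ι → Prop) (a : ι → ℝ) (β : ℝ) (k : ι) (ν : ({i // i ≠ k} → ℝ) → ℝ)
    (i : ι) (ξ : ι → ℝ) : ℝ := ∫ z, ν z.1 * (-2 * β * ((ξ i - Bc k i z) *
      AA (ext0 k z.1) z.2 ξ ^ (-β - 1))) ∂(MM b a k)

noncomputable def D2 (b : ι → Prop) (a : ι → ℝ) (β : ℝ) (k : ι) (ν : ({i // i ≠ k} → ℝ) → ℝ)
    (i : ι) (ξ : ι → ℝ) : ℝ := ∫ z, ν z.1 * (4 * β * (β + 1) * ((ξ i - Bc k i z) ^ 2 *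
      AA (ext0 k z.1) z.2 ξ ^ (-β - 2)) - 2 * β * AA (ext0 k z.1) z.2 ξ ^ (-β - 1)) ∂(MM b a k)

theorem Uk_deriv {b : ι → Prop} {a : ι → ℝ} {β : ℝ} {k : ι} {c s : ℝ} {ν : ({i // i ≠ k} → ℝ) → ℝ}
    (H : Dens b a β k c s ν) (i : ι) (ξ : ι → ℝ) (hξ : ∀ i, b i → 0 < ξ i) :
    Integrable (fun z => ν z.1 * AA (ext0 k z.1) z.2 ξ ^ (-β)) (MM b a k) ∧
    Integrable (fun z => ν z.1 * ((ξ i - Bc k i z) * AA (ext0 k z.1) z.2 ξ ^ (-β - 1))) (MM b a k) ∧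
    Integrable (fun z => ν z.1 * AA (ext0 k z.1) z.2 ξ ^ (-β - 1)) (MM b a k) ∧
    Integrable (fun z => ν z.1 * ((ξ i - Bc k i z) ^ 2 * AA (ext0 k z.1) z.2 ξ ^ (-β - 2))) (MM b a k) ∧
    HasDerivAt (fun t => Uk b a β k ν (Function.update ξ i t)) (D1 b a β k ν i ξ) (ξ i) ∧
    HasDerivAt (fun t => D1 b a β k ν i (Function.update ξ i t)) (D2 b a β k ν i ξ) (ξ i) := by
  have hk := hξ k H.bk
  set R := ∑ j, (|ξ j| + 1) ^ 2 with hR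
  set S : Set ℝ := {t | (b i → ξ i / 2 < t) ∧ |t - ξ i| < 1} with hS
  have hSn : S ∈ 𝓝 (ξ i) := by
    have e1 : ∀ᶠ t in 𝓝 (ξ i), (b i → ξ i / 2 < t) := by
      by_cases hb : b i
      · have := hξ i hb
        filter_upwards [lt_mem_nhds (show ξ i / 2 < ξ i by linarith)] with t ht _ using ht
      · exact Eventually.of_forall fun t h => absurd h hb
    have e2 : ∀ᶠ t in 𝓝 (ξ i), |t - ξ i| < 1 := by
      filter_upwards [Metric.ball_mem_nhds (ξ i) one_pos] with t ht
      simpa [Real.dist_eq] using ht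
    exact e1.and e2
  have hprop : ∀ t ∈ S, (∀ j, b j → 0 < Function.update ξ i t j) ∧ ξ k / 2 ≤ Function.update ξ i t k ∧
      ∑ j, Function.update ξ i t j ^ 2 ≤ R := by
    intro t ht
    refine ⟨fun j hj => ?_, ?_, ?_⟩
    · by_cases hji : j = i
      · subst hji; rw [Function.update_self]; have := ht.1 hj; have := hξ j hj; linarith
      · rw [Function.update_of_ne hji]; exact hξ j hj
    · by_cases hki : k = i
      · subst hki; rw [Function.update_self]; exact (ht.1 H.bk).le
      · rw [Function.update_of_ne hki]; linarith
    · refine Finset.sum_le_sum fun j _ => ?_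
      by_cases hji : j = i
      · subst hji; rw [Function.update_self]
        have : |t| ≤ |ξ j| + 1 := by
          have h2 := ht.2
          have := abs_sub_abs_le_abs_sub t (ξ j)
          linarith
        rw [← sq_abs]; gcongr
      · rw [Function.update_of_ne hji, ← sq_abs]
        gcongr; linarith
  have hR0 : 0 ≤ R := Finset.sum_nonneg fun i _ => sq_nonneg _
  set κ := (2 + (1 + 2 * R) / (ξ k / 2) ^ 2)⁻¹ with hκ
  have hκ0 : 0 < κ := by positivity
  have main := pot_deriv (μ := MM b a k) (f := fun z => ν z.1) (B := Bc k i) (C := Cc k i ξ)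
    (G := fun z => κ * (1 + ∑ i, z.1 i ^ 2)) (p := β) (δ := √κ) hSn H.hβ0 (by positivity) H.measMM
    (meas_Bc k i) (meas_Cc k i ξ) ?_ (H.int hκ0)
  · simp only [← AA_split, Function.update_eq_self] at main
    obtain ⟨m1, m2, m3, m4, m5, m6⟩ := main
    refine ⟨m1, m2, m3, m4, m5, ?_⟩
    simpa only [D1, D2, Function.update_self] using m6
  · filter_upwards [MM_ae] with z hz
    refine ⟨?_, ?_, fun t ht => ?_⟩
    · unfold Cc
      have hz2 := hz.2 i
      have h1 : 0 ≤ z.2 i * (1 - z.2 i) := mul_nonneg hz2.1 (by linarith [hz2.2.1])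
      refine add_nonneg (by positivity) (Finset.sum_nonneg fun j _ => ?_)
      exact le_trans (sq_nonneg _) (quad_nonneg (hz.2 j).1 (hz.2 j).2.1)
    · rw [sq_sqrt hκ0.le]
      have : 0 ≤ ∑ i, z.1 i ^ 2 := Finset.sum_nonneg fun i _ => sq_nonneg _
      nlinarith
    · rw [← AA_split]
      obtain ⟨p1, p2, p3⟩ := hprop t ht
      exact AA_low hz p1 (by positivity) p2 p3

end domin

section pde
variable {ι : Type*} [Fintype ι] [DecidableEq ι]
set_option linter.unusedSectionVars false

def Wc (k i : ι) (z : ({i // i ≠ k} → ℝ) × (ι → ℝ)) : ℝ :=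
  4 * ext0 k z.1 i ^ 2 * (z.2 i * (1 - z.2 i))

theorem meas_Wc (k i : ι) : Measurable (Wc k i) := by
  have : Measurable (fun z : ({i // i ≠ k} → ℝ) × (ι → ℝ) => ext0 k z.1 i) :=
    (meas_ext0 k i).comp measurable_fst
  unfold Wc
  fun_prop

theorem AA_sum (k : ι) (ξ : ι → ℝ) (z : ({i // i ≠ k} → ℝ) × (ι → ℝ)) :
    AA (ext0 k z.1) z.2 ξ = ∑ i, (ξ i - Bc k i z) ^ 2 + ∑ i, Wc k i z := by
  unfold AA Bc Wc
  rw [← Finset.sum_add_distrib]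
  refine Finset.sum_congr rfl fun i _ => ?_
  ring

theorem Wc_nonneg (k i : ι) (z : ({i // i ≠ k} → ℝ) × (ι → ℝ)) (h0 : 0 ≤ z.2 i) (h1 : z.2 i ≤ 1) :
    0 ≤ Wc k i z := by
  have : 0 ≤ z.2 i * (1 - z.2 i) := mul_nonneg h0 (by linarith)
  unfold Wc; positivity

theorem Wc_le (k i : ι) (ξ : ι → ℝ) (z : ({i // i ≠ k} → ℝ) × (ι → ℝ))
    (h : ∀ i, 0 ≤ z.2 i ∧ z.2 i ≤ 1) :
    Wc k i z ≤ AA (ext0 k z.1) z.2 ξ := by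
  rw [AA_sum]
  have h1 := Finset.single_le_sum (f := fun i => Wc k i z) (fun i _ => Wc_nonneg k i z (h i).1 (h i).2)
    (Finset.mem_univ i)
  have h2 : 0 ≤ ∑ i, (ξ i - Bc k i z) ^ 2 := Finset.sum_nonneg fun i _ => sq_nonneg _
  linarith

noncomputable def Tc (a : ι → ℝ) (β : ℝ) (k : ι) (ν : ({i // i ≠ k} → ℝ) → ℝ) (ξ : ι → ℝ) (j : ι)
    (z : ({i // i ≠ k} → ℝ) × (ι → ℝ)) : ℝ :=
  ν z.1 * (a j * (Bc k j z / ξ j) * AA (ext0 k z.1) z.2 ξ ^ (-β - 1) -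
    (β + 1) * Wc k j z * AA (ext0 k z.1) z.2 ξ ^ (-β - 2))

theorem Tc_int {b : ι → Prop} {a : ι → ℝ} {β : ℝ} {k : ι} {c s : ℝ} {ν : ({i // i ≠ k} → ℝ) → ℝ}
    (H : Dens b a β k c s ν) (j : ι) (ξ : ι → ℝ) (hξ : ∀ i, b i → 0 < ξ i) :
    Integrable (Tc a β k ν ξ j) (MM b a k) := by
  obtain ⟨-, i1, i2, -, -, -⟩ := Uk_deriv H j ξ hξ
  have i3 : Integrable (fun z => ν z.1 * (Wc k j z * AA (ext0 k z.1) z.2 ξ ^ (-β - 2))) (MM b a k) := by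
    refine i2.mono (H.measMM.mul ?_) ?_
    · exact ((meas_Wc k j).mul ((meas_AA k ξ).pow_const _)).aestronglyMeasurable
    · filter_upwards [MM_ae] with z hz
      have hA : 0 < AA (ext0 k z.1) z.2 ξ :=
        lt_of_lt_of_le (pow_pos (hξ k H.bk) 2) (AA_ge k z.1 z.2 ξ fun i => ⟨(hz.2 i).1, (hz.2 i).2.1⟩)
      have hW := Wc_le k j ξ z fun i => ⟨(hz.2 i).1, (hz.2 i).2.1⟩
      have hW0 := Wc_nonneg k j z (hz.2 j).1 (hz.2 j).2.1
      rw [norm_mul, norm_mul (ν z.1)]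
      refine mul_le_mul_of_nonneg_left ?_ (norm_nonneg _)
      rw [norm_of_nonneg (by positivity), norm_of_nonneg (by positivity),
        show -β - 1 = 1 + (-β - 2) by ring, rpow_add hA, rpow_one]
      exact mul_le_mul_of_nonneg_right hW (by positivity)
  have e : Tc a β k ν ξ j = fun z => a j / ξ j * (ξ j * (ν z.1 * AA (ext0 k z.1) z.2 ξ ^ (-β - 1)) -
      ν z.1 * ((ξ j - Bc k j z) * AA (ext0 k z.1) z.2 ξ ^ (-β - 1))) -
      (β + 1) * (ν z.1 * (Wc k j z * AA (ext0 k z.1) z.2 ξ ^ (-β - 2))) := by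
    funext z; unfold Tc; ring
  rw [e]
  exact (((i2.const_mul _).sub i1).const_mul _).sub (i3.const_mul _)

theorem Tc_zero {b : ι → Prop} {a : ι → ℝ} {β : ℝ} {k : ι} {c s : ℝ} {ν : ({i // i ≠ k} → ℝ) → ℝ}
    (H : Dens b a β k c s ν) (j : ι) (ξ : ι → ℝ) (hξ : ∀ i, b i → 0 < ξ i) :
    ∫ z, Tc a β k ν ξ j z ∂(MM b a k) = 0 := by
  have := fun i => kap_prob (H.adm i)
  have := KP_prob H.adm
  by_cases hb : b j
  swap
  · refine integral_eq_zero_of_ae ?_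
    filter_upwards [MM_ae] with z hz
    have h1 := (H.adm j).2 hb
    have h2 := (hz.2 j).2.2 hb
    simp [Tc, Wc, h1, h2]
  have hI := Tc_int H j ξ hξ
  unfold MM at hI ⊢
  rw [integral_prod _ hI]
  refine integral_eq_zero_of_ae ?_
  filter_upwards [hI.prod_right_ae, LP_ae (b := b) (a := a) (k := k)] with y hy hy0
  have mp := pi_update (fun i => kap (b i) (a i)) j
  have hy2 : Integrable (fun p : (ι → ℝ) × ℝ => Tc a β k ν ξ j (y, Function.update p.1 j p.2))
      ((KP b a).prod (kap (b j) (a j))) := (mp.integrable_comp hy.aestronglyMeasurable).2 hy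
  have e1 : ∫ u, Tc a β k ν ξ j (y, u) ∂(KP b a) =
      ∫ p : (ι → ℝ) × ℝ, Tc a β k ν ξ j (y, Function.update p.1 j p.2)
        ∂((KP b a).prod (kap (b j) (a j))) := by
    unfold KP
    conv_lhs => rw [← mp.map_eq]
    rw [integral_map mp.measurable.aemeasurable]
    rw [mp.map_eq]; exact hy.aestronglyMeasurable
  rw [e1, integral_prod _ hy2]
  refine integral_eq_zero_of_ae ?_
  filter_upwards [KP_ae (b := b) (a := a)] with u hu
  by_cases hjk : j = k
  · subst hjk
    simp [Tc, Wc, Bc, ext0_self]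
  have hξj := hξ j hb
  have hx := hy0 ⟨j, hjk⟩ hb
  rw [← ext0_ne k y] at hx
  simp only at hx
  set x := ext0 k y j with hxd
  set B := AA (ext0 k y) (Function.update u j 0) ξ with hB
  have hB0 : 0 < B := by
    refine lt_of_lt_of_le (pow_pos (hξ k H.bk) 2) (AA_ge k y _ ξ fun i => ?_)
    by_cases hij : i = j
    · subst hij; simp
    · rw [Function.update_of_ne hij]; exact ⟨(hu i).1, (hu i).2.1⟩
  have e2 : ∀ v, AA (ext0 k y) (Function.update u j v) ξ = B + 4 * x * ξ j * v := by
    intro v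
    rw [hB]
    unfold AA
    rw [Fintype.sum_eq_add_sum_subtype_ne _ j, Fintype.sum_eq_add_sum_subtype_ne _ j]
    have : ∀ v, ∀ i : {i // i ≠ j}, Function.update u j v i = u i :=
      fun v i => Function.update_of_ne i.2 _ _
    simp_rw [this, Function.update_self, ← hxd]
    ring
  have := beta_ibp (p := β + 1) (d := 4 * x * ξ j) ((H.adm j).1 hb).1 hB0 (by positivity)
  have e3 : kap (b j) (a j) = ProbabilityTheory.betaMeasure (a j) (a j) := by simp [kap, hb]
  rw [e3]
  have e4 : ∀ v, Tc a β k ν ξ j (y, Function.update u j v) = ν y * (x / ξ j) *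
      (a j * (1 - 2 * v) * (B + 4 * x * ξ j * v) ^ (-(β + 1)) -
        (β + 1) * (4 * x * ξ j) * (v * (1 - v)) * (B + 4 * x * ξ j * v) ^ (-(β + 1) - 1)) := by
    intro v
    unfold Tc Bc Wc
    simp only [e2, Function.update_self, ← hxd]
    rw [show -(β + 1) = -β - 1 by ring, show -β - 1 - 1 = -β - 2 by ring]
    field_simp
  simp_rw [e4]
  rw [integral_const_mul, this]; simp

theorem Uk_pde {b : ι → Prop} {a : ι → ℝ} {β : ℝ} {k : ι} {c s : ℝ} {ν : ({i // i ≠ k} → ℝ) → ℝ}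
    (H : Dens b a β k c s ν) (hβ : β + 1 = ∑ i, (a i + 1 / 2)) (ξ : ι → ℝ) (hξ : ∀ i, b i → 0 < ξ i) :
    ∑ i, D2 b a β k ν i ξ + ∑ i, 2 * a i / ξ i * D1 b a β k ν i ξ = 0 := by
  have hT := fun j => Tc_zero H j ξ hξ
  have hTi := fun j => Tc_int H j ξ hξ
  have I := fun j => Uk_deriv H j ξ hξ
  have J2 : ∀ i, Integrable (fun z => ν z.1 * (4 * β * (β + 1) * ((ξ i - Bc k i z) ^ 2 *
      AA (ext0 k z.1) z.2 ξ ^ (-β - 2)) - 2 * β * AA (ext0 k z.1) z.2 ξ ^ (-β - 1))) (MM b a k) := by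
    intro i
    refine (((I i).2.2.2.1.const_mul (4 * β * (β + 1))).sub ((I i).2.2.1.const_mul (2 * β))).congr
      (Eventually.of_forall fun z => ?_)
    simp only [Pi.sub_apply]; ring
  have J1 : ∀ i, Integrable (fun z => 2 * a i / ξ i * (ν z.1 * (-2 * β * ((ξ i - Bc k i z) *
      AA (ext0 k z.1) z.2 ξ ^ (-β - 1))))) (MM b a k) := by
    intro i
    refine ((I i).2.1.const_mul (2 * a i / ξ i * (-2 * β))).congr
      (Eventually.of_forall fun z => ?_)
    simp only; ring
  unfold D1 D2
  simp_rw [← integral_const_mul]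
  rw [← integral_finsetSum _ (fun i _ => J2 i), ← integral_finsetSum _ (fun i _ => J1 i),
    ← integral_add (integrable_finsetSum _ fun i _ => J2 i) (integrable_finsetSum _ fun i _ => J1 i)]
  have key : ∫ z, ∑ j, 4 * β * Tc a β k ν ξ j z ∂(MM b a k) = 0 := by
    rw [integral_finsetSum _ fun j _ => (hTi j).const_mul _]
    simp_rw [integral_const_mul, hT]; simp
  rw [← key]
  refine integral_congr_ae ?_
  filter_upwards [MM_ae] with z hz
  have hA : 0 < AA (ext0 k z.1) z.2 ξ :=
    lt_of_lt_of_le (pow_pos (hξ k H.bk) 2) (AA_ge k z.1 z.2 ξ fun i => ⟨(hz.2 i).1, (hz.2 i).2.1⟩)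
  set A := AA (ext0 k z.1) z.2 ξ with hAd
  set P := A ^ (-β - 2)
  have hP : A ^ (-β - 1) = A * P := by
    rw [show -β - 1 = 1 + (-β - 2) by ring, rpow_add hA, rpow_one]
  have hAs := AA_sum k ξ z
  rw [← hAd] at hAs
  have e5 : ∀ i, 2 * a i / ξ i * (ν z.1 * (-2 * β * ((ξ i - Bc k i z) * A ^ (-β - 1)))) =
      -4 * β * ν z.1 * A * P * a i + 4 * β * ν z.1 * (a i * (Bc k i z / ξ i) * A ^ (-β - 1)) := by
    intro i
    rw [hP]
    by_cases hb : b i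
    · have := (hξ i hb).ne'
      field_simp; ring
    · rw [(H.adm i).2 hb]; ring
  have e6 : ∀ i, 4 * β * Tc a β k ν ξ i z = 4 * β * ν z.1 * (a i * (Bc k i z / ξ i) * A ^ (-β - 1)) -
      4 * β * ν z.1 * (β + 1) * P * Wc k i z := by
    intro i; unfold Tc; ring
  have e7 : ∀ i, ν z.1 * (4 * β * (β + 1) * ((ξ i - Bc k i z) ^ 2 * P) - 2 * β * A ^ (-β - 1)) =
      ν z.1 * (4 * β * (β + 1) * P) * (ξ i - Bc k i z) ^ 2 - 4 * β * ν z.1 * A * P * (1 / 2) := by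
    intro i; rw [hP]; ring
  simp_rw [e5, e6, e7, Finset.sum_sub_distrib, Finset.sum_add_distrib, ← Finset.mul_sum]
  rw [Finset.sum_add_distrib] at hβ
  generalize (∑ i, a i * (Bc k i z / ξ i) * A ^ (-β - 1)) = X at *
  generalize (∑ i, (ξ i - Bc k i z) ^ 2) = Y at *
  generalize (∑ i, Wc k i z) = W at *
  generalize (∑ i, a i) = S at *
  generalize (∑ i : ι, (1 / 2 : ℝ)) = M at *
  have : S = β + 1 - M := by linarith
  subst this
  have : W = A - Y := by linarith
  subst this
  ring

end pde

section decay
variable {ι : Type*} [Fintype ι] [DecidableEq ι]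
set_option linter.unusedSectionVars false

theorem Uk_bound {b : ι → Prop} {a : ι → ℝ} {β : ℝ} {k : ι} {c s : ℝ} {ν : ({i // i ≠ k} → ℝ) → ℝ}
    (H : Dens b a β k c s ν) (hβ : β + 1 = ∑ i, (a i + 1 / 2)) (hc : 0 ≤ c) {s' : ℝ} (hs' : s' ≤ s)
    (hs0 : 0 ≤ s') (ξ : ι → ℝ) (hξ : ∀ i, b i → 0 < ξ i) (j : {i // i ≠ k}) :
    ENNReal.ofReal |Uk b a β k ν ξ| ≤ ENNReal.ofReal c * ((ENNReal.ofReal (Real.Gamma β))⁻¹ *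
      (ENNReal.ofReal (∏ i : {i // i ≠ j}, Cm (b i) (a i)) *
        Psi (b j) (a j) s' (a k) (ξ k) (ξ j))) := by
  have hG := Real.Gamma_pos_of_pos H.hβ0
  rw [← psi_rep H.adm k H.hβ0 hβ ξ (hξ k H.bk) j s', ← mul_assoc _ (ENNReal.ofReal (Real.Gamma β)),
    ENNReal.inv_mul_cancel (by simpa using hG) ENNReal.ofReal_ne_top, one_mul,
    ← lintegral_const_mul' _ _ ENNReal.ofReal_ne_top]
  unfold Uk
  rw [← norm_eq_abs, ofReal_norm]
  refine (enorm_integral_le_lintegral_enorm _).trans (lintegral_mono_ae ?_)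
  filter_upwards [MM_ae] with z hz
  have hA : 0 < AA (ext0 k z.1) z.2 ξ :=
    lt_of_lt_of_le (pow_pos (hξ k H.bk) 2) (AA_ge k z.1 z.2 ξ fun i => ⟨(hz.2 i).1, (hz.2 i).2.1⟩)
  rw [← ofReal_norm, norm_mul, norm_eq_abs, norm_of_nonneg (by positivity), ← mul_assoc,
    ← ENNReal.ofReal_mul hc, ← ENNReal.ofReal_mul (by positivity)]
  refine ENNReal.ofReal_le_ofReal (mul_le_mul_of_nonneg_right ?_ (by positivity))
  refine (H.bd z.1 hz.1).trans (mul_le_mul_of_nonneg_left ?_ hc)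
  have hw : 1 ≤ 1 + ∑ i, z.1 i ^ 2 := by
    have : 0 ≤ ∑ i, z.1 i ^ 2 := Finset.sum_nonneg fun i _ => sq_nonneg _
    linarith
  calc (1 + ∑ i, z.1 i ^ 2) ^ (-s / 2) ≤ (1 + ∑ i, z.1 i ^ 2) ^ (-s' / 2) :=
        rpow_le_rpow_of_exponent_le hw (by linarith)
    _ ≤ _ := by
      refine rpow_le_rpow_of_nonpos (by positivity) ?_ (by linarith)
      have := Finset.single_le_sum (f := fun i => z.1 i ^ 2) (fun i _ => sq_nonneg _) (Finset.mem_univ j)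
      simpa using this

theorem Uk_decay {b : ι → Prop} {a : ι → ℝ} {β : ℝ} {k : ι} {c s : ℝ} {ν : ({i // i ≠ k} → ℝ) → ℝ}
    (H : Dens b a β k c s ν) (hβ : β + 1 = ∑ i, (a i + 1 / 2)) (hc : 0 ≤ c)
    (hs1 : 1 - 2 * a k < s) (hne : Nonempty {i // i ≠ k}) {δ : ℝ} (hδ : 0 < δ) :
    ∃ R : ℝ, ∀ ξ : ι → ℝ, (∀ i, b i → 0 < ξ i) → R < √(∑ i, ξ i ^ 2) → |Uk b a β k ν ξ| < δ := by
  obtain ⟨hak, hak1⟩ := (H.adm k).1 H.bk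
  set e := min (s - (1 - 2 * a k)) (a k) with he
  have he0 : 0 < e := lt_min (by linarith) hak
  have he1 : e < 2 * a k := lt_of_le_of_lt (min_le_right _ _) (by linarith)
  have he2 : 1 - 2 * a k + e ≤ s := by
    have := min_le_left (s - (1 - 2 * a k)) (a k); linarith
  have step : ∀ j : {i // i ≠ k}, ∃ R : ℝ, ∀ ξ : ι → ℝ, (∀ i, b i → 0 < ξ i) →
      (R < |ξ j| ∨ R < |ξ k|) → |Uk b a β k ν ξ| < δ := by
    intro j
    set K : ℝ≥0∞ := ENNReal.ofReal c * ((ENNReal.ofReal (Real.Gamma β))⁻¹ *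
      ENNReal.ofReal (∏ i : {i // i ≠ j}, Cm (b i) (a i))) with hK
    have hKt : K ≠ ⊤ := by
      have := Real.Gamma_pos_of_pos H.hβ0
      refine ENNReal.mul_ne_top ENNReal.ofReal_ne_top (ENNReal.mul_ne_top ?_ ENNReal.ofReal_ne_top)
      simpa using this
    have hd : 0 < ENNReal.ofReal δ / (K + 1) :=
      ENNReal.div_pos (by simpa using hδ) (by simp [hKt])
    obtain ⟨R, hR⟩ := psi_small (H.adm j) hak hak1 he0 he1 hd
    refine ⟨R, fun ξ hξ hR' => ?_⟩
    have h1 := Uk_bound H hβ hc he2 (by linarith) ξ hξ j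
    have h2 := hR (ξ k) (ξ j) hR'
    rw [← ENNReal.ofReal_lt_ofReal_iff hδ]
    refine lt_of_le_of_lt h1 ?_
    have h3 : ENNReal.ofReal c * ((ENNReal.ofReal (Real.Gamma β))⁻¹ *
      (ENNReal.ofReal (∏ i : {i // i ≠ j}, Cm (b i) (a i)) *
        Psi (b j) (a j) (1 - 2 * a k + e) (a k) (ξ k) (ξ j))) =
        Psi (b j) (a j) (1 - 2 * a k + e) (a k) (ξ k) (ξ j) * K := by rw [hK]; ring
    rw [h3]
    refine lt_of_le_of_lt (mul_le_mul_right (le_self_add (a := K) (b := 1)) _) ?_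
    rwa [ENNReal.lt_div_iff_mul_lt (Or.inl (by simp)) (Or.inl (by simp [hKt]))] at h2
  choose R hR using step
  set M := ∑ j, |R j| with hM
  have hMR : ∀ j, R j ≤ M := fun j => (le_abs_self _).trans
    (Finset.single_le_sum (f := fun j => |R j|) (fun j _ => abs_nonneg _) (Finset.mem_univ j))
  have hM0 : 0 ≤ M := Finset.sum_nonneg fun j _ => abs_nonneg _
  refine ⟨√(Fintype.card ι * M ^ 2), fun ξ hξ hlt => ?_⟩
  rw [sqrt_lt_sqrt_iff (by positivity)] at hlt
  obtain ⟨i, hi⟩ : ∃ i, M < |ξ i| := by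
    by_contra hcon
    push Not at hcon
    have : ∑ i, ξ i ^ 2 ≤ ∑ _i : ι, M ^ 2 := Finset.sum_le_sum fun i _ => by
      rw [← sq_abs]; have := hcon i; gcongr
    simp at this
    linarith
  by_cases hik : i = k
  · subst hik
    obtain ⟨j⟩ := hne
    exact hR j ξ hξ (Or.inr (lt_of_le_of_lt (hMR j) hi))
  · exact hR ⟨i, hik⟩ ξ hξ (Or.inl (lt_of_le_of_lt (hMR _) hi))

end decay

section bdry
variable {ι : Type*} [Fintype ι] [DecidableEq ι]
set_option linter.unusedSectionVars false

theorem Bsq_le (k i : ι) (ξ : ι → ℝ) (z : ({i // i ≠ k} → ℝ) × (ι → ℝ))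
    (h : ∀ i, 0 ≤ z.2 i ∧ z.2 i ≤ 1) :
    (ξ i - Bc k i z) ^ 2 ≤ AA (ext0 k z.1) z.2 ξ := by
  rw [AA_sum]
  have h1 := Finset.single_le_sum (f := fun i => (ξ i - Bc k i z) ^ 2) (fun i _ => sq_nonneg _)
    (Finset.mem_univ i)
  have h2 : 0 ≤ ∑ i, Wc k i z := Finset.sum_nonneg fun i _ => Wc_nonneg k i z (h i).1 (h i).2
  linarith

theorem upd_sq_le (ξ : ι → ℝ) (l : ι) {t : ℝ} (ht : |t| ≤ 1) :
    ∑ j, Function.update ξ l t j ^ 2 ≤ ∑ j, (|ξ j| + 1) ^ 2 := by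
  refine Finset.sum_le_sum fun j _ => ?_
  by_cases hji : j = l
  · subst hji; rw [Function.update_self, ← sq_abs]
    have := abs_nonneg (ξ j)
    gcongr; linarith
  · rw [Function.update_of_ne hji, ← sq_abs]
    gcongr; linarith

theorem upd_pos {b : ι → Prop} {ξ : ι → ℝ} {l : ι} (hξ : ∀ i, b i → i ≠ l → 0 < ξ i) {t : ℝ}
    (ht : 0 < t) (j : ι) (hj : b j) : 0 < Function.update ξ l t j := by
  by_cases hji : j = l
  · subst hji; rwa [Function.update_self]
  · rw [Function.update_of_ne hji]; exact hξ j hj hji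

theorem bdry_other {b : ι → Prop} {a : ι → ℝ} {β : ℝ} {k : ι} {c s : ℝ} {ν : ({i // i ≠ k} → ℝ) → ℝ}
    (H : Dens b a β k c s ν) (l : ι) (hl : b l) (hlk : l ≠ k) (ξ : ι → ℝ)
    (hξ : ∀ i, b i → i ≠ l → 0 < ξ i) :
    Tendsto (fun t => t ^ (2 * a l) * D1 b a β k ν l (Function.update ξ l t)) (𝓝[>] 0) (𝓝 0) := by
  have hk := hξ k H.bk hlk.symm
  set R := ∑ j, (|ξ j| + 1) ^ 2 with hR
  have hR0 : 0 ≤ R := Finset.sum_nonneg fun i _ => sq_nonneg _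
  set κ := (2 + (1 + 2 * R) / (ξ k) ^ 2)⁻¹ with hκ
  have hκ0 : 0 < κ := by positivity
  have hI := (H.int hκ0).norm
  set C := 2 * β * (√κ)⁻¹ * ∫ z, ‖ν z.1 * (κ * (1 + ∑ i, z.1 i ^ 2)) ^ (-β)‖ ∂(MM b a k) with hC
  have bd : ∀ t ∈ Set.Ioo (0:ℝ) 1, |D1 b a β k ν l (Function.update ξ l t)| ≤ C := by
    intro t ht
    have hpos := fun j => upd_pos (b := b) hξ ht.1 j
    rw [← norm_eq_abs, hC, ← integral_const_mul]
    refine norm_integral_le_of_norm_le (hI.const_mul _) ?_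
    filter_upwards [MM_ae] with z hz
    have hz' : ∀ i, 0 ≤ z.2 i ∧ z.2 i ≤ 1 := fun i => ⟨(hz.2 i).1, (hz.2 i).2.1⟩
    have h1 := AA_low hz hpos hk (by rw [Function.update_of_ne hlk.symm])
      (upd_sq_le ξ l (abs_le.2 ⟨by linarith [ht.1], ht.2.le⟩))
    rw [← hR, ← hκ] at h1
    have hw : 1 ≤ 1 + ∑ i, z.1 i ^ 2 := by
      have : 0 ≤ ∑ i, z.1 i ^ 2 := Finset.sum_nonneg fun i _ => sq_nonneg _
      linarith
    have h2 : √κ ^ 2 ≤ AA (ext0 k z.1) z.2 (Function.update ξ l t) := by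
      rw [sq_sqrt hκ0.le]; nlinarith
    have h3 := pot_bd1 H.hβ0 (sqrt_pos.2 hκ0) (by positivity) h1 (Bsq_le k l _ z hz') h2 rfl
    have hβ0 := H.hβ0
    rw [norm_mul, norm_mul (-2 * β), norm_mul (ν z.1) ((κ * (1 + ∑ i, z.1 i ^ 2)) ^ (-β)),
      norm_eq_abs (-2 * β), show |(-2) * β| = 2 * β by
      rw [abs_of_neg (by linarith)]; ring, norm_of_nonneg (show 0 ≤ (κ * (1 + ∑ i, z.1 i ^ 2)) ^ (-β) by
        positivity)]
    rw [← norm_eq_abs] at h3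
    calc ‖ν z.1‖ * (2 * β * ‖_‖) ≤ ‖ν z.1‖ * (2 * β * ((√κ)⁻¹ * (κ * (1 + ∑ i, z.1 i ^ 2)) ^ (-β))) := by
          gcongr
      _ = _ := by ring
  have hal := ((H.adm l).1 hl).1
  have h0 : Tendsto (fun t : ℝ => t ^ (2 * a l) * C) (𝓝[>] 0) (𝓝 0) := by
    have : Tendsto (fun t : ℝ => t ^ (2 * a l)) (𝓝[>] 0) (𝓝 (0 ^ (2 * a l))) :=
      ((continuousAt_rpow_const 0 (2 * a l) (Or.inr (by linarith))).tendsto).mono_left nhdsWithin_le_nhds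
    rw [zero_rpow (by linarith)] at this
    simpa using this.mul_const C
  refine squeeze_zero_norm' ?_ h0
  filter_upwards [Ioo_mem_nhdsGT (show (0:ℝ) < 1 by norm_num)] with t ht
  rw [norm_mul, norm_of_nonneg (rpow_nonneg ht.1.le _), norm_eq_abs]
  exact mul_le_mul_of_nonneg_left (bd t ht) (rpow_nonneg ht.1.le _)

noncomputable def Kc (b : ι → Prop) (a : ι → ℝ) (β : ℝ) (k : ι) : ℝ :=
  (∏ i : {i // i ≠ k}, Cm (b i) (a i)) * Real.Gamma (a k + 1 / 2) / Real.Gamma (β + 1)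

theorem mass_real {b : ι → Prop} {a : ι → ℝ} (h : ∀ i, Adm (b i) (a i)) (k : ι) {β : ℝ}
    (hβ0 : 0 < β) (hβ : β + 1 = ∑ i, (a i + 1 / 2)) (ξ : ι → ℝ) (hξ : 0 < ξ k) :
    Integrable (fun z => AA (ext0 k z.1) z.2 ξ ^ (-β - 1)) (MM b a k) ∧
    ξ k ^ (2 * a k + 1) * ∫ z, AA (ext0 k z.1) z.2 ξ ^ (-β - 1) ∂(MM b a k) = Kc b a β k := by
  have hG : 0 < Real.Gamma (β + 1) := Real.Gamma_pos_of_pos (by linarith)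
  have ha := (h k).nonneg
  have hG2 : 0 < Real.Gamma (a k + 1 / 2) := Real.Gamma_pos_of_pos (by linarith)
  have hP : 0 ≤ ∏ i : {i // i ≠ k}, Cm (b i) (a i) := Finset.prod_nonneg fun i _ => Cm_nonneg (h i)
  have tm := total_mass h k hβ0 hβ ξ hξ
  rw [show -(β + 1) = -β - 1 by ring] at tm
  have hmeas : Measurable (fun z : ({i // i ≠ k} → ℝ) × (ι → ℝ) => AA (ext0 k z.1) z.2 ξ ^ (-β - 1)) := (meas_AA k ξ).pow_const _
  have hnn : 0 ≤ᵐ[MM b a k] (fun z => AA (ext0 k z.1) z.2 ξ ^ (-β - 1)) := by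
    filter_upwards [MM_ae] with z hz
    exact rpow_nonneg (le_trans (sq_nonneg _) (AA_ge k z.1 z.2 ξ fun i => ⟨(hz.2 i).1, (hz.2 i).2.1⟩)) _
  have hL : ∫⁻ z, ENNReal.ofReal (AA (ext0 k z.1) z.2 ξ ^ (-β - 1)) ∂(MM b a k) =
      ENNReal.ofReal (Kc b a β k * ξ k ^ (-(2 * a k + 1))) := by
    rw [show Kc b a β k * ξ k ^ (-(2 * a k + 1)) = ((∏ i : {i // i ≠ k}, Cm (b i) (a i)) *
      (Real.Gamma (a k + 1 / 2) * ξ k ^ (-(2 * a k + 1)))) / Real.Gamma (β + 1) by unfold Kc; ring,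
      ENNReal.ofReal_div_of_pos hG, ENNReal.eq_div_iff (by simpa using hG) ENNReal.ofReal_ne_top, tm]
  have hi : Integrable (fun z => AA (ext0 k z.1) z.2 ξ ^ (-β - 1)) (MM b a k) := by
    refine ⟨hmeas.aestronglyMeasurable, ?_⟩
    rw [hasFiniteIntegral_iff_ofReal hnn, hL]; exact ENNReal.ofReal_lt_top
  refine ⟨hi, ?_⟩
  rw [integral_eq_lintegral_of_nonneg_ae hnn hmeas.aestronglyMeasurable, hL, ENNReal.toReal_ofReal]
  · rw [rpow_neg hξ.le]; field_simp
  · unfold Kc; positivity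

theorem bdry_self {b : ι → Prop} {a : ι → ℝ} {β : ℝ} {k : ι} {c s : ℝ} {ν : ({i // i ≠ k} → ℝ) → ℝ}
    (H : Dens b a β k c s ν) (hβ : β + 1 = ∑ i, (a i + 1 / 2)) (ξ : ι → ℝ)
    (hξ : ∀ i, b i → i ≠ k → 0 < ξ i) (hν : ContinuousAt ν (fun i => ξ i)) :
    Tendsto (fun t => t ^ (2 * a k) * D1 b a β k ν k (Function.update ξ k t)) (𝓝[>] 0)
      (𝓝 (-2 * β * Kc b a β k * ν (fun i => ξ i))) := by
  set ν0 := ν (fun i => ξ i) with hν0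
  have hβ0 := H.hβ0
  obtain ⟨hak, hak1⟩ := (H.adm k).1 H.bk
  have hK0 : 0 ≤ Kc b a β k := by
    unfold Kc
    have hP : 0 ≤ ∏ i : {i // i ≠ k}, Cm (b i) (a i) := Finset.prod_nonneg fun i _ => Cm_nonneg (H.adm i)
    have hG : 0 < Real.Gamma (β + 1) := Real.Gamma_pos_of_pos (by linarith)
    have hG2 : 0 < Real.Gamma (a k + 1 / 2) := Real.Gamma_pos_of_pos (by linarith)
    positivity
  set J : ℝ → ℝ := fun t => t ^ (2 * a k + 1) *
    ∫ z, (ν z.1 - ν0) * AA (ext0 k z.1) z.2 (Function.update ξ k t) ^ (-β - 1) ∂(MM b a k) with hJ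
  set R := ∑ j, (|ξ j| + 1) ^ 2 with hR
  have hR0 : 0 ≤ R := Finset.sum_nonneg fun i _ => sq_nonneg _
  have := KP_prob H.adm
  -- the decomposition
  have dec : ∀ t : ℝ, 0 < t → t ^ (2 * a k) * D1 b a β k ν k (Function.update ξ k t) =
      -2 * β * Kc b a β k * ν0 + -2 * β * J t := by
    intro t ht
    have hpos := fun j => upd_pos (b := b) hξ ht j
    have e1 : Function.update ξ k t k = t := Function.update_self _ _ _
    obtain ⟨m1, m2⟩ := mass_real H.adm k hβ0 hβ (Function.update ξ k t) (by rwa [e1])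
    rw [e1] at m2
    have i1 := (Uk_deriv H k _ hpos).2.2.1
    have e2 : J t = t ^ (2 * a k + 1) *
        (∫ z, ν z.1 * AA (ext0 k z.1) z.2 (Function.update ξ k t) ^ (-β - 1) ∂(MM b a k)) -
        ν0 * Kc b a β k := by
      rw [hJ, ← m2]
      simp only [sub_mul]
      rw [integral_sub i1 (m1.const_mul _), integral_const_mul]; ring
    have e3 : D1 b a β k ν k (Function.update ξ k t) = -2 * β * t *
        ∫ z, ν z.1 * AA (ext0 k z.1) z.2 (Function.update ξ k t) ^ (-β - 1) ∂(MM b a k) := by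
      unfold D1
      rw [← integral_const_mul]
      refine integral_congr_ae (Eventually.of_forall fun z => ?_)
      simp only [Bc, ext0_self, e1]; ring
    rw [e2, e3, rpow_add_one ht.ne']; ring
  have hJ0 : Tendsto J (𝓝[>] 0) (𝓝 0) := by
    rw [Metric.tendsto_nhds]
    intro η hη
    set η' := η / (2 * (Kc b a β k + 1)) with hη'
    have hη0 : 0 < η' := by positivity
    obtain ⟨δ, hδ, hδν⟩ := Metric.continuousAt_iff.1 hν η' hη0
    set κ := (2 + (1 + 2 * R) / δ ^ 2)⁻¹ with hκ
    have hκ0 : 0 < κ := by positivity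
    set G : ({i // i ≠ k} → ℝ) × (ι → ℝ) → ℝ := fun z =>
      |ν z.1 - ν0| * (κ * (1 + ∑ i, z.1 i ^ 2)) ^ (-β - 1) with hG
    have hGi : Integrable G (MM b a k) := by
      have g1 := (H.int hκ0).norm.const_mul κ⁻¹
      have hD : ∑ i : {i // i ≠ k}, (1 + 2 * a i) < 2 * β + 2 := by
        have := Fintype.sum_eq_add_sum_subtype_ne (fun i => a i + 1 / 2) k
        have e : ∑ i : {i // i ≠ k}, (1 + 2 * a i) = 2 * ∑ i : {i // i ≠ k}, (a i + 1 / 2) := by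
          rw [Finset.mul_sum]; exact Finset.sum_congr rfl fun i _ => by ring
        rw [e]; linarith
      have g2 : Integrable (fun z : ({i // i ≠ k} → ℝ) × (ι → ℝ) =>
          (1 + ∑ i, z.1 i ^ 2) ^ (-(2 * β + 2) / 2)) (MM b a k) := by
        unfold MM
        exact (LP_int H.adm k H.hD hD).comp_fst (KP b a)
      refine (g1.add (g2.const_mul (|ν0| * κ ^ (-β - 1)))).mono' ?_ ?_
      · have m1 : AEStronglyMeasurable (fun z : ({i // i ≠ k} → ℝ) × (ι → ℝ) => |ν z.1 - ν0|)
            (MM b a k) := (H.measMM.sub aestronglyMeasurable_const).norm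
        exact m1.mul (by fun_prop : Measurable _).aestronglyMeasurable
      · refine Eventually.of_forall fun z => ?_
        have hw : 1 ≤ 1 + ∑ i, z.1 i ^ 2 := by
          have : 0 ≤ ∑ i, z.1 i ^ 2 := Finset.sum_nonneg fun i _ => sq_nonneg _
          linarith
        simp only [hG, Pi.add_apply]
        set w := 1 + ∑ i, z.1 i ^ 2 with hwd
        have hw0 : 0 < w := by linarith
        rw [norm_of_nonneg (by positivity), norm_mul, norm_eq_abs,
          norm_of_nonneg (show 0 ≤ (κ * w) ^ (-β) by positivity)]
        have q1 : (κ * w) ^ (-β - 1) = κ ^ (-β - 1) * w ^ (-(2 * β + 2) / 2) := by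
          rw [mul_rpow hκ0.le hw0.le]; congr 2; ring
        have q2 : (κ * w) ^ (-β - 1) ≤ κ⁻¹ * (κ * w) ^ (-β) := by
          rw [rpow_sub_one (by positivity), div_eq_inv_mul]
          refine mul_le_mul_of_nonneg_right ?_ (by positivity)
          exact inv_anti₀ hκ0 (by nlinarith)
        have q3 : |ν z.1 - ν0| ≤ |ν z.1| + |ν0| := abs_sub _ _
        calc |ν z.1 - ν0| * (κ * w) ^ (-β - 1) ≤ (|ν z.1| + |ν0|) * (κ * w) ^ (-β - 1) := by gcongr
          _ = |ν z.1| * (κ * w) ^ (-β - 1) + |ν0| * (κ * w) ^ (-β - 1) := by ring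
          _ ≤ |ν z.1| * (κ⁻¹ * (κ * w) ^ (-β)) + |ν0| * (κ * w) ^ (-β - 1) := by gcongr
          _ = _ := by rw [q1]; ring
    set I := ∫ z, G z ∂(MM b a k) with hI
    have hsmall : ∀ᶠ t : ℝ in 𝓝[>] 0, t ^ (2 * a k + 1) * I < η / 2 := by
      have : Tendsto (fun t : ℝ => t ^ (2 * a k + 1)) (𝓝[>] 0) (𝓝 (0 ^ (2 * a k + 1))) :=
        ((continuousAt_rpow_const 0 (2 * a k + 1) (Or.inr (by linarith))).tendsto).mono_left
          nhdsWithin_le_nhds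
      rw [zero_rpow (by linarith)] at this
      have := this.mul_const I
      rw [zero_mul] at this
      exact this.eventually (gt_mem_nhds (by linarith))
    filter_upwards [Ioo_mem_nhdsGT (show (0:ℝ) < 1 by norm_num), hsmall] with t ht hts
    have hpos := fun j => upd_pos (b := b) hξ ht.1 j
    have e1 : Function.update ξ k t k = t := Function.update_self _ _ _
    obtain ⟨m1, m2⟩ := mass_real H.adm k hβ0 hβ (Function.update ξ k t) (by rw [e1]; exact ht.1)
    rw [e1] at m2
    rw [dist_zero_right, hJ]
    simp only
    rw [norm_mul, norm_of_nonneg (rpow_nonneg ht.1.le _)]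
    have key : ‖∫ z, (ν z.1 - ν0) * AA (ext0 k z.1) z.2 (Function.update ξ k t) ^ (-β - 1) ∂(MM b a k)‖ ≤
        ∫ z, (η' * AA (ext0 k z.1) z.2 (Function.update ξ k t) ^ (-β - 1) + G z) ∂(MM b a k) := by
      refine norm_integral_le_of_norm_le ((m1.const_mul _).add hGi) ?_
      filter_upwards [MM_ae] with z hz
      have hA : 0 < AA (ext0 k z.1) z.2 (Function.update ξ k t) :=
        lt_of_lt_of_le (pow_pos (hpos k H.bk) 2)
          (AA_ge k z.1 z.2 _ fun i => ⟨(hz.2 i).1, (hz.2 i).2.1⟩)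
      have hw : 0 < 1 + ∑ i, z.1 i ^ 2 := by positivity
      rw [norm_mul, norm_eq_abs, norm_of_nonneg (show 0 ≤ AA (ext0 k z.1) z.2 (Function.update ξ k t) ^
        (-β - 1) by positivity)]
      by_cases hclose : ∑ i : {i // i ≠ k}, (z.1 i - ξ i) ^ 2 < δ ^ 2
      · have hd : dist z.1 (fun i => ξ i) < δ := by
          rw [dist_pi_lt_iff hδ]
          intro i
          rw [Real.dist_eq]
          have := Finset.single_le_sum (f := fun i : {i // i ≠ k} => (z.1 i - ξ i) ^ 2)
            (fun i _ => sq_nonneg _) (Finset.mem_univ i)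
          exact abs_lt_of_sq_lt_sq (lt_of_le_of_lt this hclose) hδ.le
        have h1 := hδν hd
        rw [Real.dist_eq] at h1
        have h2 : 0 ≤ G z := by simp only [hG]; positivity
        have h3 : |ν z.1 - ν0| * AA (ext0 k z.1) z.2 (Function.update ξ k t) ^ (-β - 1) ≤
          η' * AA (ext0 k z.1) z.2 (Function.update ξ k t) ^ (-β - 1) := by gcongr
        linarith
      · push Not at hclose
        have hr : δ ^ 2 ≤ ∑ i, (ext0 k z.1 i - Function.update ξ k t i) ^ 2 := by
          refine hclose.trans ?_
          rw [Fintype.sum_eq_add_sum_subtype_ne _ k]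
          have : ∀ i : {i // i ≠ k}, (ext0 k z.1 i - Function.update ξ k t i) ^ 2 = (z.1 i - ξ i) ^ 2 := by
            intro i; rw [ext0_ne, Function.update_of_ne i.2]
          simp_rw [this]
          have := sq_nonneg (ext0 k z.1 k - Function.update ξ k t k)
          linarith
        have h1 := r_low k z.1 (Function.update ξ k t) hδ
          (upd_sq_le ξ k (abs_le.2 ⟨by linarith [ht.1], ht.2.le⟩)) hr
        rw [← hR] at h1
        have h2 : κ * (1 + ∑ i, z.1 i ^ 2) ≤ AA (ext0 k z.1) z.2 (Function.update ξ k t) := by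
          refine le_trans ?_ (AA_ge_r k z.1 z.2 _ hz.1 hz.2 hpos)
          rw [hκ, inv_mul_le_iff₀ (by positivity)]; exact h1
        have h3 : AA (ext0 k z.1) z.2 (Function.update ξ k t) ^ (-β - 1) ≤
            (κ * (1 + ∑ i, z.1 i ^ 2)) ^ (-β - 1) :=
          rpow_le_rpow_of_nonpos (by positivity) h2 (by linarith)
        have h4 : |ν z.1 - ν0| * AA (ext0 k z.1) z.2 (Function.update ξ k t) ^ (-β - 1) ≤ G z := by
          simp only [hG]; gcongr
        have h5 : 0 ≤ η' * AA (ext0 k z.1) z.2 (Function.update ξ k t) ^ (-β - 1) := by positivity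
        linarith
    rw [integral_add (m1.const_mul _) hGi, integral_const_mul] at key
    have h6 := mul_le_mul_of_nonneg_left key (rpow_nonneg ht.1.le (2 * a k + 1))
    refine lt_of_le_of_lt h6 ?_
    have h7 : η' * Kc b a β k ≤ η / 2 := by
      rw [hη', div_mul_eq_mul_div, div_le_div_iff₀ (by positivity) (by positivity)]
      nlinarith
    rw [← m2] at h7
    calc _ = η' * (t ^ (2 * a k + 1) * ∫ z, AA (ext0 k z.1) z.2 (Function.update ξ k t) ^ (-β - 1)
            ∂(MM b a k)) + t ^ (2 * a k + 1) * I := by ring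
      _ < η / 2 + η / 2 := by linarith
      _ = η := by ring
  have fin : Tendsto (fun t => -2 * β * Kc b a β k * ν0 + -2 * β * J t) (𝓝[>] 0)
      (𝓝 (-2 * β * Kc b a β k * ν0)) := by
    have := (hJ0.const_mul (-2 * β)).const_add (-2 * β * Kc b a β k * ν0)
    simpa using this
  refine fin.congr' ?_
  filter_upwards [self_mem_nhdsWithin] with t ht
  exact (dec t ht).symm

end bdry

section gluing
variable {ι : Type*} [Fintype ι] [DecidableEq ι]
set_option linter.unusedSectionVars false

theorem LP_ac (b : ι → Prop) (a : ι → ℝ) (k : ι) :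
    LP b a k ≪ volume.restrict {y : {i // i ≠ k} → ℝ | ∀ i, b i.1 → 0 < y i} := by
  have hS : {y : {i // i ≠ k} → ℝ | ∀ i, b i.1 → 0 < y i}
      = Set.univ.pi fun i : {i // i ≠ k} => {y : ℝ | b i → 0 < y} := by
    ext y; simp
  have : ∀ i : {i // i ≠ k}, SigmaFinite ((volume.restrict {y : ℝ | b i → 0 < y}).withDensity
    (fun y => ENNReal.ofReal (y ^ (2 * a i)))) := fun i => lam_sf (b i) (a i)
  have e1 : LP b a k = (volume.restrict {y : {i // i ≠ k} → ℝ | ∀ i, b i.1 → 0 < y i}).withDensity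
      (fun y => ∏ i : {i // i ≠ k}, ENNReal.ofReal (y i ^ (2 * a i))) := by
    unfold LP lam
    rw [pi_wd (fun i : {i // i ≠ k} => volume.restrict {y : ℝ | b i → 0 < y})
      (fun i y => ENNReal.ofReal (y ^ (2 * a i))) (fun i => by fun_prop), hS, volume_pi,
      Measure.restrict_pi_pi]
  rw [e1]
  exact withDensity_absolutelyContinuous _ _

theorem open_T (b : ι → Prop) (k : ι) :
    IsOpen {y : {i // i ≠ k} → ℝ | ∀ i, b i.1 → 0 < y i} := by
  have : {y : {i // i ≠ k} → ℝ | ∀ i, b i.1 → 0 < y i}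
      = ⋂ i : {i // i ≠ k}, {y | b i.1 → 0 < y i} := by ext y; simp
  rw [this]
  refine isOpen_iInter_of_finite fun i => ?_
  by_cases hb : b i.1
  · simp only [hb, forall_const]
    exact isOpen_lt continuous_const (continuous_apply i)
  · simp [hb]

open Classical in
noncomputable def Gm (b : Prop) (a : ℝ) : ℝ := if b then Real.Gamma a / Real.Gamma (2 * a) else 1

theorem Gm_Cm {b : Prop} {a : ℝ} (h : Adm b a) : Gm b a * Cm b a = 2 ^ (-(2 * a)) * √π := by
  by_cases hb : b
  · have ha := (h.1 hb).1
    have hG := Real.Gamma_pos_of_pos (show 0 < 2 * a by linarith)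
    have d := Real.Gamma_mul_Gamma_add_half a
    simp only [Gm, Cm, hb, if_true]
    rw [div_mul_div_comm, d, show 1 - 2 * a = -(2 * a) + 1 by ring, rpow_add (by norm_num), rpow_one]
    field_simp
  · simp [Gm, Cm, hb, h.2 hb]

theorem gamma_normal {b : ι → Prop} {a : ι → ℝ} (h : ∀ i, Adm (b i) (a i)) (k : ι) (hk : b k) {β γ : ℝ}
    (hβ0 : 0 < β) (hβ : β + 1 = ∑ i, (a i + 1 / 2))
    (hγ : γ = 2 ^ (2 * β - (Fintype.card ι : ℝ)) * Real.Gamma β / Real.pi ^ ((Fintype.card ι : ℝ) / 2) *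
      ∏ i, Gm (b i) (a i)) : 2 * β * γ * Kc b a β k = 1 := by
  have hG := Real.Gamma_pos_of_pos hβ0
  have e1 : (∏ i : {i // i ≠ k}, Cm (b i) (a i)) * Real.Gamma (a k + 1 / 2) = 2 * ∏ i, Cm (b i) (a i) := by
    rw [Fintype.prod_eq_mul_prod_subtype_ne _ k]
    have : Cm (b k) (a k) = Real.Gamma (a k + 1 / 2) / 2 := by simp [Cm, hk]
    rw [this]; ring
  have e2 : (∏ i, Gm (b i) (a i)) * ∏ i, Cm (b i) (a i) =
      2 ^ (-(2 * ∑ i, a i)) * π ^ ((Fintype.card ι : ℝ) / 2) := by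
    rw [← Finset.prod_mul_distrib, Finset.prod_congr rfl fun i _ => Gm_Cm (h i), Finset.prod_mul_distrib,
      ← rpow_sum_of_pos (by norm_num : (0:ℝ) < 2), Finset.sum_neg_distrib, ← Finset.mul_sum]
    congr 1
    rw [Finset.prod_const, Finset.card_univ, sqrt_eq_rpow, ← rpow_natCast, ← rpow_mul pi_pos.le]
    congr 1; ring
  have e3 : 2 * β - (Fintype.card ι : ℝ) = -2 + 2 * ∑ i, a i := by
    rw [Finset.sum_add_distrib] at hβ
    simp at hβ
    linarith
  have hp : 0 < π ^ ((Fintype.card ι : ℝ) / 2) := rpow_pos_of_pos pi_pos _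
  unfold Kc
  rw [e1, hγ, Real.Gamma_add_one hβ0.ne', e3]
  calc _ = 4 * 2 ^ (-2 + 2 * ∑ i, a i) / π ^ ((Fintype.card ι : ℝ) / 2) *
        ((∏ i, Gm (b i) (a i)) * ∏ i, Cm (b i) (a i)) := by field_simp; ring
    _ = 4 * (2 ^ (-2 + 2 * ∑ i, a i) * 2 ^ (-(2 * ∑ i, a i))) := by rw [e2]; field_simp
    _ = 1 := by
      rw [← rpow_add (by norm_num)]
      rw [show -2 + 2 * ∑ i, a i + -(2 * ∑ i, a i) = -2 by ring]
      rw [rpow_neg (by norm_num)]; norm_num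

theorem glue_deriv {b : ι → Prop} {u V : (ι → ℝ) → ℝ} {V1 V2 : ι → (ι → ℝ) → ℝ}
    (huV : ∀ ξ, (∀ i, b i → 0 < ξ i) → u ξ = V ξ)
    (h1 : ∀ i ξ, (∀ i, b i → 0 < ξ i) → HasDerivAt (fun t => V (Function.update ξ i t)) (V1 i ξ) (ξ i))
    (h2 : ∀ i ξ, (∀ i, b i → 0 < ξ i) → HasDerivAt (fun t => V1 i (Function.update ξ i t)) (V2 i ξ) (ξ i))
    (i : ι) (ξ : ι → ℝ) (hξ : ∀ i, b i → 0 < ξ i) :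
    deriv (fun t => u (Function.update ξ i t)) (ξ i) = V1 i ξ ∧
    deriv (deriv fun t => u (Function.update ξ i t)) (ξ i) = V2 i ξ := by
  have near : ∀ ξ : ι → ℝ, (∀ i, b i → 0 < ξ i) →
      ∀ᶠ t in 𝓝 (ξ i), ∀ j, b j → 0 < Function.update ξ i t j := by
    intro ξ hξ
    by_cases hb : b i
    · filter_upwards [lt_mem_nhds (hξ i hb)] with t ht j hj
      exact upd_pos (fun i hi _ => hξ i hi) ht j hj
    · refine Eventually.of_forall fun t j hj => ?_
      have : j ≠ i := fun e => hb (e ▸ hj)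
      rw [Function.update_of_ne this]; exact hξ j hj
  have d1 : ∀ ξ : ι → ℝ, (∀ i, b i → 0 < ξ i) →
      deriv (fun t => u (Function.update ξ i t)) (ξ i) = V1 i ξ := by
    intro ξ hξ
    refine ((h1 i ξ hξ).congr_of_eventuallyEq ?_).deriv
    filter_upwards [near ξ hξ] with t ht using huV _ ht
  refine ⟨d1 ξ hξ, ((h2 i ξ hξ).congr_of_eventuallyEq ?_).deriv⟩
  filter_upwards [near ξ hξ] with t ht
  have := d1 _ ht
  simpa using this

end gluing

/-- **Existence for the Neumann problem**: the sum of single-layer potentials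
`u(ξ) = −Σ_k ∫_{S_k} x̃_k^{(2α)} ν_k(x̃_k) q(x_k⁰, ξ) dx̃_k` built from the fundamental
solution `q` solves the Neumann problem: it satisfies the singular elliptic equation in
the orthant, the weighted Neumann boundary conditions, and vanishes at infinity. -/
theorem neumann_existence (m n : ℕ) (hm : 2 < m) (hn : 1 ≤ n) (hnm : n ≤ m)
    (α : Fin m → ℝ) (hα : ∀ j : Fin m, (j : ℕ) < n → 0 < 2 * α j ∧ 2 * α j < 1)
    (β γ : ℝ)
    (hβ : β = ((m : ℝ) - 2) / 2 + ∑ j ∈ Finset.univ.filter fun j : Fin m => (j : ℕ) < n, α j)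
    (hγ : γ = 2 ^ (2 * β - (m : ℝ)) * Real.Gamma β / Real.pi ^ ((m : ℝ) / 2) *
      ∏ j ∈ Finset.univ.filter fun j : Fin m => (j : ℕ) < n,
        Real.Gamma (α j) / Real.Gamma (2 * α j))
    (q : (Fin m → ℝ) → (Fin m → ℝ) → ℝ)
    (hq : ∀ x ξ : Fin m → ℝ, q x ξ =
      γ * (∑ i, (x i - ξ i) ^ 2) ^ (-β) *
        lauricellaFA β (fun j : {i : Fin m // (i : ℕ) < n} => α j.1)
          (fun j => 2 * α j.1)
          (fun j => -4 * x j.1 * ξ j.1 / ∑ i, (x i - ξ i) ^ 2))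
    (ν : (k : Fin m) → ({i : Fin m // i ≠ k} → ℝ) → ℝ)
    (c ε : Fin m → ℝ) (hc : ∀ k : Fin m, (k : ℕ) < n → 0 < c k)
    (hε : ∀ k : Fin m, (k : ℕ) < n → 0 < ε k)
    (hνcont : ∀ k : Fin m, (k : ℕ) < n →
      ContinuousOn (ν k) {y | ∀ i : {i : Fin m // i ≠ k}, (i.1 : ℕ) < n → 0 < y i})
    (hνbd : ∀ k : Fin m, (k : ℕ) < n →
      ∀ y : {i : Fin m // i ≠ k} → ℝ, (∀ i, (i.1 : ℕ) < n → 0 < y i) →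
      |ν k y| ≤ c k * (1 + ∑ i, y i ^ 2) ^ (-(1 - 2 * α k + ε k) / 2))
    (u : (Fin m → ℝ) → ℝ)
    (hu : ∀ ξ : Fin m → ℝ, u ξ =
      -∑ k ∈ Finset.univ.filter fun k : Fin m => (k : ℕ) < n,
        ∫ y in {y : {i : Fin m // i ≠ k} → ℝ | ∀ i, (i.1 : ℕ) < n → 0 < y i},
          (∏ j : {j : Fin m // (j : ℕ) < n ∧ j ≠ k}, y ⟨j.1, j.2.2⟩ ^ (2 * α j.1)) *
            ν k y * q (fun i => if h : i = k then 0 else y ⟨i, h⟩) ξ) :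
    (∀ ξ : Fin m → ℝ, (∀ i : Fin m, (i : ℕ) < n → 0 < ξ i) →
      (∑ i : Fin m, deriv (deriv fun t : ℝ => u (Function.update ξ i t)) (ξ i)) +
        ∑ j ∈ Finset.univ.filter fun j : Fin m => (j : ℕ) < n,
          2 * α j / ξ j * deriv (fun t : ℝ => u (Function.update ξ j t)) (ξ j) = 0) ∧
    (∀ k : Fin m, (k : ℕ) < n → ∀ ξ : Fin m → ℝ,
      (∀ i : Fin m, (i : ℕ) < n → i ≠ k → 0 < ξ i) →
      Filter.Tendsto
        (fun t : ℝ => t ^ (2 * α k) * deriv (fun s : ℝ => u (Function.update ξ k s)) t)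
        (nhdsWithin 0 (Set.Ioi 0)) (nhds (ν k fun i => ξ i.1))) ∧
    (∀ δ > (0 : ℝ), ∃ R : ℝ, ∀ ξ : Fin m → ℝ, (∀ i : Fin m, (i : ℕ) < n → 0 < ξ i) →
      R < Real.sqrt (∑ i, ξ i ^ 2) → |u ξ| < δ) := by
  classical
  set a : Fin m → ℝ := fun i => if (i : ℕ) < n then α i else 0 with ha
  set b : Fin m → Prop := fun i => (i : ℕ) < n with hb
  have hab : ∀ i : Fin m, (i : ℕ) < n → a i = α i := fun i hi => by simp [ha, hi]
  have hadm : ∀ i, Adm (b i) (a i) := by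
    intro i
    refine ⟨fun hi => ?_, fun hi => ?_⟩
    · rw [hab i hi]; have := hα i hi; constructor <;> linarith
    · have hi' : ¬ (i : ℕ) < n := hi
      simp [ha, hi']
  have hsum : ∑ j ∈ Finset.univ.filter (fun j : Fin m => (j : ℕ) < n), α j = ∑ i, a i := by
    rw [Finset.sum_filter]
  have hβ1 : β + 1 = ∑ i, (a i + 1 / 2) := by
    rw [hβ, hsum, Finset.sum_add_distrib]
    simp
    ring
  have hm' : (2 : ℝ) < m := by exact_mod_cast hm
  have ha0 : 0 ≤ ∑ i, a i := Finset.sum_nonneg fun i _ => (hadm i).nonneg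
  have hβ0 : 0 < β := by rw [hβ, hsum]; linarith
  have hDk : ∀ k, ∑ i : {i // i ≠ k}, (1 + 2 * a i) = 2 * β + 1 - 2 * a k := by
    intro k
    have h1 := Fintype.sum_eq_add_sum_subtype_ne (fun i => a i + 1 / 2) k
    have e : ∑ i : {i // i ≠ k}, (1 + 2 * a i) = 2 * ∑ i : {i // i ≠ k}, (a i + 1 / 2) := by
      rw [Finset.mul_sum]; exact Finset.sum_congr rfl fun i _ => by ring
    rw [e]; linarith
  have HD : ∀ k, b k → Dens b a β k (c k) (1 - 2 * α k + ε k) (ν k) := by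
    intro k hk
    have h1 := hα k hk
    have h2 := hε k hk
    refine ⟨hadm, hk, hβ0, ?_, ?_, ?_, ?_⟩
    · rw [hDk k, hab k hk]; linarith
    · rw [hDk k, hab k hk]; linarith
    · exact ((hνcont k hk).aestronglyMeasurable (open_T b k).measurableSet).mono_ac (LP_ac b a k)
    · exact hνbd k hk
  set F := Finset.univ.filter fun k : Fin m => (k : ℕ) < n with hF
  have hFb : ∀ k ∈ F, b k := fun k hk => (Finset.mem_filter.1 hk).2
  set V : (Fin m → ℝ) → ℝ := fun ξ => -γ * ∑ k ∈ F, Uk b a β k (ν k) ξ with hV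
  set V1 : Fin m → (Fin m → ℝ) → ℝ := fun i ξ => -γ * ∑ k ∈ F, D1 b a β k (ν k) i ξ with hV1
  set V2 : Fin m → (Fin m → ℝ) → ℝ := fun i ξ => -γ * ∑ k ∈ F, D2 b a β k (ν k) i ξ with hV2
  have huV : ∀ ξ : Fin m → ℝ, (∀ i, b i → 0 < ξ i) → u ξ = V ξ := by
    intro ξ hξ
    rw [hu ξ, hV]
    simp only
    rw [neg_mul, Finset.mul_sum]
    congr 1
    refine Finset.sum_congr rfl fun k hk => ?_
    have hbk := hFb k hk
    have hi := (Uk_deriv (HD k hbk) k ξ hξ).1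
    unfold Uk MM
    unfold MM at hi
    rw [integral_prod _ hi, ← pot_conv hadm k hbk β γ (ν k) ξ hξ]
    have e1 : (fun j : {i : Fin m // (i : ℕ) < n} => α j.1) = fun j => a j.1 :=
      funext fun j => (hab j.1 j.2).symm
    have e2 : (fun j : {i : Fin m // (i : ℕ) < n} => 2 * α j.1) = fun j => 2 * a j.1 :=
      funext fun j => by rw [hab j.1 j.2]
    refine integral_congr_ae (Eventually.of_forall fun y => ?_)
    simp only
    rw [hq, e1, e2]
    have e3 : ∏ j : {j : Fin m // (j : ℕ) < n ∧ j ≠ k}, y ⟨j.1, j.2.2⟩ ^ (2 * α j.1) =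
        ∏ j : {j : Fin m // (j : ℕ) < n ∧ j ≠ k}, y ⟨j.1, j.2.2⟩ ^ (2 * a j.1) :=
      Finset.prod_congr rfl fun j _ => by rw [hab j.1 j.2.1]
    rw [e3]
    rfl
  have g1 : ∀ i ξ, (∀ i, b i → 0 < ξ i) →
      HasDerivAt (fun t => V (Function.update ξ i t)) (V1 i ξ) (ξ i) := fun i ξ hξ =>
    (HasDerivAt.fun_sum fun k hk => (Uk_deriv (HD k (hFb k hk)) i ξ hξ).2.2.2.2.1).const_mul _
  have g2 : ∀ i ξ, (∀ i, b i → 0 < ξ i) →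
      HasDerivAt (fun t => V1 i (Function.update ξ i t)) (V2 i ξ) (ξ i) := fun i ξ hξ =>
    (HasDerivAt.fun_sum fun k hk => (Uk_deriv (HD k (hFb k hk)) i ξ hξ).2.2.2.2.2).const_mul _
  have gl := glue_deriv huV g1 g2
  refine ⟨fun ξ hξ => ?_, fun k hk ξ hξ => ?_, fun δ hδ => ?_⟩
  · have s1 : ∑ i : Fin m, deriv (deriv fun t : ℝ => u (Function.update ξ i t)) (ξ i) =
        ∑ i, V2 i ξ := Finset.sum_congr rfl fun i _ => (gl i ξ hξ).2
    have s2 : ∑ j ∈ F, 2 * α j / ξ j * deriv (fun t : ℝ => u (Function.update ξ j t)) (ξ j) =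
        ∑ i, 2 * a i / ξ i * V1 i ξ := by
      rw [hF, Finset.sum_filter]
      refine Finset.sum_congr rfl fun i _ => ?_
      rw [(gl i ξ hξ).1]
      by_cases hi : (i : ℕ) < n
      · simp [ha, hi]
      · simp [ha, hi]
    rw [s1, s2]
    simp only [hV1, hV2]
    have e1 : ∑ i, -γ * ∑ k ∈ F, D2 b a β k (ν k) i ξ = -γ * ∑ k ∈ F, ∑ i, D2 b a β k (ν k) i ξ := by
      rw [← Finset.mul_sum, Finset.sum_comm]
    have e2 : ∑ i, 2 * a i / ξ i * (-γ * ∑ k ∈ F, D1 b a β k (ν k) i ξ) =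
        -γ * ∑ k ∈ F, ∑ i, 2 * a i / ξ i * D1 b a β k (ν k) i ξ := by
      rw [Finset.sum_comm, Finset.mul_sum]
      refine Finset.sum_congr rfl fun i _ => ?_
      rw [← Finset.mul_sum]; ring
    rw [e1, e2, ← mul_add, ← Finset.sum_add_distrib,
      Finset.sum_congr rfl fun k hk => Uk_pde (HD k (hFb k hk)) hβ1 ξ hξ]
    simp
  · have hbk : b k := hk
    have hpos : ∀ t : ℝ, 0 < t → ∀ j, b j → 0 < Function.update ξ k t j := fun t ht j hj =>
      upd_pos (b := b) (fun i hi hik => hξ i hi hik) ht j hj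
    have lim : ∀ l ∈ F, Tendsto
        (fun t => t ^ (2 * a k) * D1 b a β l (ν l) k (Function.update ξ k t)) (𝓝[>] 0)
        (𝓝 (if l = k then -2 * β * Kc b a β k * ν k (fun i => ξ i.1) else 0)) := by
      intro l hl
      by_cases hlk : l = k
      · subst hlk
        rw [if_pos rfl]
        refine bdry_self (HD l hbk) hβ1 ξ (fun i hi hik => hξ i hi hik) ?_
        exact (hνcont l hk).continuousAt ((open_T b l).mem_nhds fun i hi => hξ i.1 hi i.2)
      · rw [if_neg hlk]
        exact bdry_other (HD l (hFb l hl)) k hbk (Ne.symm hlk) ξ (fun i hi hik => hξ i hi hik)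
    have lim2 := (tendsto_finsetSum F lim).const_mul (-γ)
    have hkF : k ∈ F := Finset.mem_filter.2 ⟨Finset.mem_univ _, hk⟩
    rw [Finset.sum_ite_eq' F k (fun _ => -2 * β * Kc b a β k * ν k (fun i => ξ i.1)), if_pos hkF] at lim2
    have nrm : 2 * β * γ * Kc b a β k = 1 := by
      refine gamma_normal hadm k hbk hβ0 hβ1 ?_
      rw [hγ, hF, Finset.prod_filter, Fintype.card_fin]
      congr 1
      refine Finset.prod_congr rfl fun i _ => ?_
      by_cases hi : (i : ℕ) < n
      · simp [Gm, hb, ha, hi]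
      · simp [Gm, hb, hi]
    have e1 : -γ * (-2 * β * Kc b a β k * ν k (fun i => ξ i.1)) = ν k (fun i => ξ i.1) := by
      calc _ = (2 * β * γ * Kc b a β k) * ν k (fun i => ξ i.1) := by ring
        _ = _ := by rw [nrm, one_mul]
    rw [e1] at lim2
    refine lim2.congr' ?_
    filter_upwards [self_mem_nhdsWithin] with t ht
    have h1 := (gl k _ (hpos t ht)).1
    simp only [Function.update_idem, Function.update_self] at h1
    rw [h1, hV1, ← hab k hk]
    simp only
    rw [← Finset.mul_sum]; ring
  · have hex : ∀ k, ∃ R : ℝ, b k → ∀ ξ : Fin m → ℝ, (∀ i, b i → 0 < ξ i) → R < √(∑ i, ξ i ^ 2) →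
        |Uk b a β k (ν k) ξ| < δ / ((|γ| + 1) * m) := by
      intro k
      by_cases hk : b k
      · have hne : Nonempty {i : Fin m // i ≠ k} := by
          have : Nontrivial (Fin m) := Fin.nontrivial_iff_two_le.2 (by omega)
          obtain ⟨j, hj⟩ := exists_ne k
          exact ⟨⟨j, hj⟩⟩
        obtain ⟨R, hR⟩ := Uk_decay (HD k hk) hβ1 (hc k hk).le
          (by rw [hab k hk]; have := hε k hk; linarith) hne
          (show 0 < δ / ((|γ| + 1) * m) by positivity)
        exact ⟨R, fun _ => hR⟩
      · exact ⟨0, fun h => absurd h hk⟩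
    choose R hR using hex
    refine ⟨∑ k, |R k|, fun ξ hξ hlt => ?_⟩
    have hRk : ∀ k, R k < √(∑ i, ξ i ^ 2) := fun k => lt_of_le_of_lt ((le_abs_self _).trans
      (Finset.single_le_sum (f := fun j => |R j|) (fun j _ => abs_nonneg _) (Finset.mem_univ k))) hlt
    rw [huV ξ hξ, hV]
    simp only
    rw [abs_mul, abs_neg]
    have h1 : |∑ k ∈ F, Uk b a β k (ν k) ξ| ≤ δ / (|γ| + 1) := by
      calc |∑ k ∈ F, Uk b a β k (ν k) ξ| ≤ ∑ k ∈ F, |Uk b a β k (ν k) ξ| :=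
            Finset.abs_sum_le_sum_abs _ _
        _ ≤ ∑ k ∈ F, δ / ((|γ| + 1) * m) :=
            Finset.sum_le_sum fun k hk => (hR k (hFb k hk) ξ hξ (hRk k)).le
        _ ≤ ∑ k : Fin m, δ / ((|γ| + 1) * m) :=
            Finset.sum_le_sum_of_subset_of_nonneg (Finset.subset_univ _) fun _ _ _ => by positivity
        _ = δ / (|γ| + 1) := by
            simp only [Finset.sum_const, Finset.card_univ, Fintype.card_fin, nsmul_eq_mul]
            have : (m : ℝ) ≠ 0 := by linarith
            field_simp
    calc |γ| * |∑ k ∈ F, Uk b a β k (ν k) ξ| ≤ |γ| * (δ / (|γ| + 1)) := by gcongr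
      _ < δ := by
        rw [mul_div_assoc', div_lt_iff₀ (by positivity)]
        nlinarith [abs_nonneg γ]
end
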